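/- arXiv:1604.03387 — 2 statements merged into one kernel-verified Lean document; each statement's English description precedes it below -/
import Mathlib

section
/- Let Ω_0, Ω_1 ⊆ ℝ^d be bounded open sets with equal positive Lebesgue measure, and let ε > 0. Then there exists a countable family {(Ω^n_·, X^n, φ^n, p^n)}_{n∈ℕ} of smooth Euler droplet solutions whose space–time domains Q_n = ⋃_{t∈[0,1]} Ω^n_t × {t} are pairwise disjoint (an Euler spray), such that: (i) the sets Ω^n_0 are pairwise disjoint, ⋃_n Ω^n_0 ⊆ Ω_0, and the Lebesgue measure of Ω_0 ∖ ⋃_n Ω^n_0 is zero; (ii) the target Ω_1^ε := ⋃_n Ω^n_1 satisfies |Ω_1^ε| = |Ω_1| and there is a coupling π of 1_{Ω_1} dx and 1_{Ω_1^ε} dx with |x − y| < ε for π-a.e. (x,y) (so d_∞(1_{Ω_1}, 1_{Ω_1^ε}) < ε); (iii) the total action 𝒜^ε = Σ_n ∫_0^1 ∫_{Ω^n_t} |∇φ^n(x,t)|² dx dt satisfies 𝒜^ε ≤ d_W(1_{Ω_0} dx, 1_{Ω_1} dx)² + ε. -/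
open Set MeasureTheory
open scoped ENNReal

/-- A smooth solution of the Euler droplet equations: bounded open fluid domains
`Ω t ⊆ ℝ^d` for `t ∈ [0,1]`, a velocity potential `φ` and pressure `p` smooth on an open
neighborhood of the closure of the space-time domain `Q = ⋃_{t∈[0,1]} Ω t × {t}`, and a
Lagrangian flow map `X`, such that `X(·,0) = id`, `∂ₜX = ∇ₓφ(X,t)`, `X(Ω 0,t) = Ω t`,
`Δₓφ = 0` on `Ω t`, the Bernoulli equation `∂ₜφ + ½|∇ₓφ|² + p = 0` holds on `Ω t`, and
`p = 0` on `∂(Ω t)`. -/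
structure EulerDroplet (d : ℕ) where
  Ω : ℝ → Set (EuclideanSpace ℝ (Fin d))
  X : EuclideanSpace ℝ (Fin d) → ℝ → EuclideanSpace ℝ (Fin d)
  φ : EuclideanSpace ℝ (Fin d) → ℝ → ℝ
  p : EuclideanSpace ℝ (Fin d) → ℝ → ℝ
  isOpen_Ω : ∀ t ∈ Icc (0:ℝ) 1, IsOpen (Ω t)
  isBounded_Ω : ∀ t ∈ Icc (0:ℝ) 1, Bornology.IsBounded (Ω t)
  smooth : ∃ U : Set (EuclideanSpace ℝ (Fin d) × ℝ), IsOpen U ∧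
    closure (⋃ t ∈ Icc (0:ℝ) 1, (Ω t) ×ˢ ({t} : Set ℝ)) ⊆ U ∧
    ContDiffOn ℝ (⊤ : ℕ∞) (fun q : EuclideanSpace ℝ (Fin d) × ℝ => φ q.1 q.2) U ∧
    ContDiffOn ℝ (⊤ : ℕ∞) (fun q : EuclideanSpace ℝ (Fin d) × ℝ => p q.1 q.2) U
  flow_init : ∀ z ∈ Ω 0, X z 0 = z
  flow_deriv : ∀ z ∈ Ω 0, ∀ t ∈ Icc (0:ℝ) 1,
    HasDerivAt (X z) (gradient (fun y => φ y t) (X z t)) t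
  flow_image : ∀ t ∈ Icc (0:ℝ) 1, (fun z => X z t) '' (Ω 0) = Ω t
  harmonic : ∀ t ∈ Icc (0:ℝ) 1, ∀ x ∈ Ω t,
    (∑ j, fderiv ℝ
        (fun y => fderiv ℝ (fun y' => φ y' t) y (EuclideanSpace.single j (1:ℝ))) x
        (EuclideanSpace.single j (1:ℝ))) = 0
  bernoulli : ∀ t ∈ Icc (0:ℝ) 1, ∀ x ∈ Ω t,
    deriv (fun s => φ x s) t + (1/2) * ‖gradient (fun y => φ y t) x‖ ^ 2 + p x t = 0
  pressure_bc : ∀ t ∈ Icc (0:ℝ) 1, ∀ x ∈ frontier (Ω t), p x t = 0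

/-- The space-time domain of an Euler droplet solution. -/
def EulerDroplet.Q {d : ℕ} (D : EulerDroplet d) : Set (EuclideanSpace ℝ (Fin d) × ℝ) :=
  ⋃ t ∈ Icc (0:ℝ) 1, (D.Ω t) ×ˢ ({t} : Set ℝ)

/-- The squared quadratic Wasserstein cost between two measures on `ℝ^d`: the infimum
over couplings of the integral of `|x − y|²`. -/
noncomputable def W2sq {d : ℕ}
    (μ ν : Measure (EuclideanSpace ℝ (Fin d))) : ℝ≥0∞ :=
  sInf { C | ∃ π : Measure (EuclideanSpace ℝ (Fin d) × EuclideanSpace ℝ (Fin d)),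
    π.map Prod.fst = μ ∧ π.map Prod.snd = ν ∧
    C = ∫⁻ q, ENNReal.ofReal (‖q.1 - q.2‖ ^ 2) ∂π }

section PartP1a
open Set MeasureTheory Filter Topology
open scoped ENNReal

namespace Spray
section conj
variable {E : Type*} [NormedAddCommGroup E] [InnerProductSpace ℝ E] [FiniteDimensional ℝ E]

/-- `y` is a subgradient of `ψ` at `x`. -/
def SubG (ψ : E → ℝ) (x y : E) : Prop := ∀ x', ψ x + inner ℝ y (x' - x) ≤ ψ x'

abbrev KB (E : Type*) [NormedAddCommGroup E] (R : ℝ) := Metric.closedBall (0 : E) R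

variable {R : ℝ}

noncomputable def conj (u : C(KB E R, ℝ)) (x : E) : ℝ :=
  ⨆ y : KB E R, (inner ℝ (y : E) x - u y)

instance : CompactSpace (KB E R) := isCompact_iff_compactSpace.mp (isCompact_closedBall 0 R)

lemma conj_bdd (u : C(KB E R, ℝ)) (x : E) :
    BddAbove (range fun y : KB E R => (inner ℝ (y : E) x - u y)) := by
  have : IsCompact (range fun y : KB E R => (inner ℝ (y : E) x - u y)) :=
    isCompact_range (by fun_prop)
  exact this.bddAbove

lemma le_conj (u : C(KB E R, ℝ)) (x : E) (y : KB E R) :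
    inner ℝ (y : E) x - u y ≤ conj u x := le_ciSup (conj_bdd u x) y

lemma kb_nonempty (hR : 0 ≤ R) : Nonempty (KB E R) := ⟨⟨0, by simp [hR]⟩⟩

lemma exists_conj (hR : 0 ≤ R) (u : C(KB E R, ℝ)) (x : E) :
    ∃ y : KB E R, conj u x = inner ℝ (y : E) x - u y := by
  haveI := kb_nonempty (E := E) hR
  obtain ⟨y, -, hy⟩ := isCompact_univ.exists_isMaxOn (univ_nonempty)
    (f := fun y : KB E R => (inner ℝ (y : E) x - u y)) (by fun_prop)
  refine ⟨y, le_antisymm (ciSup_le fun z => hy (mem_univ z)) (le_conj u x y)⟩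

lemma subG_conj (u : C(KB E R, ℝ)) (x : E) (y : KB E R)
    (h : conj u x = inner ℝ (y : E) x - u y) : SubG (conj u) x y := by
  intro x'
  have := le_conj u x' y
  rw [h, inner_sub_right]; linarith

lemma conj_le_add (hR : 0 ≤ R) (u : C(KB E R, ℝ)) (x x' : E) :
    conj u x ≤ conj u x' + R * ‖x - x'‖ := by
  obtain ⟨y, hy⟩ := exists_conj hR u x
  have h1 := le_conj u x' y
  have h2 : inner ℝ (y : E) (x - x') ≤ R * ‖x - x'‖ :=
    (real_inner_le_norm _ _).trans (by
      gcongr; exact mem_closedBall_zero_iff.mp y.2)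
  rw [inner_sub_right] at h2
  linarith

lemma conj_lip (hR : 0 ≤ R) (u : C(KB E R, ℝ)) : LipschitzWith R.toNNReal (conj u) := by
  apply LipschitzWith.of_le_add_mul
  intro x y
  rw [Real.coe_toNNReal _ hR, dist_eq_norm]
  exact conj_le_add hR u x y

lemma conj_le_conj (hR : 0 ≤ R) (u v : C(KB E R, ℝ)) (x : E) :
    conj u x ≤ conj v x + ‖u - v‖ := by
  obtain ⟨y, hy⟩ := exists_conj hR u x
  have h1 := le_conj v x y
  have h2 := (u - v).norm_coe_le_norm y
  have h3 := abs_le.mp h2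
  simp at h3
  linarith [h3.1]

lemma conj_add_const (hR : 0 ≤ R) (u : C(KB E R, ℝ)) (c : ℝ) (x : E) :
    conj (u + ContinuousMap.const _ c) x = conj u x - c := by
  apply le_antisymm
  · obtain ⟨y, hy⟩ := exists_conj hR (u + ContinuousMap.const _ c) x
    have h1 := le_conj u x y
    simp at hy
    linarith
  · obtain ⟨y, hy⟩ := exists_conj hR u x
    have h1 := le_conj (u + ContinuousMap.const _ c) x y
    simp at h1
    linarith

/-- restriction of the conjugate to the ball -/
noncomputable def conjK (hR : 0 ≤ R) (u : C(KB E R, ℝ)) : C(KB E R, ℝ) :=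
  ⟨fun x => conj u x, (conj_lip hR u).continuous.comp continuous_subtype_val⟩

@[simp] lemma conjK_apply (hR : 0 ≤ R) (u : C(KB E R, ℝ)) (x : KB E R) :
  conjK hR u x = conj u x := rfl

lemma conjK_conjK_le (hR : 0 ≤ R) (u : C(KB E R, ℝ)) (y : KB E R) :
    conjK hR (conjK hR u) y ≤ u y := by
  rw [conjK_apply]
  obtain ⟨x, hx⟩ := exists_conj hR (conjK hR u) y
  have := le_conj u x y
  rw [hx, conjK_apply, real_inner_comm]; linarith

lemma conj_conjK_conjK_le (hR : 0 ≤ R) (u : C(KB E R, ℝ)) (x : KB E R) :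
    conj (conjK hR (conjK hR u)) x ≤ conj u x := by
  obtain ⟨y, hy⟩ := exists_conj hR (conjK hR (conjK hR u)) x
  have := le_conj (conjK hR u) y x
  rw [hy, conjK_apply]
  rw [conjK_apply, real_inner_comm] at this
  linarith

lemma subG_inner_eq {ψ : E → ℝ} {x y : E} (h : SubG ψ x y) (hd : DifferentiableAt ℝ ψ x) :
    y = gradient ψ x := by
  have hg := hd.hasGradientAt
  have hf := hasGradientAt_iff_hasFDerivAt.mp hg
  have hl : HasFDerivAt (fun x' => ψ x' - inner ℝ y x')
      ((InnerProductSpace.toDual ℝ E) (gradient ψ x) - (innerSL ℝ y)) x :=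
    hf.sub (innerSL ℝ y).hasFDerivAt
  have hmin : IsLocalMin (fun x' => ψ x' - inner ℝ y x') x := by
    apply Filter.Eventually.of_forall
    intro x'
    have := h x'
    rw [inner_sub_right] at this
    simp only
    linarith
  have h0 := hmin.hasFDerivAt_eq_zero hl
  have : ∀ v, inner ℝ (gradient ψ x) v = inner ℝ y v := by
    intro v
    have := congrArg (fun L : E →L[ℝ] ℝ => L v) h0
    simp only [ContinuousLinearMap.sub_apply, InnerProductSpace.toDual_apply_apply,
      innerSL_apply_apply, ContinuousLinearMap.zero_apply] at this
    linarith
  exact (ext_inner_right ℝ this).symm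
end conj
end Spray
end PartP1a

section PartP1b
open Set MeasureTheory Filter Topology
open scoped ENNReal

namespace Spray
section var
variable {E : Type*} [NormedAddCommGroup E] [InnerProductSpace ℝ E] [FiniteDimensional ℝ E]
  {R : ℝ}

lemma lipK_compact (hR : 0 ≤ R) : IsCompact {u : C(KB E R, ℝ) |
    u ⟨0, by simp [hR]⟩ = 0 ∧ LipschitzWith R.toNNReal u} := by
  let o : KB E R := ⟨0, by simp [hR]⟩
  let A : Set (BoundedContinuousFunction (KB E R) ℝ) := {u | u o = 0 ∧ LipschitzWith R.toNNReal u}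
  have hA : IsCompact A := by
    apply BoundedContinuousFunction.arzela_ascoli₂ (Icc (-(R*R)) (R*R)) isCompact_Icc
    · have : A = {u | u o = 0} ∩ ⋂ x, ⋂ y, {u | dist (u x) (u y) ≤ R.toNNReal * dist x y} := by
        ext u
        simp [A, lipschitzWith_iff_dist_le_mul]
      rw [this]
      refine IsClosed.inter ?_ (isClosed_iInter fun x => isClosed_iInter fun y => ?_)
      · exact isClosed_eq (by fun_prop) continuous_const
      · exact isClosed_le (by fun_prop) continuous_const
    · rintro f x ⟨h0, hl⟩
      have := hl.dist_le_mul x o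
      rw [h0, Real.coe_toNNReal _ hR, Real.dist_eq, sub_zero] at this
      have h2 : dist x o ≤ R := by
        have := x.2
        rw [Metric.mem_closedBall] at this
        exact this
      rw [mem_Icc, ← abs_le]
      exact this.trans (by gcongr)
    · have : UniformEquicontinuous (fun f : A => ((f : BoundedContinuousFunction (KB E R) ℝ) : KB E R → ℝ)) :=
        LipschitzWith.uniformEquicontinuous _ R.toNNReal (fun f => f.2.2)
      exact this.equicontinuous
  have himg := hA.image (ContinuousMap.isometryEquivBoundedOfCompact (KB E R) ℝ).symm.continuous
  have heq : {u : C(KB E R, ℝ) | u ⟨0, by simp [hR]⟩ = 0 ∧ LipschitzWith R.toNNReal u} =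
      (ContinuousMap.isometryEquivBoundedOfCompact (KB E R) ℝ).symm '' A := by
    ext u
    constructor
    · intro h
      refine ⟨ContinuousMap.isometryEquivBoundedOfCompact (KB E R) ℝ u, h, by ext; rfl⟩
    · rintro ⟨v, hv, rfl⟩
      exact hv
  rw [heq]
  exact himg

variable [MeasurableSpace E] [BorelSpace E]

noncomputable def Jf (μ : Measure E) (ν : Measure (KB E R)) (u : C(KB E R, ℝ)) : ℝ :=
  ∫ x, conj u x ∂μ + ∫ y, u y ∂ν

lemma integrable_of_cont {μ : Measure E} [IsFiniteMeasure μ] (hμ : μ (Metric.closedBall 0 R)ᶜ = 0)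
    {f : E → ℝ} (hf : Continuous f) : Integrable f μ := by
  have h : μ.restrict (Metric.closedBall 0 R) = μ :=
    Measure.restrict_eq_self_of_ae_mem (by rwa [ae_iff])
  rw [← h]
  exact hf.continuousOn.integrableOn_compact (isCompact_closedBall 0 R)

lemma integrable_K (ν : Measure (KB E R)) [IsFiniteMeasure ν] (u : C(KB E R, ℝ)) :
    Integrable u ν := by
  have := u.continuous.continuousOn.integrableOn_compact (μ := ν) isCompact_univ
  rwa [integrableOn_univ] at this

lemma Jf_const (hR : 0 ≤ R) {μ : Measure E} [IsFiniteMeasure μ]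
    (hμ : μ (Metric.closedBall 0 R)ᶜ = 0)
    {ν : Measure (KB E R)} [IsFiniteMeasure ν] (hm : μ univ = ν univ) (u : C(KB E R, ℝ)) (c : ℝ) :
    Jf μ ν (u + ContinuousMap.const _ c) = Jf μ ν u := by
  unfold Jf
  simp_rw [conj_add_const hR]
  rw [integral_sub (integrable_of_cont hμ (conj_lip hR u).continuous) (integrable_const _)]
  simp only [ContinuousMap.add_apply, ContinuousMap.const_apply]
  rw [integral_add (integrable_K ν u) (integrable_const _)]
  simp only [integral_const, Measure.real, hm]
  ring

lemma exists_min (hR : 0 ≤ R) {μ : Measure E} [IsFiniteMeasure μ]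
    (hμ : μ (Metric.closedBall 0 R)ᶜ = 0)
    {ν : Measure (KB E R)} [IsFiniteMeasure ν] (hm : μ univ = ν univ) :
    ∃ u : C(KB E R, ℝ), ∀ v, Jf μ ν u ≤ Jf μ ν v := by
  have hc : Continuous (Jf μ ν) := by
    have : LipschitzWith (μ.real univ + ν.real univ).toNNReal (Jf μ ν) := by
      apply LipschitzWith.of_le_add_mul
      intro u v
      rw [Real.coe_toNNReal _ (by positivity), dist_eq_norm]
      have h1 : ∫ x, conj u x ∂μ ≤ ∫ x, (conj v x + ‖u - v‖) ∂μ :=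
        integral_mono (integrable_of_cont hμ (conj_lip hR u).continuous)
          ((integrable_of_cont hμ (conj_lip hR v).continuous).add (integrable_const _))
          (fun x => conj_le_conj hR u v x)
      have h2 : ∫ x, u x ∂ν ≤ ∫ x, (v x + ‖u - v‖) ∂ν := by
        apply integral_mono (integrable_K ν u) ((integrable_K ν v).add (integrable_const _))
        intro x
        have h3 := abs_le.mp ((u - v).norm_coe_le_norm x)
        simp at h3
        simp only [Pi.add_apply]
        linarith [h3.2]
      rw [integral_add (integrable_of_cont hμ (conj_lip hR v).continuous) (integrable_const _)] at h1
      rw [integral_add (integrable_K ν v) (integrable_const _)] at h2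
      simp only [integral_const, smul_eq_mul] at h1 h2
      unfold Jf
      linarith
    exact this.continuous
  obtain ⟨u, hu, hmin⟩ := (lipK_compact (E := E) hR).exists_isMinOn
    ⟨0, by simp, LipschitzWith.const' (α := KB E R) (0:ℝ)⟩ hc.continuousOn
  refine ⟨u, fun v => ?_⟩
  set w := conjK hR (conjK hR v) with hw
  have hle : Jf μ ν w ≤ Jf μ ν v := by
    apply add_le_add
    · apply integral_mono_ae (integrable_of_cont hμ (conj_lip hR w).continuous)
        (integrable_of_cont hμ (conj_lip hR v).continuous)
      have : ∀ᵐ x ∂μ, x ∈ Metric.closedBall (0:E) R := by rwa [ae_iff]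
      filter_upwards [this] with x hx
      exact conj_conjK_conjK_le hR v ⟨x, hx⟩
    · exact integral_mono (integrable_K ν w) (integrable_K ν v) (conjK_conjK_le hR v)
  refine le_trans ?_ hle
  let o : KB E R := ⟨0, by simp [hR]⟩
  rw [← Jf_const hR hμ hm w (-(w o))]
  apply hmin
  refine ⟨?_, ?_⟩
  · simp [o]
  · have h1 : LipschitzWith R.toNNReal w :=
      fun x y => conj_lip hR (conjK hR v) (x : E) (y : E)
    apply LipschitzWith.of_dist_le_mul
    intro x y
    simpa using h1.dist_le_mul x y
end var
end Spray
end PartP1b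

section PartP1c
open Set MeasureTheory Filter Topology
open scoped ENNReal

namespace Spray
section var
variable {E : Type*} [NormedAddCommGroup E] [InnerProductSpace ℝ E] [FiniteDimensional ℝ E]
  {R : ℝ}

lemma quot_tendsto (hR : 0 ≤ R) (u h : C(KB E R, ℝ)) (x : E) (y : KB E R)
    (hy : conj u x = inner ℝ (y : E) x - u y)
    (huniq : ∀ z : KB E R, conj u x = inner ℝ (z : E) x - u z → z = y) :
    Tendsto (fun n : ℕ => ((n:ℝ)+1) * (conj (u + (1/((n:ℝ)+1)) • h) x - conj u x)) atTop (𝓝 (- h y)) := by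
  have hs : ∀ n : ℕ, (0:ℝ) < 1/((n:ℝ)+1) := fun n => by positivity
  choose yn hyn using fun n : ℕ => exists_conj hR (u + (1/((n:ℝ)+1)) • h) x
  have hyn' : ∀ n : ℕ, conj (u + (1/((n:ℝ)+1)) • h) x =
      inner ℝ (yn n : E) x - u (yn n) - 1/((n:ℝ)+1) * h (yn n) := by
    intro n; rw [hyn n]; simp; ring
  have hlow : ∀ n : ℕ, conj u x - 1/((n:ℝ)+1) * h y ≤ conj (u + (1/((n:ℝ)+1)) • h) x := by
    intro n
    have := le_conj (u + (1/((n:ℝ)+1)) • h) x y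
    rw [hy]
    simp at this ⊢
    linarith
  have hup : ∀ n : ℕ, conj (u + (1/((n:ℝ)+1)) • h) x ≤ conj u x - 1/((n:ℝ)+1) * h (yn n) := by
    intro n
    have := le_conj u x (yn n)
    rw [hyn' n]; linarith
  have hy_t : Tendsto yn atTop (𝓝 y) := by
    apply tendsto_nhds_of_unique_mapClusterPt
    intro z hz
    apply huniq
    let f : KB E R → ℝ := fun z => inner ℝ (z : E) x - u z
    have hf : Continuous f := by fun_prop
    have hc : MapClusterPt (f z) atTop (f ∘ yn) := hz.continuousAt_comp hf.continuousAt
    have ht : Tendsto (f ∘ yn) atTop (𝓝 (conj u x)) := by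
      have h1 : Tendsto (fun n : ℕ => conj u x - (1/((n:ℝ)+1)) * (2 * ‖h‖)) atTop (𝓝 (conj u x)) := by
        have := (tendsto_one_div_add_atTop_nhds_zero_nat (𝕜 := ℝ)).mul_const (2 * ‖h‖)
        simpa using this.const_sub (conj u x)
      apply tendsto_of_tendsto_of_tendsto_of_le_of_le h1 tendsto_const_nhds
      · intro n
        have h2 := hlow n
        rw [hyn' n] at h2
        have h3 := abs_le.mp (h.norm_coe_le_norm y)
        have h4 := abs_le.mp (h.norm_coe_le_norm (yn n))
        have : 1/((n:ℝ)+1) * (h y - h (yn n)) ≤ 1/((n:ℝ)+1) * (2 * ‖h‖) := by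
          apply mul_le_mul_of_nonneg_left _ (hs n).le
          linarith [h3.2, h4.1]
        simp only [f, Function.comp]
        linarith
      · intro n
        exact le_conj u x (yn n)
    have : ClusterPt (f z) (𝓝 (conj u x)) := hc.clusterPt.mono ht
    exact (eq_of_nhds_neBot this).symm
  have hhy : Tendsto (fun n => - h (yn n)) atTop (𝓝 (- h y)) :=
    ((h.continuous.tendsto y).comp hy_t).neg
  apply tendsto_of_tendsto_of_tendsto_of_le_of_le tendsto_const_nhds hhy
  · intro n
    have h1 := hlow n
    have h2 : ((n:ℝ)+1) * (- (1/((n:ℝ)+1) * h y)) ≤ ((n:ℝ)+1) * (conj (u + (1/((n:ℝ)+1)) • h) x - conj u x) := by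
      apply mul_le_mul_of_nonneg_left _ (by positivity); linarith
    have h3 : ((n:ℝ)+1) * (- (1/((n:ℝ)+1) * h y)) = - h y := by field_simp
    rw [h3] at h2; exact h2
  · intro n
    have h1 := hup n
    have h2 : ((n:ℝ)+1) * (conj (u + (1/((n:ℝ)+1)) • h) x - conj u x) ≤ ((n:ℝ)+1) * (- (1/((n:ℝ)+1) * h (yn n)))  := by
      apply mul_le_mul_of_nonneg_left _ (by positivity); linarith
    have h3 : ((n:ℝ)+1) * (- (1/((n:ℝ)+1) * h (yn n))) = - h (yn n) := by field_simp
    rw [h3] at h2; exact h2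

lemma gradient_mem (hR : 0 ≤ R) (u : C(KB E R, ℝ)) {x : E} (hd : DifferentiableAt ℝ (conj u) x) :
    ∃ y : KB E R, (y : E) = gradient (conj u) x ∧ conj u x = inner ℝ (y : E) x - u y ∧
    ∀ z : KB E R, conj u x = inner ℝ (z : E) x - u z → z = y := by
  obtain ⟨y, hy⟩ := exists_conj hR u x
  refine ⟨y, subG_inner_eq (subG_conj u x y hy) hd, hy, ?_⟩
  intro z hz
  apply Subtype.ext
  rw [subG_inner_eq (subG_conj u x y hy) hd, subG_inner_eq (subG_conj u x z hz) hd]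

variable [MeasurableSpace E] [BorelSpace E]

lemma measurable_gradient (f : E → ℝ) : Measurable (gradient f) := by
  have : gradient f = fun x => (InnerProductSpace.toDual ℝ E).symm (fderiv ℝ f x) := rfl
  rw [this]
  exact (InnerProductSpace.toDual ℝ E).symm.continuous.measurable.comp (measurable_fderiv ℝ f)

lemma first_var (hR : 0 ≤ R) {μ : Measure E} [IsFiniteMeasure μ]
    (hμ : μ (Metric.closedBall 0 R)ᶜ = 0)
    {ν : Measure (KB E R)} [IsFiniteMeasure ν]
    (u : C(KB E R, ℝ)) (hu : ∀ v, Jf μ ν u ≤ Jf μ ν v)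
    (hd : ∀ᵐ x ∂μ, DifferentiableAt ℝ (conj u) x) (h : BoundedContinuousFunction E ℝ) :
    ∫ x, h (gradient (conj u) x) ∂μ ≤ ∫ y, h (y : E) ∂ν := by
  let hK : C(KB E R, ℝ) := ⟨fun y => h y, by fun_prop⟩
  let q : ℕ → E → ℝ := fun n x => ((n:ℝ)+1) * (conj (u + (1/((n:ℝ)+1)) • hK) x - conj u x)
  have hq : Tendsto (fun n => ∫ x, q n x ∂μ) atTop (𝓝 (∫ x, - h (gradient (conj u) x) ∂μ)) := by
    apply tendsto_integral_of_dominated_convergence (fun _ => ‖hK‖)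
    · intro n
      exact (((conj_lip hR _).continuous.sub (conj_lip hR _).continuous).const_smul ((n:ℝ)+1)).aestronglyMeasurable
    · exact integrable_const _
    · intro n
      refine Eventually.of_forall fun x => ?_
      have h1 := conj_le_conj hR (u + (1/((n:ℝ)+1)) • hK) u x
      have h2 := conj_le_conj hR u (u + (1/((n:ℝ)+1)) • hK) x
      have e1 : ‖(u + (1/((n:ℝ)+1)) • hK) - u‖ = 1/((n:ℝ)+1) * ‖hK‖ := by
        rw [add_sub_cancel_left, norm_smul, Real.norm_of_nonneg (by positivity)]
      rw [norm_sub_rev, e1] at h2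
      rw [e1] at h1
      have h3 : |conj (u + (1/((n:ℝ)+1)) • hK) x - conj u x| ≤ 1/((n:ℝ)+1) * ‖hK‖ := by
        rw [abs_le]; constructor <;> linarith
      simp only [q]
      rw [norm_mul, Real.norm_of_nonneg (by positivity), Real.norm_eq_abs]
      calc _ ≤ ((n:ℝ)+1) * (1/((n:ℝ)+1) * ‖hK‖) := by gcongr
        _ = ‖hK‖ := by field_simp
    · filter_upwards [hd] with x hx
      obtain ⟨y, hy, hy2, hy3⟩ := gradient_mem hR u hx
      rw [← hy]
      exact quot_tendsto hR u hK x y hy2 hy3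
  have hge : ∀ n, - ∫ y, h (y : E) ∂ν ≤ ∫ x, q n x ∂μ := by
    intro n
    have h1 := hu (u + (1/((n:ℝ)+1)) • hK)
    unfold Jf at h1
    have h2 : ∫ y, (u + (1/((n:ℝ)+1)) • hK) y ∂ν = ∫ y, u y ∂ν + 1/((n:ℝ)+1) * ∫ y, h (y:E) ∂ν := by
      have e1 : ∫ y, (u y + 1/((n:ℝ)+1) * hK y) ∂ν = ∫ y, u y ∂ν + ∫ y, 1/((n:ℝ)+1) * hK y ∂ν :=
        integral_add (integrable_K ν u) ((integrable_K ν hK).const_mul _)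
      rw [integral_const_mul] at e1
      exact e1
    have h3 : ∫ x, q n x ∂μ = ((n:ℝ)+1) * (∫ x, conj (u + (1/((n:ℝ)+1)) • hK) x ∂μ - ∫ x, conj u x ∂μ) := by
      rw [← integral_sub (integrable_of_cont hμ (conj_lip hR _).continuous)
        (integrable_of_cont hμ (conj_lip hR _).continuous), ← integral_const_mul]
    rw [h3]
    rw [h2] at h1
    have h4 : ((n:ℝ)+1) * (-(1/((n:ℝ)+1) * ∫ y, h (y:E) ∂ν)) ≤ ((n:ℝ)+1) * (∫ x, conj (u + (1/((n:ℝ)+1)) • hK) x ∂μ - ∫ x, conj u x ∂μ) := by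
      apply mul_le_mul_of_nonneg_left _ (by positivity); linarith
    refine le_trans (le_of_eq ?_) h4
    field_simp
  have := ge_of_tendsto' hq hge
  rw [integral_neg] at this
  linarith

theorem brenier (μ ν : Measure E) [IsFiniteMeasure μ] [IsFiniteMeasure ν] (hR : 0 ≤ R)
    (hμ : μ (Metric.closedBall 0 R)ᶜ = 0) (hν : ν (Metric.closedBall 0 R)ᶜ = 0)
    (hm : μ univ = ν univ) (hac : μ ≪ volume) :
    ∃ (ψ : E → ℝ) (T : E → E), LipschitzWith R.toNNReal ψ ∧ (∀ x, ∃ y, SubG ψ x y) ∧ Measurable T ∧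
      (∀ᵐ x ∂(volume : Measure E), SubG ψ x (T x) ∧ ∀ y, SubG ψ x y → y = T x) ∧ μ.map T = ν ∧
      ∀ π : Measure (E × E), π.map Prod.fst = μ → π.map Prod.snd = ν →
        ∫⁻ x, ENNReal.ofReal (‖x - T x‖^2) ∂μ ≤ ∫⁻ q, ENNReal.ofReal (‖q.1 - q.2‖^2) ∂π := by
  have hKm : MeasurableSet (Metric.closedBall (0:E) R) := Metric.isClosed_closedBall.measurableSet
  let νK : Measure (KB E R) := ν.comap Subtype.val
  have hνK : νK.map Subtype.val = ν := by
    rw [map_comap_subtype_coe hKm]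
    exact Measure.restrict_eq_self_of_ae_mem (by rwa [ae_iff])
  have hfin : IsFiniteMeasure νK := by
    constructor
    rw [← Set.preimage_univ (f := (Subtype.val : KB E R → E)), ← Measure.map_apply measurable_subtype_coe MeasurableSet.univ, hνK]
    exact measure_lt_top _ _
  have hm' : μ univ = νK univ := by
    rw [hm, ← hνK, Measure.map_apply measurable_subtype_coe MeasurableSet.univ, Set.preimage_univ]
  obtain ⟨u, hu⟩ := exists_min hR hμ hm'
  have hlip := conj_lip hR u
  have hdv : ∀ᵐ x ∂(volume : Measure E), DifferentiableAt ℝ (conj u) x := hlip.ae_differentiableAt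
  have hd : ∀ᵐ x ∂μ, DifferentiableAt ℝ (conj u) x := hac.ae_le hdv
  have hT : Measurable (gradient (conj u)) := measurable_gradient _
  have hSG : ∀ x, DifferentiableAt ℝ (conj u) x → SubG (conj u) x (gradient (conj u) x) := by
    intro x hx
    obtain ⟨y, hy⟩ := exists_conj hR u x
    rw [← subG_inner_eq (subG_conj u x y hy) hx]
    exact subG_conj u x y hy
  have hmap : μ.map (gradient (conj u)) = ν := by
    apply ext_of_forall_integral_eq_of_IsFiniteMeasure
    intro f
    rw [integral_map hT.aemeasurable f.continuous.aestronglyMeasurable]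
    conv_rhs => rw [← hνK]
    rw [integral_map measurable_subtype_coe.aemeasurable f.continuous.aestronglyMeasurable]
    apply le_antisymm (first_var hR hμ u hu hd f)
    have := first_var hR hμ u hu hd (-f)
    simp only [BoundedContinuousFunction.coe_neg, Pi.neg_apply, integral_neg] at this
    linarith
  refine ⟨conj u, gradient (conj u), hlip, fun x => ?_, hT, ?_, hmap, ?_⟩
  · obtain ⟨y, hy⟩ := exists_conj hR u x
    exact ⟨y, subG_conj u x y hy⟩
  · filter_upwards [hdv] with x hx
    exact ⟨hSG x hx, fun y hy => subG_inner_eq hy hx⟩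
  · intro π h1 h2
    let ũ : E → ℝ := conj (conjK hR u)
    have hũ : Continuous ũ := (conj_lip hR (conjK hR u)).continuous
    have hμK : ∀ᵐ x ∂μ, x ∈ Metric.closedBall (0:E) R := by rwa [ae_iff]
    let f1 : E → ℝ := fun x => ‖x‖^2 - 2 * conj u x
    let f2 : E → ℝ := fun y => ‖y‖^2 - 2 * ũ y
    have c1 : Continuous f1 := by have := hlip.continuous; fun_prop
    have c2 : Continuous f2 := by fun_prop
    have i1 : Integrable f1 μ := integrable_of_cont hμ c1
    have i2 : Integrable f2 ν := integrable_of_cont hν c2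
    have j1 : Integrable (fun q : E × E => f1 q.1) π := by
      have : Integrable f1 (π.map Prod.fst) := by rwa [h1]
      exact this.comp_measurable measurable_fst
    have j2 : Integrable (fun q : E × E => f2 q.2) π := by
      have : Integrable f2 (π.map Prod.snd) := by rwa [h2]
      exact this.comp_measurable measurable_snd
    have i3 : Integrable (fun x => f2 (gradient (conj u) x)) μ := by
      have : Integrable f2 (μ.map (gradient (conj u))) := by rwa [hmap]
      exact this.comp_measurable hT
    have e1 : ∫ q, f1 q.1 ∂π = ∫ x, f1 x ∂μ := by
      rw [← h1, integral_map measurable_fst.aemeasurable c1.aestronglyMeasurable]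
    have e2 : ∫ q, f2 q.2 ∂π = ∫ x, f2 (gradient (conj u) x) ∂μ := by
      rw [← integral_map hT.aemeasurable c2.aestronglyMeasurable, hmap, ← h2,
        integral_map measurable_snd.aemeasurable c2.aestronglyMeasurable]
    have key : ∀ᵐ x ∂μ, ‖x - gradient (conj u) x‖^2 = f1 x + f2 (gradient (conj u) x) := by
      filter_upwards [hd, hμK] with x hx hxK
      have hle := le_conj (conjK hR u) (gradient (conj u) x) ⟨x, hxK⟩
      obtain ⟨x', hx'⟩ := exists_conj hR (conjK hR u) (gradient (conj u) x)
      have h3 := hSG x hx x'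
      rw [conjK_apply] at hle hx'
      simp only at hle
      rw [inner_sub_right] at h3
      rw [real_inner_comm] at hx'
      rw [real_inner_comm] at hle
      rw [norm_sub_sq_real, real_inner_comm]
      simp only [f1, f2, ũ]
      linarith
    have eint : ∫ x, ‖x - gradient (conj u) x‖^2 ∂μ = ∫ q, (f1 q.1 + f2 q.2) ∂π := by
      rw [integral_congr_ae key, integral_add i1 i3, integral_add j1 j2, e1, e2]
    have hL : ∫⁻ x, ENNReal.ofReal (‖x - gradient (conj u) x‖^2) ∂μ =
        ENNReal.ofReal (∫ x, ‖x - gradient (conj u) x‖^2 ∂μ) := by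
      rw [ofReal_integral_eq_lintegral_ofReal]
      · exact (i1.add i3).congr (key.mono fun x hx => hx.symm)
      · exact Eventually.of_forall fun x => by positivity
    rw [hL, eint]
    have hπK : ∀ᵐ q ∂π, q.1 ∈ Metric.closedBall (0:E) R := by
      rw [← h1] at hμK
      exact ae_of_ae_map measurable_fst.aemeasurable hμK
    calc ENNReal.ofReal (∫ q, (f1 q.1 + f2 q.2) ∂π) ≤ ∫⁻ q, ENNReal.ofReal (f1 q.1 + f2 q.2) ∂π := by
          rw [integral_eq_lintegral_pos_part_sub_lintegral_neg_part
            (f := fun q : E × E => f1 q.1 + f2 q.2) (j1.add j2)]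
          refine (ENNReal.ofReal_le_ofReal (sub_le_self _ ENNReal.toReal_nonneg)).trans ?_
          exact ENNReal.ofReal_toReal_le
      _ ≤ _ := by
          apply lintegral_mono_ae
          filter_upwards [hπK] with q hq
          apply ENNReal.ofReal_le_ofReal
          have hle := le_conj (conjK hR u) q.2 ⟨q.1, hq⟩
          rw [conjK_apply] at hle
          simp only at hle
          rw [norm_sub_sq_real]
          simp only [f1, f2, ũ]
          linarith
end var
end Spray
end PartP1c

section PartP2a
open Set MeasureTheory Filter Topology
open scoped ENNReal

namespace Spray
section prox
variable {E : Type*} [NormedAddCommGroup E] [InnerProductSpace ℝ E] [FiniteDimensional ℝ E]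
  {ψ : E → ℝ}

lemma SubG.mono {x y x' y' : E} (h : SubG ψ x y) (h' : SubG ψ x' y') :
    0 ≤ inner ℝ (y - y') (x - x') := by
  have h1 := h x'
  have h2 := h' x
  have e : inner ℝ y (x' - x) = - inner ℝ y (x - x') := by
    rw [← inner_neg_right, neg_sub]
  rw [inner_sub_left]
  linarith

lemma subG_convex (hS : ∀ x, ∃ y, SubG ψ x y) (x h : E) {s : ℝ} (hs : 0 ≤ s) (hs1 : s ≤ 1) :
    ψ (x + s • h) - ψ x ≤ s * (ψ (x + h) - ψ x) := by
  obtain ⟨y, hy⟩ := hS (x + s • h)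
  have h1 := hy (x + h)
  have h2 := hy x
  have e1 : x + h - (x + s • h) = (1 - s) • h := by module
  have e2 : x - (x + s • h) = (- s) • h := by module
  rw [e1, inner_smul_right] at h1
  rw [e2, inner_smul_right] at h2
  nlinarith

lemma prox_exists (hψ : Continuous ψ) (hS : ∀ x, ∃ y, SubG ψ x y) {c t : ℝ} (hc : 0 < c)
    (ht : 0 ≤ t) (z : E) : ∃ x y, SubG ψ x y ∧ z = c • x + t • y := by
  rcases ht.eq_or_lt with rfl | ht
  · obtain ⟨y, hy⟩ := hS (c⁻¹ • z)
    exact ⟨_, y, hy, by simp [smul_smul, hc.ne']⟩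
  let F : E → ℝ := fun x => c / 2 * ‖x‖^2 + t * ψ x - inner ℝ z x
  have hF : Continuous F := by fun_prop
  obtain ⟨y0, hy0⟩ := hS 0
  obtain ⟨x, hx⟩ := hF.exists_forall_le' 0 (by
    have hev : ∀ᶠ x : E in cocompact E, 2 / c * (t * ‖y0‖ + ‖z‖) ≤ ‖x‖ :=
      tendsto_norm_cocompact_atTop.eventually_ge_atTop _
    filter_upwards [hev] with x hx
    have h1 := hy0 x
    rw [sub_zero] at h1
    have h2 : - (‖y0‖ * ‖x‖) ≤ inner ℝ y0 x := (abs_le.mp (abs_real_inner_le_norm y0 x)).1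
    have h3 : inner ℝ z x ≤ ‖z‖ * ‖x‖ := real_inner_le_norm z x
    have h4 : (t * ‖y0‖ + ‖z‖) ≤ c / 2 * ‖x‖ := by
      have := mul_le_mul_of_nonneg_left hx (by positivity : 0 ≤ c / 2)
      have e : c / 2 * (2 / c * (t * ‖y0‖ + ‖z‖)) = t * ‖y0‖ + ‖z‖ := by field_simp
      linarith
    have h5 := mul_le_mul_of_nonneg_right h4 (norm_nonneg x)
    simp only [F, norm_zero, inner_zero_right]
    have h6 := mul_le_mul_of_nonneg_left (add_le_add h1 h2) ht.le
    nlinarith)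
  refine ⟨x, t⁻¹ • (z - c • x), ?_, ?_⟩
  · intro x'
    set h := x' - x with hh
    have key : ∀ s : ℝ, 0 < s → s ≤ 1 →
        inner ℝ (z - c • x) h ≤ t * (ψ x' - ψ x) + s * (c / 2 * ‖h‖^2) := by
      intro s hs hs1
      have h1 := hx (x + s • h)
      have h2 := subG_convex hS x h hs.le hs1
      have e3 : x + h = x' := by rw [hh]; abel
      rw [e3] at h2
      simp only [F] at h1
      rw [norm_add_sq_real, inner_add_right, inner_smul_right, inner_smul_right, norm_smul, mul_pow,
        Real.norm_eq_abs, sq_abs] at h1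
      rw [inner_sub_left, inner_smul_left]
      simp only [conj_trivial]
      have h3 := mul_le_mul_of_nonneg_left h2 ht.le
      have : s * (inner ℝ z h - c * inner ℝ x h) ≤ s * (t * (ψ x' - ψ x) + s * (c / 2 * ‖h‖^2)) := by
        nlinarith
      exact le_of_mul_le_mul_left this hs
    have hlim : Tendsto (fun s : ℝ => t * (ψ x' - ψ x) + s * (c / 2 * ‖h‖^2)) (𝓝[>] 0)
        (𝓝 (t * (ψ x' - ψ x) + 0 * (c / 2 * ‖h‖^2))) := by
      apply Tendsto.mono_left _ nhdsWithin_le_nhds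
      exact (by fun_prop : Continuous fun s : ℝ => t * (ψ x' - ψ x) + s * (c / 2 * ‖h‖^2)).tendsto 0
    have hle := ge_of_tendsto hlim (b := inner ℝ (z - c • x) h) (by
      have : Ioc (0:ℝ) 1 ∈ 𝓝[>] (0:ℝ) := Ioc_mem_nhdsGT (by norm_num)
      filter_upwards [this] with s hs
      exact key s hs.1 hs.2)
    rw [inner_smul_left]
    simp only [conj_trivial]
    have : t⁻¹ * inner ℝ (z - c • x) h ≤ ψ x' - ψ x := by
      rw [inv_mul_le_iff₀ ht]; linarith
    linarith
  · rw [smul_smul, mul_inv_cancel₀ ht.ne']; module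

lemma prox_lip {c t : ℝ} (hc : 0 < c) (ht : 0 ≤ t) {x y x' y' : E} (h : SubG ψ x y)
    (h' : SubG ψ x' y') : c * ‖x - x'‖ ^ 2 ≤ inner ℝ ((c • x + t • y) - (c • x' + t • y')) (x - x') := by
  have e : (c • x + t • y) - (c • x' + t • y') = c • (x - x') + t • (y - y') := by module
  rw [e, inner_add_left, inner_smul_left, inner_smul_left, real_inner_self_eq_norm_sq]
  simp only [conj_trivial]
  have := mul_nonneg ht (h.mono h')
  linarith

lemma prox_lip' {c t : ℝ} (hc : 0 < c) (ht : 0 ≤ t) {x y x' y' : E} (h : SubG ψ x y)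
    (h' : SubG ψ x' y') : c * ‖x - x'‖ ≤ ‖(c • x + t • y) - (c • x' + t • y')‖ := by
  have h1 := prox_lip hc ht h h'
  have h2 := real_inner_le_norm ((c • x + t • y) - (c • x' + t • y')) (x - x')
  rcases (norm_nonneg (x - x')).eq_or_lt with h0 | h0
  · rw [← h0]; simp
  · apply le_of_mul_le_mul_right _ h0
    nlinarith

theorem resolvent (hψ : Continuous ψ) (hS : ∀ x, ∃ y, SubG ψ x y) :
    ∃ X : E → E, (∀ w, SubG ψ (X w) (w - X w)) ∧ (∀ x y, SubG ψ x y → X (x + y) = x) ∧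
      (∀ w w', ‖X w - X w'‖^2 ≤ inner ℝ (w - w') (X w - X w')) ∧ LipschitzWith 1 X ∧
      (∃ θ : E → ℝ, ∀ w, HasFDerivAt θ (innerSL ℝ (X w)) w) := by
  choose X Y hXY hsum using fun w => prox_exists hψ hS one_pos zero_le_one w
  have hY : ∀ w, w - X w = Y w := by
    intro w
    have := hsum w
    simp only [one_smul] at this
    exact sub_eq_of_eq_add' this
  have hF : ∀ w w', ‖X w - X w'‖^2 ≤ inner ℝ (w - w') (X w - X w') := by
    intro w w'
    have := prox_lip one_pos zero_le_one (hXY w) (hXY w')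
    rw [← hsum, ← hsum, one_mul] at this
    exact this
  have hL : ∀ w w', ‖X w - X w'‖ ≤ ‖w - w'‖ := by
    intro w w'
    have := prox_lip' one_pos zero_le_one (hXY w) (hXY w')
    rw [← hsum, ← hsum, one_mul] at this
    exact this
  refine ⟨X, fun w => by rw [hY]; exact hXY w, ?_, hF, ?_, ?_⟩
  · intro x y hxy
    have := prox_lip' one_pos zero_le_one (hXY (x + y)) hxy
    rw [← hsum, one_smul, one_smul, sub_self, norm_zero, one_mul] at this
    exact sub_eq_zero.mp (norm_le_zero_iff.mp this)
  · apply LipschitzWith.of_dist_le_mul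
    intro w w'
    rw [dist_eq_norm, dist_eq_norm, NNReal.coe_one, one_mul]
    exact hL w w'
  · let θ : E → ℝ := fun w => inner ℝ w (X w) - 1/2 * ‖X w‖^2 - ψ (X w)
    have hθ : ∀ w w', θ w + inner ℝ (w' - w) (X w) ≤ θ w' := by
      intro w w'
      have h1 := hXY w' (X w)
      have h2 : 0 ≤ ‖X w - X w'‖^2 := by positivity
      rw [← hY] at h1
      rw [norm_sub_sq_real] at h2
      rw [inner_sub_right, inner_sub_left, inner_sub_left, real_inner_self_eq_norm_sq,
        real_inner_comm (X w) (X w')] at h1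
      simp only [θ]
      rw [inner_sub_left]
      linarith
    refine ⟨θ, fun w => ?_⟩
    rw [hasFDerivAt_iff_isLittleO_nhds_zero, Asymptotics.isLittleO_iff]
    intro c hc
    filter_upwards [Metric.ball_mem_nhds (0:E) hc] with h hh
    rw [mem_ball_zero_iff] at hh
    have h1 := hθ w (w + h)
    have h2 := hθ (w + h) w
    have e1 : w + h - w = h := by abel
    have e2 : w - (w + h) = - h := by abel
    rw [e1] at h1
    rw [e2, inner_neg_left] at h2
    have h3 := hL (w + h) w
    rw [e1] at h3
    have h4 : inner ℝ h (X (w + h)) - inner ℝ h (X w) ≤ ‖h‖ * ‖h‖ := by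
      rw [← inner_sub_right]
      exact (real_inner_le_norm _ _).trans (by gcongr)
    rw [innerSL_apply_apply, real_inner_comm, Real.norm_eq_abs, abs_le]
    have h5 : ‖h‖ * ‖h‖ ≤ c * ‖h‖ := by gcongr
    have h6 : 0 ≤ c * ‖h‖ := by positivity
    constructor <;> linarith
end prox
end Spray
end PartP2a

section PartP2b
open Set MeasureTheory Filter Topology
open scoped ENNReal

namespace Spray
section alek
variable {E : Type*} [NormedAddCommGroup E] [InnerProductSpace ℝ E] [FiniteDimensional ℝ E]
  {ψ : E → ℝ}

/-- second order expansion of `ψ` at `x0` -/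
def Expan (ψ : E → ℝ) (x0 y0 : E) (A : E →L[ℝ] E) : Prop :=
  ∀ η > 0, ∃ r > 0, ∀ x' y', SubG ψ x' y' → ‖x' - x0‖ ≤ r →
    ‖y' - y0 - A (x' - x0)‖ ≤ η * ‖x' - x0‖

lemma expan_of_deriv {X : E → E} (hX1 : ∀ w, SubG ψ (X w) (w - X w))
    (hX2 : ∀ x y, SubG ψ x y → X (x + y) = x)
    (hX3 : ∀ w w', ‖X w - X w'‖^2 ≤ inner ℝ (w - w') (X w - X w'))
    {θ : E → ℝ} (hθ : ∀ w, HasFDerivAt θ (innerSL ℝ (X w)) w)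
    {w0 : E} {M : E →L[ℝ] E} (hM : HasFDerivAt X M w0) (hdet : M.det ≠ 0) :
    ∃ A : E →L[ℝ] E, (A : E →ₗ[ℝ] E).IsSymmetric ∧ (∀ h, 0 ≤ inner ℝ (A h) h) ∧
      Expan ψ (X w0) (w0 - X w0) A := by
  have hdet' : LinearMap.det (M : E →ₗ[ℝ] E) ≠ 0 := hdet
  let Me : E ≃ₗ[ℝ] E := LinearMap.equivOfDetNeZero (M : E →ₗ[ℝ] E) hdet'
  let N : E →L[ℝ] E := LinearMap.toContinuousLinearMap (Me.symm : E →ₗ[ℝ] E)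
  have hNM : ∀ k, N (M k) = k := fun k => Me.symm_apply_apply k
  have hMN : ∀ k, M (N k) = k := fun k => Me.apply_symm_apply k
  have hsymm : ∀ v w, inner ℝ (M v) w = inner ℝ v (M w) := by
    intro v w
    have h2 : HasFDerivAt (fun w => innerSL ℝ (X w)) ((innerSL ℝ).comp M) w0 :=
      (innerSL ℝ (E := E)).hasFDerivAt.comp w0 hM
    have := second_derivative_symmetric hθ h2 v w
    simp only [ContinuousLinearMap.comp_apply, innerSL_apply_apply] at this
    rw [this, real_inner_comm]
  have hlin : ∀ η > 0, ∃ r > 0, ∀ k : E, ‖k‖ ≤ r → ‖X (w0 + k) - X w0 - M k‖ ≤ η * ‖k‖ := by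
    intro η hη
    have h1 := hasFDerivAt_iff_isLittleO_nhds_zero.mp hM
    have h2 := (Asymptotics.isLittleO_iff.mp h1) hη
    obtain ⟨r, hr, h3⟩ := Metric.eventually_nhds_iff.mp h2
    refine ⟨r/2, by positivity, fun k hk => h3 ?_⟩
    rw [dist_zero_right]; linarith
  have hpos : ∀ h, ‖M h‖^2 ≤ inner ℝ h (M h) := by
    intro h
    have hd : Tendsto (fun s : ℝ => s⁻¹ • (X (w0 + s • h) - X w0)) (𝓝[>] 0) (𝓝 (M h)) := by
      have h1 : HasDerivAt (fun s : ℝ => X (w0 + s • h)) (M h) 0 := by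
        have h2 : HasDerivAt (fun s : ℝ => w0 + s • h) h 0 := by
          simpa using ((hasDerivAt_id (0:ℝ)).smul_const h).const_add w0
        have h3 : HasFDerivAt X M (w0 + (0:ℝ) • h) := by simpa using hM
        exact h3.comp_hasDerivAt 0 h2
      have := (hasDerivAt_iff_tendsto_slope_zero.mp h1)
      simp only [zero_add, zero_smul, add_zero] at this
      exact this.mono_left (nhdsWithin_mono _ (fun x hx => ne_of_gt hx))
    have t1 : Tendsto (fun s : ℝ => ‖s⁻¹ • (X (w0 + s • h) - X w0)‖^2) (𝓝[>] 0) (𝓝 (‖M h‖^2)) :=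
      hd.norm.pow 2
    have t2 : Tendsto (fun s : ℝ => inner ℝ h (s⁻¹ • (X (w0 + s • h) - X w0))) (𝓝[>] 0)
        (𝓝 (inner ℝ h (M h))) := tendsto_const_nhds.inner hd
    refine le_of_tendsto_of_tendsto t1 t2 ?_
    filter_upwards [self_mem_nhdsWithin] with s hs
    have hs' : (0:ℝ) < s := hs
    have h3 := hX3 (w0 + s • h) w0
    rw [add_sub_cancel_left, inner_smul_left] at h3
    simp only [conj_trivial] at h3
    rw [norm_smul, mul_pow, inner_smul_right, Real.norm_of_nonneg (by positivity)]
    calc s⁻¹^2 * ‖X (w0 + s • h) - X w0‖^2 ≤ s⁻¹^2 * (s * inner ℝ h (X (w0 + s • h) - X w0)) := by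
          gcongr
      _ = _ := by field_simp
  set C : ℝ := ‖N‖ + 1 with hC
  have hC0 : 0 < C := by positivity
  have hCN : ∀ k, ‖N k‖ ≤ C * ‖k‖ := by
    intro k
    exact (N.le_opNorm k).trans (by gcongr; linarith)
  have hCM : ∀ k, ‖k‖ ≤ C * ‖M k‖ := fun k => by
    have := hCN (M k); rwa [hNM] at this
  refine ⟨N - ContinuousLinearMap.id ℝ E, ?_, ?_, ?_⟩
  · intro a b
    simp only [ContinuousLinearMap.coe_coe, ContinuousLinearMap.sub_apply,
      ContinuousLinearMap.id_apply, inner_sub_left, inner_sub_right]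
    have := hsymm (N a) (N b)
    rw [hMN, hMN] at this
    rw [← this]
  · intro h
    have := hpos (N h)
    rw [hMN] at this
    simp only [ContinuousLinearMap.sub_apply, ContinuousLinearMap.id_apply, inner_sub_left,
      real_inner_self_eq_norm_sq]
    linarith
  · intro η hη
    -- choose the linearisation accuracy
    set η' : ℝ := min (η / (2 * C^2)) (1 / (2 * C^2)) ⊓ (1 / (2 * C)) with hη'
    have hη'0 : 0 < η' := by
      rw [hη']; refine lt_min (lt_min ?_ ?_) ?_ <;> positivity
    have b1 : η' ≤ η / (2 * C^2) := (min_le_left _ _).trans (min_le_left _ _)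
    have b2 : η' ≤ 1 / (2 * C^2) := (min_le_left _ _).trans (min_le_right _ _)
    have b3 : η' ≤ 1 / (2 * C) := min_le_right _ _
    obtain ⟨ρ, hρ, hlinρ⟩ := hlin η' hη'0
    refine ⟨ρ / (4 * C^2), by positivity, ?_⟩
    intro x' y' hxy hx
    set k := x' + y' - w0 with hk
    have hXw : X (w0 + k) = x' := by rw [hk, add_sub_cancel]; exact hX2 x' y' hxy
    have hkρ : ‖k‖ ≤ ρ := by
      by_contra hcon
      push Not at hcon
      set s := ρ / ‖k‖ with hs
      have hk0 : 0 < ‖k‖ := hρ.trans hcon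
      have hs0 : 0 < s := by positivity
      have hs1 : s < 1 := by rw [hs, div_lt_one hk0]; exact hcon
      have hsk : ‖s • k‖ = ρ := by
        rw [norm_smul, Real.norm_of_nonneg hs0.le, hs]; field_simp
      have h1 := hlinρ (s • k) hsk.le
      have h2 := hX3 (w0 + k) (w0 + s • k)
      have e : w0 + k - (w0 + s • k) = (1 - s) • k := by module
      rw [e, inner_smul_left, hXw] at h2
      simp only [conj_trivial] at h2
      have h3 : 0 ≤ inner ℝ k (x' - X (w0 + s • k)) := by
        have : 0 ≤ (1 - s) * inner ℝ k (x' - X (w0 + s • k)) := le_trans (by positivity) h2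
        exact nonneg_of_mul_nonneg_right this (by linarith)
      have h4 : 0 ≤ inner ℝ (s • k) (x' - X (w0 + s • k)) := by
        rw [inner_smul_left]; simp only [conj_trivial]; positivity
      have h5 : inner ℝ (s • k) (X (w0 + s • k) - X w0) ≤ inner ℝ (s • k) (x' - X w0) := by
        have : x' - X w0 = (x' - X (w0 + s • k)) + (X (w0 + s • k) - X w0) := by abel
        rw [this, inner_add_right]; linarith
      have h6 : inner ℝ (s • k) (x' - X w0) ≤ ρ * (ρ / (4 * C^2)) :=
        (real_inner_le_norm _ _).trans (by rw [hsk]; gcongr)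
      have h7 : ρ^2 / C^2 ≤ inner ℝ (s • k) (M (s • k)) := by
        refine le_trans ?_ (hpos (s • k))
        have := hCM (s • k)
        rw [hsk] at this
        rw [div_le_iff₀ (by positivity), ← mul_pow, mul_comm]
        gcongr
      have h8 : - (ρ * (η' * ρ)) ≤ inner ℝ (s • k) (X (w0 + s • k) - X w0 - M (s • k)) := by
        have := (abs_le.mp (abs_real_inner_le_norm (s • k) (X (w0 + s • k) - X w0 - M (s • k)))).1
        rw [hsk] at this h1
        refine le_trans ?_ this
        gcongr
      rw [inner_sub_right] at h8
      have h9 : ρ * (η' * ρ) ≤ ρ * (1 / (2 * C^2) * ρ) := by gcongr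
      have h10 : ρ^2/C^2 - ρ * (1 / (2 * C^2) * ρ) - ρ * (ρ / (4 * C^2)) = ρ^2 / (4 * C^2) := by
        field_simp; ring
      have h11 : 0 < ρ^2 / (4 * C^2) := by positivity
      linarith
    have h1 := hlinρ k hkρ
    rw [hXw] at h1
    have e : y' - (w0 - X w0) - (N - ContinuousLinearMap.id ℝ E) (x' - X w0) =
        - N (x' - X w0 - M k) := by
      rw [map_sub N _ (M k), hNM]
      simp only [ContinuousLinearMap.sub_apply, ContinuousLinearMap.id_apply]
      rw [hk]; abel
    rw [e, norm_neg]
    have h2 : ‖k‖ ≤ 2 * C * ‖x' - X w0‖ := by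
      have h3 := hCM k
      have h4 : ‖M k‖ ≤ ‖x' - X w0‖ + η' * ‖k‖ := by
        have : M k = (x' - X w0) - (x' - X w0 - M k) := by abel
        rw [this]
        exact (norm_sub_le _ _).trans (by gcongr)
      have h5 : η' * ‖k‖ ≤ 1 / (2 * C) * ‖k‖ := by gcongr
      have h6 : C * (1 / (2 * C) * ‖k‖) = ‖k‖ / 2 := by field_simp
      have h7 : C * ‖M k‖ ≤ C * (‖x' - X w0‖ + 1 / (2 * C) * ‖k‖) := by gcongr; linarith
      rw [mul_add, h6] at h7
      linarith
    calc ‖N (x' - X w0 - M k)‖ ≤ C * (η' * ‖k‖) := (hCN _).trans (by gcongr)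
      _ ≤ C * (η / (2 * C^2) * (2 * C * ‖x' - X w0‖)) := by gcongr
      _ = η * ‖x' - X w0‖ := by field_simp

variable [MeasurableSpace E] [BorelSpace E]

lemma null_image_lip {X : E → E} (hX : LipschitzWith 1 X) {s : Set E} (hs : volume s = 0) :
    volume (X '' s) = 0 := by
  let H : Measure E := Measure.hausdorffMeasure (Module.finrank ℝ E)
  have h1 : H s = 0 := (Measure.absolutelyContinuous_isAddHaarMeasure H volume) hs
  have h2 : H (X '' s) = 0 := by
    have := hX.hausdorffMeasure_image_le (d := (Module.finrank ℝ E : ℝ)) (by positivity) s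
    change H (X '' s) ≤ _ * H s at this
    rw [h1, mul_zero] at this
    exact nonpos_iff_eq_zero.mp this
  exact (Measure.absolutelyContinuous_isAddHaarMeasure volume H) h2

theorem aleksandrov (hψ : Continuous ψ) (hS : ∀ x, ∃ y, SubG ψ x y) :
    ∀ᵐ x0 ∂(volume : Measure E), ∃ (y0 : E) (A : E →L[ℝ] E), SubG ψ x0 y0 ∧
      (A : E →ₗ[ℝ] E).IsSymmetric ∧ (∀ h, 0 ≤ inner ℝ (A h) h) ∧ Expan ψ x0 y0 A := by
  obtain ⟨X, hX1, hX2, hX3, hXl, θ, hθ⟩ := resolvent hψ hS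
  let N : Set E := {w | ¬ DifferentiableAt ℝ X w}
  have hN : volume N = 0 := by
    have := hXl.ae_differentiableAt (μ := (volume : Measure E))
    rwa [ae_iff] at this
  let S : Set E := {w | DifferentiableAt ℝ X w ∧ (fderiv ℝ X w).det = 0}
  have hSz : volume (X '' S) = 0 :=
    addHaar_image_eq_zero_of_det_fderivWithin_eq_zero volume (f' := fun w => fderiv ℝ X w)
      (fun w hw => hw.1.hasFDerivAt.hasFDerivWithinAt) (fun w hw => hw.2)
  have hz : volume (X '' N ∪ X '' S) = 0 := measure_union_null (null_image_lip hXl hN) hSz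
  have : ∀ᵐ x0 ∂(volume : Measure E), x0 ∉ X '' N ∪ X '' S :=
    measure_eq_zero_iff_ae_notMem.mp hz
  filter_upwards [this] with x0 hx0
  obtain ⟨y, hy⟩ := hS x0
  have hx : X (x0 + y) = x0 := hX2 x0 y hy
  have hd : DifferentiableAt ℝ X (x0 + y) := by
    by_contra hcon
    exact hx0 (Or.inl ⟨_, hcon, hx⟩)
  have hdet : (fderiv ℝ X (x0 + y)).det ≠ 0 := by
    intro hcon
    exact hx0 (Or.inr ⟨_, ⟨hd, hcon⟩, hx⟩)
  obtain ⟨A, hA1, hA2, hA3⟩ := expan_of_deriv hX1 hX2 hX3 hθ hd.hasFDerivAt hdet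
  rw [hx, add_sub_cancel_left] at hA3
  exact ⟨y, A, hy, hA1, hA2, hA3⟩
end alek
end Spray
end PartP2b

section PartP2c
open Set MeasureTheory Filter Topology
open scoped ENNReal Pointwise

namespace Spray
section det
variable {E : Type*} [NormedAddCommGroup E] [InnerProductSpace ℝ E] [FiniteDimensional ℝ E]
  {ψ : E → ℝ} [MeasurableSpace E] [BorelSpace E]

lemma det_ge_one {Ω₀ Ω₁ : Set E} (ho : IsOpen Ω₀) {T : E → E}
    (hT : Measurable T) (hTS : ∀ᵐ x ∂(volume : Measure E), SubG ψ x (T x))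
    (hmap : (volume.restrict Ω₀).map T = volume.restrict Ω₁)
    {x0 y0 : E} (hx0 : x0 ∈ Ω₀) {A : E →L[ℝ] E} (hA : Expan ψ x0 y0 A) :
    1 ≤ |A.det| := by
  let S : Set E := A '' Metric.closedBall 0 1
  have hS : IsCompact S := (isCompact_closedBall 0 1).image A.continuous
  have key : ∀ η > 0, volume (Metric.ball (0:E) 1) ≤ volume (Metric.cthickening η S) := by
    intro η hη
    obtain ⟨r, hr, hAr⟩ := hA η hη
    obtain ⟨r', hr', hb⟩ := Metric.isOpen_iff.mp ho x0 hx0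
    set ρ := min r r' with hρ
    have hρ0 : 0 < ρ := lt_min hr hr'
    let Z : Set E := (fun z => y0 + ρ • z) '' Metric.cthickening η S
    have hZc : IsCompact Z := (hS.cthickening).image (by fun_prop)
    have hZv : volume Z = ENNReal.ofReal (ρ ^ Module.finrank ℝ E) * volume (Metric.cthickening η S) := by
      have : Z = (fun z => y0 + z) '' (ρ • Metric.cthickening η S) := by
        rw [← image_smul, image_image]
      rw [this, image_add_left, measure_preimage_add, Measure.addHaar_smul, abs_of_nonneg (by positivity)]
    have hB : volume (Metric.ball x0 ρ) =
        ENNReal.ofReal (ρ ^ Module.finrank ℝ E) * volume (Metric.ball (0:E) 1) :=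
      Measure.addHaar_ball_of_pos _ _ hρ0
    have hle : volume (Metric.ball x0 ρ) ≤ volume Z := by
      calc volume (Metric.ball x0 ρ) = (volume.restrict Ω₀) (Metric.ball x0 ρ) := by
            rw [Measure.restrict_apply Metric.isOpen_ball.measurableSet, inter_eq_left.mpr]
            exact (Metric.ball_subset_ball (min_le_right _ _)).trans hb
        _ ≤ (volume.restrict Ω₀) (T ⁻¹' Z) := by
            apply measure_mono_ae
            filter_upwards [ae_restrict_of_ae hTS] with x hx hxb
            have hxb' : ‖x - x0‖ < ρ := by rwa [← dist_eq_norm]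
            have h1 := hAr x (T x) hx (hxb'.le.trans (min_le_left _ _))
            refine ⟨ρ⁻¹ • (T x - y0), ?_, ?_⟩
            · have hm : A (ρ⁻¹ • (x - x0)) ∈ S := by
                refine ⟨_, ?_, rfl⟩
                rw [mem_closedBall_zero_iff, norm_smul, Real.norm_of_nonneg (by positivity),
                  inv_mul_le_iff₀ hρ0]
                linarith
              apply Metric.mem_cthickening_of_dist_le _ _ _ _ hm
              rw [dist_eq_norm, map_smul, ← smul_sub, norm_smul, Real.norm_of_nonneg (by positivity),
                inv_mul_le_iff₀ hρ0]
              refine h1.trans ?_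
              rw [mul_comm]
              gcongr
            · simp only [smul_smul, mul_inv_cancel₀ hρ0.ne', one_smul]
              abel
        _ = (volume.restrict Ω₁) Z := by
            rw [← hmap, Measure.map_apply hT hZc.measurableSet]
        _ ≤ volume Z := Measure.restrict_apply_le _ _
    rw [hB, hZv] at hle
    refine (ENNReal.mul_le_mul_iff_right ?_ ENNReal.ofReal_ne_top).mp hle
    simpa using by positivity
  have hlim : Tendsto (fun r => volume (Metric.cthickening r S)) (𝓝[>] 0) (𝓝 (volume S)) :=
    (tendsto_measure_cthickening_of_isCompact hS).mono_left nhdsWithin_le_nhds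
  have hfin : volume (Metric.ball (0:E) 1) ≤ volume S :=
    ge_of_tendsto hlim (by filter_upwards [self_mem_nhdsWithin] with η hη; exact key η hη)
  have hSv : volume S = ENNReal.ofReal |A.det| * volume (Metric.closedBall (0:E) 1) :=
    Measure.addHaar_image_continuousLinearMap _ _ _
  rw [hSv, Measure.addHaar_unitClosedBall_eq_addHaar_unitBall] at hfin
  have hb0 : volume (Metric.ball (0:E) 1) ≠ 0 := (Metric.measure_ball_pos _ _ one_pos).ne'
  have hbt : volume (Metric.ball (0:E) 1) ≠ ⊤ := measure_ball_lt_top.ne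
  by_contra hcon
  push Not at hcon
  have : ENNReal.ofReal |A.det| * volume (Metric.ball (0:E) 1) < 1 * volume (Metric.ball (0:E) 1) := by
    apply (ENNReal.mul_lt_mul_iff_left hb0 hbt).mpr
    rw [← ENNReal.ofReal_one]
    exact (ENNReal.ofReal_lt_ofReal_iff one_pos).mpr hcon
  rw [one_mul] at this
  exact absurd hfin (not_le.mpr this)

end det

/-- point at which the second-order structure is available -/
def GoodPt {d : ℕ} (ψ : EuclideanSpace ℝ (Fin d) → ℝ) (x0 : EuclideanSpace ℝ (Fin d)) : Prop :=
  ∃ (y0 : EuclideanSpace ℝ (Fin d)) (e : OrthonormalBasis (Fin d) ℝ (EuclideanSpace ℝ (Fin d)))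
    (l : Fin d → ℝ) (A : EuclideanSpace ℝ (Fin d) →L[ℝ] EuclideanSpace ℝ (Fin d)),
    SubG ψ x0 y0 ∧ (∀ j, 0 < l j) ∧ 1 ≤ ∏ j, l j ∧ (∀ j h, inner ℝ (e j) (A h) = l j * inner ℝ (e j) h) ∧
      Expan ψ x0 y0 A

theorem ae_goodPt {d : ℕ} {ψ : EuclideanSpace ℝ (Fin d) → ℝ}
    (hψ : Continuous ψ) (hS : ∀ x, ∃ y, SubG ψ x y)
    {Ω₀ Ω₁ : Set (EuclideanSpace ℝ (Fin d))} (ho : IsOpen Ω₀)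
    {T : EuclideanSpace ℝ (Fin d) → EuclideanSpace ℝ (Fin d)}
    (hT : Measurable T) (hTS : ∀ᵐ x, SubG ψ x (T x))
    (hmap : (volume.restrict Ω₀).map T = volume.restrict Ω₁) :
    ∀ᵐ x0, x0 ∈ Ω₀ → GoodPt ψ x0 := by
  filter_upwards [aleksandrov hψ hS] with x0 ⟨y0, A, hy0, hsym, hpos, hex⟩ hx0
  have hdet := det_ge_one ho hT hTS hmap hx0 hex
  have hn : Module.finrank ℝ (EuclideanSpace ℝ (Fin d)) = d := by simp
  have hdp : A.det = ∏ j, hsym.eigenvalues hn j := by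
    have := hsym.det_eq_prod_eigenvalues hn
    simpa using this
  have hl0 : ∀ j, 0 ≤ hsym.eigenvalues hn j := by
    intro j
    have h1 := hpos (hsym.eigenvectorBasis hn j)
    have h2 := hsym.apply_eigenvectorBasis hn j
    simp only [ContinuousLinearMap.coe_coe] at h2
    rw [h2, inner_smul_left, real_inner_self_eq_norm_sq] at h1
    simpa using h1
  rw [hdp, abs_of_nonneg (Finset.prod_nonneg fun j _ => hl0 j)] at hdet
  refine ⟨y0, hsym.eigenvectorBasis hn, hsym.eigenvalues hn, A, hy0, ?_, hdet, ?_, hex⟩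
  · intro j
    refine lt_of_le_of_ne (hl0 j) fun h => ?_
    have : ∏ j, hsym.eigenvalues hn j = 0 := Finset.prod_eq_zero (Finset.mem_univ j) h.symm
    linarith
  · intro j h
    have h1 := hsym (hsym.eigenvectorBasis hn j) h
    have h2 := hsym.apply_eigenvectorBasis hn j
    simp only [ContinuousLinearMap.coe_coe] at h1 h2
    rw [← h1, h2, inner_smul_left]
    simp
end Spray
end PartP2c

section PartP3a
open Set MeasureTheory Filter Topology
open scoped ENNReal

namespace Spray
section ode
open ODE in
lemma pl_ball {E : Type*} [NormedAddCommGroup E] [NormedSpace ℝ E] [CompleteSpace E]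
    {f : ℝ → E → E} {tmin tmax : ℝ} {t₀ : Icc tmin tmax} {x₀ : E} {a L K : NNReal}
    (hf : IsPicardLindelof f t₀ x₀ a 0 L K) :
    ∃ α : ℝ → E, α t₀ = x₀ ∧
      (∀ t ∈ Icc tmin tmax, HasDerivWithinAt α (f t (α t)) (Icc tmin tmax) t) ∧
      ∀ t, α t ∈ Metric.closedBall x₀ a := by
  have hx : x₀ ∈ Metric.closedBall x₀ ((0:NNReal):ℝ) := Metric.mem_closedBall_self le_rfl
  obtain ⟨α, hα⟩ := FunSpace.exists_isFixedPt_next hf hx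
  refine ⟨α.compProj, by rw [FunSpace.compProj_val, ← hα, FunSpace.next_apply₀], fun t ht ↦ ?_,
    fun t => α.compProj_mem_closedBall hf.mul_max_le⟩
  apply hasDerivWithinAt_picard_Icc t₀.2 hf.continuousOn_uncurry
    α.continuous_compProj.continuousOn (fun _ ht' ↦ α.compProj_mem_closedBall hf.mul_max_le)
    x₀ ht |>.congr_of_mem _ ht
  intro t' ht'
  nth_rw 1 [← hα]
  rw [FunSpace.compProj_of_mem ht', FunSpace.next_apply]

variable {ι : Type*} [Fintype ι]

noncomputable def Sg (α v : ι → ℝ) : ℝ := ∑ i, v i / α i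
noncomputable def Sq (α v : ι → ℝ) : ℝ := ∑ i, (v i / α i)^2
noncomputable def Si (α : ι → ℝ) : ℝ := ∑ i, ((α i)^2)⁻¹
noncomputable def Bt (δ : ℝ) (α v : ι → ℝ) : ℝ :=
  δ^2 * (Sg α v ^2 + Sq α v) / ((∏ i, α i)^2 + δ^2 * Si α)

lemma Bt_den_pos (δ : ℝ) {α : ι → ℝ} (hα : ∀ i, 0 < α i) : 0 < (∏ i, α i)^2 + δ^2 * Si α := by
  have h1 : 0 < ∏ i, α i := Finset.prod_pos fun i _ => hα i
  have h2 : 0 ≤ Si α := Finset.sum_nonneg fun i _ => by positivity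
  positivity

lemma Bt_nonneg (δ : ℝ) {α : ι → ℝ} (v : ι → ℝ) (hα : ∀ i, 0 < α i) : 0 ≤ Bt δ α v := by
  have := Bt_den_pos δ hα
  have h2 : 0 ≤ Sq α v := Finset.sum_nonneg fun i _ => by positivity
  unfold Bt; positivity

/-- the vector field -/
noncomputable def VF (δ : ℝ) (l : ι → ℝ) (t : ℝ) (q : (ι → ℝ) × (ι → ℝ)) : (ι → ℝ) × (ι → ℝ) :=
  (fun i => (1/2) * q.2 i, fun i => 2 * (Bt δ (fun i => 1 + t * (l i - 1) + q.1 i)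
    (fun i => l i - 1 + (1/2) * q.2 i) / (1 + t * (l i - 1) + q.1 i)))

lemma contDiffOn_Bt {W : Type*} [NormedAddCommGroup W] [NormedSpace ℝ W] {D : Set W} {α v : W → ι → ℝ} (δ : ℝ)
    {n : WithTop ℕ∞} (hα : ∀ i, ContDiffOn ℝ n (fun w => α w i) D) (hv : ∀ i, ContDiffOn ℝ n (fun w => v w i) D)
    (hpos : ∀ w ∈ D, ∀ i, 0 < α w i) : ContDiffOn ℝ n (fun w => Bt δ (α w) (v w)) D := by
  unfold Bt
  have h1 : ContDiffOn ℝ n (fun w => Sg (α w) (v w)) D := by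
    unfold Sg
    exact ContDiffOn.sum fun i _ => (hv i).div (hα i) fun w hw => (hpos w hw i).ne'
  have h2 : ContDiffOn ℝ n (fun w => Sq (α w) (v w)) D := by
    unfold Sq
    exact ContDiffOn.sum fun i _ => ((hv i).div (hα i) fun w hw => (hpos w hw i).ne').pow 2
  have h3 : ContDiffOn ℝ n (fun w => Si (α w)) D := by
    unfold Si
    exact ContDiffOn.sum fun i _ => ((hα i).pow 2).inv fun w hw => by
      have := hpos w hw i; positivity
  have h4 : ContDiffOn ℝ n (fun w => ∏ i, α w i) D := contDiffOn_prod fun i _ => hα i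
  exact (contDiffOn_const.mul ((h1.pow 2).add h2)).div ((h4.pow 2).add (contDiffOn_const.mul h3))
    fun w hw => (Bt_den_pos δ (hpos w hw)).ne'

lemma contDiffOn_VF {D : Set (ℝ × ((ι → ℝ) × (ι → ℝ)))} (δ : ℝ) (l : ι → ℝ) {n : WithTop ℕ∞}
    (hpos : ∀ w ∈ D, ∀ i, 0 < 1 + w.1 * (l i - 1) + w.2.1 i) :
    ContDiffOn ℝ n (Function.uncurry (VF δ l)) D := by
  have hα : ∀ i, ContDiffOn ℝ n (fun w : ℝ × ((ι → ℝ) × (ι → ℝ)) => 1 + w.1 * (l i - 1) + w.2.1 i) D := by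
    intro i; apply ContDiff.contDiffOn; fun_prop
  have hv : ∀ i, ContDiffOn ℝ n (fun w : ℝ × ((ι → ℝ) × (ι → ℝ)) => l i - 1 + (1/2) * w.2.2 i) D := by
    intro i; apply ContDiff.contDiffOn; fun_prop
  have hB := contDiffOn_Bt (α := fun (w : ℝ × ((ι → ℝ) × (ι → ℝ))) i => 1 + w.1 * (l i - 1) + w.2.1 i)
    (v := fun (w : ℝ × ((ι → ℝ) × (ι → ℝ))) i => l i - 1 + (1/2) * w.2.2 i) δ hα hv hpos
  apply ContDiffOn.prodMk
  · apply ContDiff.contDiffOn; fun_prop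
  · rw [contDiffOn_pi]
    intro i
    exact contDiffOn_const.mul (hB.div (hα i) fun w hw => (hpos w hw i).ne')

theorem curve_exists (l : ι → ℝ) (hl : ∀ i, 0 < l i) {ε : ℝ} (hε : 0 < ε) :
    ∃ (δ τ : ℝ) (α v : ℝ → ι → ℝ), 0 < δ ∧ 0 < τ ∧
      (∀ i, ContDiffOn ℝ (⊤ : ℕ∞) (fun t => α t i) (Ioo (-τ) (1 + τ))) ∧
      (∀ i, ContDiffOn ℝ (⊤ : ℕ∞) (fun t => v t i) (Ioo (-τ) (1 + τ))) ∧
      (∀ t ∈ Ioo (-τ) (1 + τ), ∀ i, 0 < α t i) ∧ (∀ i, α 0 i = 1) ∧ (∀ i, v 0 i = l i - 1) ∧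
      (∀ t ∈ Ioo (-τ) (1 + τ), ∀ i, HasDerivAt (fun t => α t i) (v t i) t) ∧
      (∀ t ∈ Ioo (-τ) (1 + τ), ∀ i, HasDerivAt (fun t => v t i) (Bt δ (α t) (v t) / α t i) t) ∧
      (∀ i, α 1 i ≤ l i + ε) := by
  set Λ : ℝ := 1 + ∑ i, (l i + 1 / l i) with hΛ
  have hterm : ∀ i, 0 < l i + 1 / l i := fun i => by have := hl i; positivity
  have hΛ1 : 1 ≤ Λ := by
    have : 0 ≤ ∑ i, (l i + 1 / l i) := Finset.sum_nonneg fun i _ => (hterm i).le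
    linarith
  have hΛi : ∀ i, l i + 1 / l i ≤ Λ := fun i => by
    have : l i + 1 / l i ≤ ∑ i, (l i + 1 / l i) :=
      Finset.single_le_sum (f := fun i => l i + 1 / l i) (fun i _ => (hterm i).le) (Finset.mem_univ i)
    linarith
  have hΛ0 : 0 < Λ := by linarith
  set τ : ℝ := 1 / (2 * Λ) with hτ
  have hτ0 : 0 < τ := by positivity
  have hτΛ : τ * Λ = 1/2 := by rw [hτ]; field_simp
  have hτ1 : τ ≤ 1/2 := by nlinarith
  have hτl : ∀ i, τ * l i ≤ 1/2 := fun i => by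
    have h1 : l i ≤ Λ := by
      have := hΛi i; have : 0 < 1 / l i := by have := hl i; positivity
      linarith
    nlinarith
  have hτl2 : ∀ i, τ ≤ l i / 2 := fun i => by
    have h1 : 1 / l i ≤ Λ := by have := hΛi i; have := hl i; linarith
    have h2 : 1 ≤ Λ * l i := by rwa [div_le_iff₀ (hl i)] at h1
    have : τ * (Λ * l i) = l i / 2 := by rw [← mul_assoc, hτΛ]; ring
    nlinarith
  have hline : ∀ t ∈ Icc (-τ) (1 + τ), ∀ i, τ ≤ 1 + t * (l i - 1) := by
    intro t ht i
    have h0 := hl i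
    have h1 := hτl i
    have h2 := hτl2 i
    rcases le_or_gt t 0 with h | h
    · nlinarith [ht.1]
    rcases le_or_gt t 1 with h' | h'
    · nlinarith
    · nlinarith [ht.2]
  set r : ℝ := min (τ / 2) ε with hr
  have hr0 : 0 < r := lt_min (by positivity) hε
  have hrτ : r ≤ τ / 2 := min_le_left _ _
  have hrε : r ≤ ε := min_le_right _ _
  let D : Set (ℝ × ((ι → ℝ) × (ι → ℝ))) := Icc (-τ) (1 + τ) ×ˢ Metric.closedBall (0 : ((ι → ℝ) × (ι → ℝ))) r
  have hcomp : IsCompact D := isCompact_Icc.prod (isCompact_closedBall 0 r)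
  have hconv : Convex ℝ D := (convex_Icc _ _).prod (convex_closedBall 0 r)
  have hpos : ∀ w ∈ D, ∀ i, 0 < 1 + w.1 * (l i - 1) + w.2.1 i := by
    rintro ⟨t, q⟩ ⟨ht, hq⟩ i
    have h1 := hline t ht i
    have h2 : |q.1 i| ≤ r := by
      have := mem_closedBall_zero_iff.mp hq
      exact (norm_le_pi_norm q.1 i).trans ((norm_fst_le q).trans this)
    have := (abs_le.mp h2).1
    simp only
    linarith
  -- bound on the unscaled force
  obtain ⟨C, hC⟩ : ∃ C : ℝ, ∀ w ∈ D, ∀ i, ((Sg (fun i => 1 + w.1 * (l i - 1) + w.2.1 i)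
      (fun i => l i - 1 + (1/2) * w.2.2 i))^2 + Sq (fun i => 1 + w.1 * (l i - 1) + w.2.1 i)
      (fun i => l i - 1 + (1/2) * w.2.2 i)) / (∏ i, (1 + w.1 * (l i - 1) + w.2.1 i))^2 /
      (1 + w.1 * (l i - 1) + w.2.1 i) ≤ C := by
    have hα : ∀ i, ContinuousOn (fun w : ℝ × ((ι → ℝ) × (ι → ℝ)) => 1 + w.1 * (l i - 1) + w.2.1 i) D := by
      intro i; fun_prop
    have hv : ∀ i, ContinuousOn (fun w : ℝ × ((ι → ℝ) × (ι → ℝ)) => l i - 1 + (1/2) * w.2.2 i) D := by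
      intro i; fun_prop
    have hi : ∀ i, ∃ C : ℝ, ∀ w ∈ D, ((Sg (fun i => 1 + w.1 * (l i - 1) + w.2.1 i)
      (fun i => l i - 1 + (1/2) * w.2.2 i))^2 + Sq (fun i => 1 + w.1 * (l i - 1) + w.2.1 i)
      (fun i => l i - 1 + (1/2) * w.2.2 i)) / (∏ i, (1 + w.1 * (l i - 1) + w.2.1 i))^2 /
      (1 + w.1 * (l i - 1) + w.2.1 i) ≤ C := by
      intro i
      obtain ⟨C, hC⟩ := hcomp.bddAbove_image (f := fun w : ℝ × ((ι → ℝ) × (ι → ℝ)) => ((Sg (fun i => 1 + w.1 * (l i - 1) + w.2.1 i)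
        (fun i => l i - 1 + (1/2) * w.2.2 i))^2 + Sq (fun i => 1 + w.1 * (l i - 1) + w.2.1 i)
        (fun i => l i - 1 + (1/2) * w.2.2 i)) / (∏ i, (1 + w.1 * (l i - 1) + w.2.1 i))^2 /
        (1 + w.1 * (l i - 1) + w.2.1 i)) (by
          refine ContinuousOn.div (ContinuousOn.div (ContinuousOn.add (ContinuousOn.pow ?_ 2) ?_) (ContinuousOn.pow ?_ 2) ?_) (hα i) ?_
          · unfold Sg
            exact continuousOn_finsetSum _ fun i _ => (hv i).div (hα i) fun w hw => (hpos w hw i).ne'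
          · unfold Sq
            exact continuousOn_finsetSum _ fun i _ => ((hv i).div (hα i) fun w hw => (hpos w hw i).ne').pow 2
          · exact continuousOn_finsetProd _ fun i _ => hα i
          · intro w hw
            have : 0 < ∏ i, (1 + w.1 * (l i - 1) + w.2.1 i) := Finset.prod_pos fun i _ => hpos w hw i
            positivity
          · exact fun w hw => (hpos w hw i).ne')
      exact ⟨C, fun w hw => hC ⟨w, hw, rfl⟩⟩
    choose C hC using hi
    refine ⟨∑ i, |C i|, fun w hw i => (hC i w hw).trans ((le_abs_self _).trans ?_)⟩
    exact Finset.single_le_sum (f := fun i => |C i|) (fun i _ => abs_nonneg _) (Finset.mem_univ i)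
  set C' : ℝ := |C| + 1 with hC'
  have hC'0 : 0 < C' := by positivity
  set δ : ℝ := min 1 (r / (4 * C')) with hδ
  have hδ0 : 0 < δ := lt_min one_pos (by positivity)
  have hδC : δ^2 * C' ≤ r / 4 := by
    have h1 : δ ≤ 1 := min_le_left _ _
    have h2 : δ ≤ r / (4 * C') := min_le_right _ _
    have h3 : δ^2 ≤ r / (4 * C') := by nlinarith
    calc δ^2 * C' ≤ r / (4 * C') * C' := by gcongr
      _ = r / 4 := by field_simp
  have hG : ∀ w ∈ D, ∀ i, |Bt δ (fun i => 1 + w.1 * (l i - 1) + w.2.1 i)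
    (fun i => l i - 1 + (1/2) * w.2.2 i) / (1 + w.1 * (l i - 1) + w.2.1 i)| ≤ r / 4 := by
    intro w hw i
    have hp := hpos w hw
    have hB := Bt_nonneg δ (fun i => l i - 1 + (1/2) * w.2.2 i) hp
    rw [abs_of_nonneg (div_nonneg hB (hp i).le)]
    refine le_trans ?_ hδC
    have h1 := hC w hw i
    have hprod : 0 < ∏ i, (1 + w.1 * (l i - 1) + w.2.1 i) := Finset.prod_pos fun i _ => hp i
    have hsi : 0 ≤ Si fun i => 1 + w.1 * (l i - 1) + w.2.1 i :=
      Finset.sum_nonneg fun i _ => by positivity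
    have hsq : 0 ≤ Sq (fun i => 1 + w.1 * (l i - 1) + w.2.1 i) (fun i => l i - 1 + (1/2) * w.2.2 i) :=
      Finset.sum_nonneg fun i _ => by positivity
    have h2 : Bt δ (fun i => 1 + w.1 * (l i - 1) + w.2.1 i) (fun i => l i - 1 + (1/2) * w.2.2 i) ≤
        δ^2 * (((Sg (fun i => 1 + w.1 * (l i - 1) + w.2.1 i)
      (fun i => l i - 1 + (1/2) * w.2.2 i))^2 + Sq (fun i => 1 + w.1 * (l i - 1) + w.2.1 i)
      (fun i => l i - 1 + (1/2) * w.2.2 i)) / (∏ i, (1 + w.1 * (l i - 1) + w.2.1 i))^2) := by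
      rw [← mul_div_assoc]
      unfold Bt
      apply div_le_div_of_nonneg_left (by positivity) (by positivity)
      have : 0 ≤ δ^2 * Si fun i => 1 + w.1 * (l i - 1) + w.2.1 i := by positivity
      linarith
    calc _ ≤ δ^2 * (((Sg (fun i => 1 + w.1 * (l i - 1) + w.2.1 i)
      (fun i => l i - 1 + (1/2) * w.2.2 i))^2 + Sq (fun i => 1 + w.1 * (l i - 1) + w.2.1 i)
      (fun i => l i - 1 + (1/2) * w.2.2 i)) / (∏ i, (1 + w.1 * (l i - 1) + w.2.1 i))^2) /
        (1 + w.1 * (l i - 1) + w.2.1 i) := div_le_div_of_nonneg_right h2 (hp i).le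
      _ ≤ δ^2 * C := by
        rw [mul_div_assoc]
        exact mul_le_mul_of_nonneg_left h1 (by positivity)
      _ ≤ δ^2 * C' := by
        apply mul_le_mul_of_nonneg_left _ (by positivity)
        have := le_abs_self C
        linarith
  obtain ⟨K, hK⟩ := ((contDiffOn_VF (n := 1) δ l hpos).exists_lipschitzOnWith one_ne_zero hconv hcomp)
  have h0mem : (0:ℝ) ∈ Icc (-τ) (1 + τ) := ⟨by linarith, by linarith⟩
  have hPL : IsPicardLindelof (VF δ l) (⟨0, h0mem⟩ : Icc (-τ) (1 + τ)) (0 : ((ι → ℝ) × (ι → ℝ))) ⟨r, hr0.le⟩ 0 ⟨r/2, by positivity⟩ K := by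
    constructor
    · intro t ht
      apply LipschitzOnWith.of_dist_le_mul
      intro q hq q' hq'
      have := hK.dist_le_mul (t, q) ⟨ht, hq⟩ (t, q') ⟨ht, hq'⟩
      simpa [Function.uncurry, Prod.dist_eq] using this
    · intro q hq
      have hc := (contDiffOn_VF (n := 1) δ l hpos).continuousOn
      exact hc.comp (f := fun t => (t, q)) (by fun_prop) (fun t ht => ⟨ht, hq⟩)
    · intro t ht q hq
      have hq' := mem_closedBall_zero_iff.mp hq
      change ‖VF δ l t q‖ ≤ r / 2
      rw [norm_prod_le_iff]
      constructor
      · rw [pi_norm_le_iff_of_nonneg (by positivity)]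
        intro i
        have h2 : |q.2 i| ≤ r :=
          (norm_le_pi_norm q.2 i).trans ((norm_snd_le q).trans hq')
        simp only [VF]
        rw [norm_mul, Real.norm_eq_abs, Real.norm_eq_abs, abs_of_pos (by norm_num : (0:ℝ) < 1/2)]
        linarith
      · rw [pi_norm_le_iff_of_nonneg (by positivity)]
        intro i
        have := hG (t, q) ⟨ht, hq⟩ i
        simp only [VF]
        rw [norm_mul, Real.norm_eq_abs, Real.norm_eq_abs, abs_of_pos (by norm_num : (0:ℝ) < 2)]
        simp only at this
        linarith
    · change r / 2 * max (1 + τ - 0) (0 - -τ) ≤ r - 0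
      have : max (1 + τ - 0) (0 - -τ) ≤ 2 := max_le (by linarith) (by linarith)
      nlinarith
  obtain ⟨q, hq0, hqd, hqb⟩ := pl_ball hPL
  have hsm : ContDiffOn ℝ (⊤ : ℕ∞) q (Icc (-τ) (1 + τ)) :=
    ODE.contDiffOn_enat_Icc_of_hasDerivWithinAt (u := Metric.closedBall (0 : ((ι → ℝ) × (ι → ℝ))) r)
      (contDiffOn_VF δ l hpos) hqd (fun t _ => hqb t)
  have hsm' : ContDiffOn ℝ (⊤ : ℕ∞) q (Ioo (-τ) (1 + τ)) := hsm.mono Ioo_subset_Icc_self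
  have hq1 : ∀ i, ContDiffOn ℝ (⊤ : ℕ∞) (fun t => (q t).1 i) (Ioo (-τ) (1 + τ)) := fun i =>
    contDiffOn_pi.mp hsm'.fst i
  have hq2 : ∀ i, ContDiffOn ℝ (⊤ : ℕ∞) (fun t => (q t).2 i) (Ioo (-τ) (1 + τ)) := fun i =>
    contDiffOn_pi.mp hsm'.snd i
  have hqd' : ∀ t ∈ Ioo (-τ) (1 + τ), HasDerivAt q (VF δ l t (q t)) t := fun t ht =>
    (hqd t (Ioo_subset_Icc_self ht)).hasDerivAt (Icc_mem_nhds ht.1 ht.2)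
  have hq00 : q 0 = 0 := hq0
  refine ⟨δ, τ, fun t i => 1 + t * (l i - 1) + (q t).1 i, fun t i => l i - 1 + (1/2) * (q t).2 i,
    hδ0, hτ0, ?_, ?_, ?_, ?_, ?_, ?_, ?_, ?_⟩
  · intro i
    exact (ContDiff.contDiffOn (by fun_prop)).add (hq1 i)
  · intro i
    exact contDiffOn_const.add (contDiffOn_const.mul (hq2 i))
  · intro t ht i
    exact hpos (t, q t) ⟨Ioo_subset_Icc_self ht, hqb t⟩ i
  · intro i; simp [hq00]
  · intro i; simp [hq00]
  · intro t ht i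
    have h1 : HasDerivAt (fun t => (q t).1 i) ((VF δ l t (q t)).1 i) t :=
      (hasDerivAt_pi.mp (hqd' t ht).fst) i
    have h2 : HasDerivAt (fun t => 1 + t * (l i - 1)) (l i - 1) t := by
      simpa using ((hasDerivAt_id t).mul_const (l i - 1)).const_add 1
    exact h2.add h1
  · intro t ht i
    have h1 : HasDerivAt (fun t => (q t).2 i) ((VF δ l t (q t)).2 i) t :=
      (hasDerivAt_pi.mp (hqd' t ht).snd) i
    have h2 := (h1.const_mul (1/2)).const_add (l i - 1)
    refine h2.congr_deriv ?_
    unfold VF; ring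
  · intro i
    have h2 : |(q 1).1 i| ≤ r :=
      (norm_le_pi_norm (q 1).1 i).trans ((norm_fst_le (q 1)).trans (mem_closedBall_zero_iff.mp (hqb 1)))
    have := (abs_le.mp h2).2
    change 1 + 1 * (l i - 1) + (q 1).1 i ≤ l i + ε
    linarith
end ode
end Spray
end PartP3a

section PartP3b
open Set MeasureTheory Filter Topology
open scoped ENNReal

namespace Spray

structure EllCurve (d : ℕ) where
  τ : ℝ
  a : Fin d → ℝ → ℝ
  a' : Fin d → ℝ → ℝ
  β : ℝ → ℝ
  B : ℝ → ℝ
  τ_pos : 0 < τ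
  a_smooth : ∀ j, ContDiffOn ℝ (⊤ : ℕ∞) (a j) (Ioo (-τ) (1 + τ))
  a'_smooth : ∀ j, ContDiffOn ℝ (⊤ : ℕ∞) (a' j) (Ioo (-τ) (1 + τ))
  β_smooth : ContDiffOn ℝ (⊤ : ℕ∞) β (Ioo (-τ) (1 + τ))
  B_smooth : ContDiffOn ℝ (⊤ : ℕ∞) B (Ioo (-τ) (1 + τ))
  a_pos : ∀ j, ∀ t ∈ Ioo (-τ) (1 + τ), 0 < a j t
  a_deriv : ∀ j, ∀ t ∈ Ioo (-τ) (1 + τ), HasDerivAt (a j) (a' j t) t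
  a'_deriv : ∀ j, ∀ t ∈ Ioo (-τ) (1 + τ), HasDerivAt (a' j) (β t / a j t) t
  B_deriv : ∀ t ∈ Ioo (-τ) (1 + τ), HasDerivAt B (β t) t
  trace : ∀ t ∈ Ioo (-τ) (1 + τ), ∑ j, a' j t / a j t = 0
  prod_eq : ∀ t ∈ Ioo (-τ) (1 + τ), ∏ j, a j t = ∏ j, a j 0

lemma exists_primitive {τ : ℝ} (hτ : 0 < τ) {β : ℝ → ℝ} (h : ContDiffOn ℝ (⊤ : ℕ∞) β (Ioo (-τ) (1 + τ))) :
    ∃ B : ℝ → ℝ, ContDiffOn ℝ (⊤ : ℕ∞) B (Ioo (-τ) (1 + τ)) ∧ ∀ t ∈ Ioo (-τ) (1 + τ), HasDerivAt B (β t) t := by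
  have hd : ∀ t ∈ Ioo (-τ) (1 + τ), HasDerivAt (fun t => ∫ s in (0:ℝ)..t, β s) (β t) t := by
    intro t ht
    have hsub : Set.uIcc 0 t ⊆ Ioo (-τ) (1 + τ) := by
      apply (ordConnected_Ioo).uIcc_subset _ ht
      exact ⟨by linarith, by linarith⟩
    have hc := h.continuousOn
    apply intervalIntegral.integral_hasDerivAt_right
    · exact (hc.mono hsub).intervalIntegrable
    · exact hc.stronglyMeasurableAtFilter isOpen_Ioo t ht
    · exact hc.continuousAt (isOpen_Ioo.mem_nhds ht)
  refine ⟨_, ?_, hd⟩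
  apply (contDiffOn_infty_iff_deriv_of_isOpen isOpen_Ioo).mpr
  refine ⟨fun t ht => (hd t ht).differentiableAt.differentiableWithinAt, ?_⟩
  exact h.congr fun t ht => (hd t ht).deriv

lemma convex_bounds {τ : ℝ} (hτ : 0 < τ) {f f' f'' : ℝ → ℝ}
    (h1 : ∀ t ∈ Ioo (-τ) (1 + τ), HasDerivAt f (f' t) t)
    (h2 : ∀ t ∈ Ioo (-τ) (1 + τ), HasDerivAt f' (f'' t) t)
    (h3 : ∀ t ∈ Ioo (-τ) (1 + τ), 0 ≤ f'' t) :
    f 0 + f' 0 ≤ f 1 ∧ ∀ t ∈ Icc (0:ℝ) 1, f t ≤ (1 - t) * f 0 + t * f 1 := by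
  have hc : ConvexOn ℝ (Ioo (-τ) (1 + τ)) f := by
    apply convexOn_of_hasDerivWithinAt2_nonneg (f' := f') (f'' := f'') (convex_Ioo _ _)
    · exact fun t ht => (h1 t ht).continuousAt.continuousWithinAt
    · rw [interior_Ioo]; exact fun t ht => (h1 t ht).hasDerivWithinAt
    · rw [interior_Ioo]; exact fun t ht => (h2 t ht).hasDerivWithinAt
    · rw [interior_Ioo]; exact h3
  have m0 : (0:ℝ) ∈ Ioo (-τ) (1 + τ) := ⟨by linarith, by linarith⟩
  have m1 : (1:ℝ) ∈ Ioo (-τ) (1 + τ) := ⟨by linarith, by linarith⟩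
  constructor
  · have := hc.le_slope_of_hasDerivAt m0 m1 one_pos (h1 0 m0)
    rw [slope_def_field] at this
    linarith
  · intro t ht
    have := hc.2 m0 m1 (sub_nonneg.mpr ht.2) ht.1 (by ring)
    simpa using this

theorem ellCurve_exists {d : ℕ} (l : Fin d → ℝ) (hl : ∀ j, 0 < l j) (hp : 1 ≤ ∏ j, l j)
    {ε : ℝ} (hε : 0 < ε) :
    ∃ c : EllCurve d, ∀ t ∈ Icc (0:ℝ) 1, ∀ j, c.a j t ≤ c.a j 0 * (1 - t + t * (l j + ε)) := by
  rcases d with _ | n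
  · refine ⟨⟨1, fun j => j.elim0, fun j => j.elim0, 0, 0, one_pos, fun j => j.elim0, fun j => j.elim0,
      contDiffOn_const, contDiffOn_const, fun j => j.elim0, fun j => j.elim0, fun j => j.elim0,
      fun t _ => hasDerivAt_const t 0, by simp, by simp⟩, fun t _ j => j.elim0⟩
  obtain ⟨δ, τ, α, v, hδ, hτ, sα, sv, pα, α0, v0, dα, dv, b1⟩ := curve_exists (fun i : Fin n => l i.succ) (fun i => hl _) hε
  have m0 : (0:ℝ) ∈ Ioo (-τ) (1 + τ) := ⟨by linarith, by linarith⟩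
  have m1 : (1:ℝ) ∈ Ioo (-τ) (1 + τ) := ⟨by linarith, by linarith⟩
  set β : ℝ → ℝ := fun t => Bt δ (α t) (v t) with hβ
  have sβ : ContDiffOn ℝ (⊤ : ℕ∞) β (Ioo (-τ) (1 + τ)) := contDiffOn_Bt δ sα sv pα
  obtain ⟨B, sB, dB⟩ := exists_primitive hτ sβ
  have hPpos : ∀ t ∈ Ioo (-τ) (1 + τ), 0 < ∏ i, α t i := fun t ht => Finset.prod_pos fun i _ => pα t ht i
  have sP : ContDiffOn ℝ (⊤ : ℕ∞) (fun t => ∏ i, α t i) (Ioo (-τ) (1 + τ)) := contDiffOn_prod fun i _ => sα i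
  have sS : ContDiffOn ℝ (⊤ : ℕ∞) (fun t => Sg (α t) (v t)) (Ioo (-τ) (1 + τ)) := by
    unfold Sg
    exact ContDiffOn.sum fun i _ => (sv i).div (sα i) fun w hw => (pα w hw i).ne'
  have sA : ContDiffOn ℝ (⊤ : ℕ∞) (fun t => δ / ∏ i, α t i) (Ioo (-τ) (1 + τ)) :=
    contDiffOn_const.div sP fun t ht => (hPpos t ht).ne'
  have dP : ∀ t ∈ Ioo (-τ) (1 + τ), HasDerivAt (fun t => ∏ i, α t i) ((∏ i, α t i) * Sg (α t) (v t)) t := by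
    intro t ht
    have := HasDerivAt.fun_finsetProd (u := Finset.univ) (f := fun i t => α t i) (f' := fun i => v t i) (x := t) (fun i _ => dα t ht i)
    refine this.congr_deriv ?_
    rw [Sg, Finset.mul_sum]
    refine Finset.sum_congr rfl fun i hi => ?_
    rw [← Finset.mul_prod_erase Finset.univ (fun i => α t i) hi, smul_eq_mul]
    have := (pα t ht i).ne'
    field_simp
  have dA : ∀ t ∈ Ioo (-τ) (1 + τ), HasDerivAt (fun t => δ / ∏ i, α t i) (-(δ / ∏ i, α t i) * Sg (α t) (v t)) t := by
    intro t ht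
    have h := (dP t ht).fun_inv (hPpos t ht).ne'
    have := h.const_mul δ
    simp only [← div_eq_mul_inv] at this
    refine this.congr_deriv ?_
    have := (hPpos t ht).ne'
    field_simp
  have dS : ∀ t ∈ Ioo (-τ) (1 + τ), HasDerivAt (fun t => Sg (α t) (v t)) (β t * Si (α t) - Sq (α t) (v t)) t := by
    intro t ht
    unfold Sg
    have : HasDerivAt (fun t => ∑ i, v t i / α t i) (∑ i, (β t / α t i * α t i - v t i * v t i) / (α t i)^2) t :=
      HasDerivAt.fun_sum fun i _ => (dv t ht i).div (dα t ht i) (pα t ht i).ne'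
    refine this.congr_deriv ?_
    rw [Si, Sq, Finset.mul_sum, ← Finset.sum_sub_distrib]
    refine Finset.sum_congr rfl fun i hi => ?_
    have := (pα t ht i).ne'
    field_simp
  have dA' : ∀ t ∈ Ioo (-τ) (1 + τ), HasDerivAt (fun t => -(δ / ∏ i, α t i) * Sg (α t) (v t)) (β t / (δ / ∏ i, α t i)) t := by
    intro t ht
    refine ((dA t ht).fun_neg.mul (dS t ht)).congr_deriv ?_
    have hden := Bt_den_pos δ (pα t ht)
    have key : β t * ((∏ i, α t i)^2 + δ^2 * Si (α t)) = δ^2 * (Sg (α t) (v t)^2 + Sq (α t) (v t)) := by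
      rw [hβ]; unfold Bt; field_simp
    have := (hPpos t ht).ne'
    field_simp
    linear_combination (-1) * key
  have hβ0 : ∀ t ∈ Ioo (-τ) (1 + τ), 0 ≤ β t := fun t ht => Bt_nonneg δ (v t) (pα t ht)
  have cα := fun i => convex_bounds hτ (fun t ht => dα t ht i) (fun t ht => dv t ht i)
    (fun t ht => div_nonneg (hβ0 t ht) (pα t ht i).le)
  have cA := convex_bounds hτ dA dA' (fun t ht => div_nonneg (hβ0 t ht) (div_pos hδ (hPpos t ht)).le)
  refine ⟨⟨τ, fun j => Fin.cases (fun t => δ / ∏ i, α t i) (fun i t => α t i) j,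
    fun j => Fin.cases (fun t => -(δ / ∏ i, α t i) * Sg (α t) (v t)) (fun i t => v t i) j, β, B, hτ,
    fun j => ?_, fun j => ?_, sβ, sB, fun j => ?_, fun j => ?_, fun j => ?_, dB, fun t ht => ?_, fun t ht => ?_⟩, ?_⟩
  · exact j.cases sA sα
  · exact j.cases (sA.neg.mul sS) sv
  · exact j.cases (fun t ht => div_pos hδ (hPpos t ht)) (fun i t ht => pα t ht i)
  · exact j.cases dA (fun i t ht => dα t ht i)
  · exact j.cases dA' (fun i t ht => dv t ht i)
  · rw [Fin.sum_univ_succ]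
    simp only [Fin.cases_zero, Fin.cases_succ]
    change _ + Sg (α t) (v t) = 0
    have := (hPpos t ht).ne'
    field_simp
    ring
  · rw [Fin.prod_univ_succ, Fin.prod_univ_succ]
    simp only [Fin.cases_zero, Fin.cases_succ]
    have := (hPpos t ht).ne'
    have := (hPpos 0 m0).ne'
    field_simp
  · intro t ht j
    refine j.cases ?_ ?_
    · change (δ / ∏ i, α t i) ≤ (δ / ∏ i, α 0 i) * _
      have h := cA.2 t ht
      have e0 : δ / ∏ i, α 0 i = δ := by simp [α0]
      rw [e0] at h ⊢
      have h1 : ∏ i : Fin n, l i.succ ≤ ∏ i, α 1 i := by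
        apply Finset.prod_le_prod (fun i _ => (hl _).le)
        intro i _
        have := (cα i).1
        rw [α0, v0] at this
        linarith
      have hq : 0 < ∏ i : Fin n, l i.succ := Finset.prod_pos fun i _ => hl _
      rw [Fin.prod_univ_succ] at hp
      have h2 : δ / ∏ i, α 1 i ≤ δ * l 0 := by
        rw [div_le_iff₀ (hPpos 1 m1), mul_assoc]
        have : 1 ≤ l 0 * ∏ i, α 1 i := hp.trans (mul_le_mul_of_nonneg_left h1 (hl 0).le)
        nlinarith
      have h3 : t * (δ / ∏ i, α 1 i) ≤ t * (δ * (l 0 + ε)) := by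
        apply mul_le_mul_of_nonneg_left _ ht.1
        nlinarith
      linarith
    · intro i
      change α t i ≤ α 0 i * _
      have h := (cα i).2 t ht
      rw [α0] at h ⊢
      have : t * α 1 i ≤ t * (l i.succ + ε) := mul_le_mul_of_nonneg_left (b1 i) ht.1
      linarith

end Spray
end PartP3b

section PartP4a
open Set MeasureTheory Filter Topology
open scoped ENNReal

namespace Spray
section droplet
variable {d : ℕ}

/-- data of an ellipsoidal droplet -/
structure Cell (d : ℕ) where
  e : OrthonormalBasis (Fin d) ℝ (EuclideanSpace ℝ (Fin d))
  c : EllCurve d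
  x0 : EuclideanSpace ℝ (Fin d)
  v : EuclideanSpace ℝ (Fin d)
  ρ : ℝ
  ρ_pos : 0 < ρ

namespace Cell
variable (K : Cell d)

noncomputable def ctr (t : ℝ) : EuclideanSpace ℝ (Fin d) := K.x0 + t • K.v
noncomputable def crd (j : Fin d) (x : EuclideanSpace ℝ (Fin d)) (t : ℝ) : ℝ := inner ℝ (K.e j) (x - K.ctr t)
noncomputable def N (t : ℝ) (x : EuclideanSpace ℝ (Fin d)) : ℝ := ∑ j, (K.crd j x t / (K.ρ * K.c.a j t))^2
def dom (t : ℝ) : Set (EuclideanSpace ℝ (Fin d)) := {x | K.N t x < 1}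
noncomputable def X (z : EuclideanSpace ℝ (Fin d)) (t : ℝ) : EuclideanSpace ℝ (Fin d) :=
  K.ctr t + ∑ j, (K.c.a j t / K.c.a j 0 * inner ℝ (K.e j) (z - K.x0)) • K.e j
noncomputable def grad (x : EuclideanSpace ℝ (Fin d)) (t : ℝ) : EuclideanSpace ℝ (Fin d) :=
  K.v + ∑ j, (K.c.a' j t / K.c.a j t * K.crd j x t) • K.e j
noncomputable def phi (x : EuclideanSpace ℝ (Fin d)) (t : ℝ) : ℝ :=
  inner ℝ K.v (x - K.ctr t) + (1/2) * ‖K.v‖^2 * t + (1/2) * ∑ j, (K.c.a' j t / K.c.a j t) * (K.crd j x t)^2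
    - (1/2) * K.ρ^2 * K.c.B t
noncomputable def pr (x : EuclideanSpace ℝ (Fin d)) (t : ℝ) : ℝ :=
  (1/2) * K.ρ^2 * K.c.β t * (1 - ∑ j, (K.crd j x t / (K.ρ * K.c.a j t))^2)

lemma mem_Ioo {t : ℝ} (ht : t ∈ Icc (0:ℝ) 1) : t ∈ Ioo (-K.c.τ) (1 + K.c.τ) :=
  ⟨by linarith [K.c.τ_pos, ht.1], by linarith [K.c.τ_pos, ht.2]⟩

lemma hasFDerivAt_crd (j : Fin d) (t : ℝ) (x : EuclideanSpace ℝ (Fin d)) :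
    HasFDerivAt (fun y => K.crd j y t) (innerSL ℝ (K.e j)) x := by
  unfold crd
  have := ((innerSL ℝ (K.e j)).hasFDerivAt (x := x - K.ctr t)).comp x ((hasFDerivAt_id x).sub_const (K.ctr t))
  exact this

lemma continuous_N (t : ℝ) : Continuous (K.N t) := by
  unfold N crd; fun_prop

lemma isOpen_dom (t : ℝ) : IsOpen (K.dom t) := isOpen_lt (K.continuous_N t) continuous_const

lemma hasGradientAt_phi (x : EuclideanSpace ℝ (Fin d)) (t : ℝ) :
    HasGradientAt (fun y => K.phi y t) (K.grad x t) x := by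
  rw [hasGradientAt_iff_hasFDerivAt]
  unfold phi
  have h1 : HasFDerivAt (fun y => inner ℝ K.v (y - K.ctr t)) (innerSL ℝ K.v) x := by
    have := ((innerSL ℝ K.v).hasFDerivAt (x := x - K.ctr t)).comp x ((hasFDerivAt_id x).sub_const (K.ctr t))
    exact this
  have h2 : HasFDerivAt (fun y => ∑ j, (K.c.a' j t / K.c.a j t) * (K.crd j y t)^2)
      (∑ j, (K.c.a' j t / K.c.a j t) • ((2 * K.crd j x t) • innerSL ℝ (K.e j))) x := by
    apply HasFDerivAt.fun_sum
    intro j _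
    have := ((K.hasFDerivAt_crd j t x).pow 2).const_mul (K.c.a' j t / K.c.a j t)
    simpa using this
  have h3 := ((h1.add_const ((1/2) * ‖K.v‖^2 * t)).add (h2.const_mul (1/2))).sub_const ((1/2) * K.ρ^2 * K.c.B t)
  refine h3.congr_fderiv ?_
  ext w
  simp only [grad, _root_.add_apply, _root_.smul_apply, _root_.sum_apply,
    innerSL_apply_apply, smul_eq_mul, InnerProductSpace.toDual_apply_apply, inner_add_left, sum_inner, inner_smul_left,
    Finset.mul_sum]
  congr 1
  refine Finset.sum_congr rfl fun j _ => ?_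
  simp; ring

lemma gradient_phi (x : EuclideanSpace ℝ (Fin d)) (t : ℝ) :
    gradient (fun y => K.phi y t) x = K.grad x t := (K.hasGradientAt_phi x t).gradient

lemma fderiv_phi (x w : EuclideanSpace ℝ (Fin d)) (t : ℝ) :
    fderiv ℝ (fun y => K.phi y t) x w =
      inner ℝ K.v w + ∑ j, (K.c.a' j t / K.c.a j t) * K.crd j x t * inner ℝ (K.e j) w := by
  rw [(K.hasGradientAt_phi x t).hasFDerivAt.fderiv]
  simp [grad, inner_add_left, sum_inner, inner_smul_left]

lemma sum_sq_single (j : Fin d) : ∑ k, (inner ℝ (K.e j) (EuclideanSpace.single k (1:ℝ)))^2 = 1 := by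
  have := (EuclideanSpace.basisFun (Fin d) ℝ).sum_sq_norm_inner_left (K.e j)
  simpa using this

lemma harm (x : EuclideanSpace ℝ (Fin d)) {t : ℝ} (ht : t ∈ Icc (0:ℝ) 1) :
   (∑ k, fderiv ℝ
        (fun y => fderiv ℝ (fun y' => K.phi y' t) y (EuclideanSpace.single k (1:ℝ))) x
        (EuclideanSpace.single k (1:ℝ))) = 0 := by
  have h : ∀ w : EuclideanSpace ℝ (Fin d), fderiv ℝ (fun y => fderiv ℝ (fun y' => K.phi y' t) y w) x w =
      ∑ j, (K.c.a' j t / K.c.a j t) * (inner ℝ (K.e j) w)^2 := by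
    intro w
    have h2 : HasFDerivAt (fun y => inner ℝ K.v w + ∑ j, (K.c.a' j t / K.c.a j t) * K.crd j y t * inner ℝ (K.e j) w)
      (∑ j, (inner ℝ (K.e j) w) • ((K.c.a' j t / K.c.a j t) • innerSL ℝ (K.e j))) x := by
      apply HasFDerivAt.const_add
      apply HasFDerivAt.fun_sum
      intro j _
      exact ((K.hasFDerivAt_crd j t x).const_mul _).mul_const _
    simp only [K.fderiv_phi]
    rw [h2.fderiv]
    simp only [_root_.smul_apply, _root_.sum_apply, innerSL_apply_apply, smul_eq_mul]
    refine Finset.sum_congr rfl fun j _ => ?_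
    ring
  simp only [h]
  rw [Finset.sum_comm]
  simp only [← Finset.mul_sum, K.sum_sq_single, mul_one]
  exact K.c.trace t (K.mem_Ioo ht)

lemma norm_grad_sq (x : EuclideanSpace ℝ (Fin d)) (t : ℝ) : ‖K.grad x t‖^2 =
    ‖K.v‖^2 + 2 * ∑ j, (K.c.a' j t / K.c.a j t) * K.crd j x t * inner ℝ (K.e j) K.v
      + ∑ j, ((K.c.a' j t / K.c.a j t) * K.crd j x t)^2 := by
  unfold grad
  rw [norm_add_sq_real]
  congr 1
  · simp only [inner_sum, inner_smul_right]
    congr 2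
    refine Finset.sum_congr rfl fun j _ => ?_
    rw [real_inner_comm]
  · rw [← real_inner_self_eq_norm_sq, K.e.orthonormal.inner_sum]
    refine Finset.sum_congr rfl fun j _ => ?_
    simp; ring

lemma hasDerivAt_ctr (t : ℝ) : HasDerivAt K.ctr K.v t := by
  unfold ctr
  simpa using ((hasDerivAt_id t).smul_const K.v).const_add K.x0

lemma hasDerivAt_crd (j : Fin d) (x : EuclideanSpace ℝ (Fin d)) (t : ℝ) :
    HasDerivAt (fun s => K.crd j x s) (- inner ℝ (K.e j) K.v) t := by
  unfold crd
  have := (innerSL ℝ (K.e j)).hasFDerivAt.comp_hasDerivAt t ((K.hasDerivAt_ctr t).const_sub x)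
  refine HasDerivAt.congr_deriv this ?_
  simp

lemma bern (x : EuclideanSpace ℝ (Fin d)) {t : ℝ} (ht : t ∈ Icc (0:ℝ) 1) :
    deriv (fun s => K.phi x s) t + (1/2) * ‖gradient (fun y => K.phi y t) x‖ ^ 2 + K.pr x t = 0 := by
  have ht' := K.mem_Ioo ht
  rw [K.gradient_phi, K.norm_grad_sq]
  have h1 : HasDerivAt (fun s => inner ℝ K.v (x - K.ctr s)) (- ‖K.v‖^2) t := by
    have := (innerSL ℝ K.v).hasFDerivAt.comp_hasDerivAt t ((K.hasDerivAt_ctr t).const_sub x)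
    refine this.congr_deriv ?_
    simp
  have h2 : HasDerivAt (fun s => ∑ j, (K.c.a' j s / K.c.a j s) * (K.crd j x s)^2)
      (∑ j, ((K.c.β t / (K.c.a j t)^2 - (K.c.a' j t / K.c.a j t)^2) * (K.crd j x t)^2
        - 2 * ((K.c.a' j t / K.c.a j t) * K.crd j x t * inner ℝ (K.e j) K.v))) t := by
    apply HasDerivAt.fun_sum
    intro j _
    have hp := (K.c.a_pos j t ht').ne'
    refine (((K.c.a'_deriv j t ht').fun_div (K.c.a_deriv j t ht') hp).fun_mul ((K.hasDerivAt_crd j x t).fun_pow 2)).congr_deriv ?_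
    field_simp
    ring
  have h3 : HasDerivAt (fun s => K.phi x s) _ t :=
    ((h1.add ((hasDerivAt_id t).const_mul ((1/2) * ‖K.v‖^2))).add (h2.const_mul (1/2))).sub
      ((K.c.B_deriv t ht').const_mul ((1/2) * K.ρ^2))
  rw [h3.deriv]
  unfold pr
  have hρ := K.ρ_pos.ne'
  have e1 : ∑ j, (K.crd j x t / (K.ρ * K.c.a j t))^2 = (∑ j, (1 / (K.c.a j t)^2) * (K.crd j x t)^2) / K.ρ^2 := by
    rw [Finset.sum_div]
    refine Finset.sum_congr rfl fun j _ => ?_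
    have hp := (K.c.a_pos j t ht').ne'
    field_simp
  have e2 : ∑ j, ((K.c.β t / (K.c.a j t)^2 - (K.c.a' j t / K.c.a j t)^2) * (K.crd j x t)^2
        - 2 * ((K.c.a' j t / K.c.a j t) * K.crd j x t * inner ℝ (K.e j) K.v)) =
      K.c.β t * (∑ j, (1 / (K.c.a j t)^2) * (K.crd j x t)^2) - ∑ j, ((K.c.a' j t / K.c.a j t) * K.crd j x t)^2
       - 2 * ∑ j, (K.c.a' j t / K.c.a j t) * K.crd j x t * inner ℝ (K.e j) K.v := by
    rw [Finset.mul_sum, Finset.mul_sum, ← Finset.sum_sub_distrib, ← Finset.sum_sub_distrib]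
    refine Finset.sum_congr rfl fun j _ => ?_
    ring
  rw [e1, e2]
  field_simp
  ring

lemma crd_X (j : Fin d) (z : EuclideanSpace ℝ (Fin d)) (t : ℝ) :
    K.crd j (K.X z t) t = K.c.a j t / K.c.a j 0 * inner ℝ (K.e j) (z - K.x0) := by
  unfold crd X
  rw [add_sub_cancel_left]
  simp [inner_sum, inner_smul_right, OrthonormalBasis.inner_eq_ite]

lemma ctr_zero : K.ctr 0 = K.x0 := by simp [ctr]

lemma zero_mem : (0:ℝ) ∈ Icc (0:ℝ) 1 := ⟨le_rfl, zero_le_one⟩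

lemma X_zero (z : EuclideanSpace ℝ (Fin d)) : K.X z 0 = z := by
  unfold X
  have : ∀ j, K.c.a j 0 / K.c.a j 0 * inner ℝ (K.e j) (z - K.x0) = inner ℝ (K.e j) (z - K.x0) := fun j => by
    rw [div_self (K.c.a_pos j 0 (K.mem_Ioo zero_mem)).ne', one_mul]
  simp only [this]
  rw [K.e.sum_repr' (z - K.x0), K.ctr_zero]; abel

lemma N_X (z : EuclideanSpace ℝ (Fin d)) {t : ℝ} (ht : t ∈ Icc (0:ℝ) 1) : K.N t (K.X z t) = K.N 0 z := by
  unfold N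
  refine Finset.sum_congr rfl fun j _ => ?_
  rw [K.crd_X, crd, K.ctr_zero]
  have hp := (K.c.a_pos j t (K.mem_Ioo ht)).ne'
  have hp0 := (K.c.a_pos j 0 (K.mem_Ioo zero_mem)).ne'
  have hρ := K.ρ_pos.ne'
  congr 1
  field_simp

lemma X_deriv (z : EuclideanSpace ℝ (Fin d)) {t : ℝ} (ht : t ∈ Icc (0:ℝ) 1) :
    HasDerivAt (K.X z) (gradient (fun y => K.phi y t) (K.X z t)) t := by
  rw [K.gradient_phi]
  have ht' := K.mem_Ioo ht
  unfold X
  refine ((K.hasDerivAt_ctr t).add (HasDerivAt.fun_sum (u := Finset.univ) fun j _ =>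
    (((K.c.a_deriv j t ht').div_const (K.c.a j 0)).mul_const (inner ℝ (K.e j) (z - K.x0))).smul_const (K.e j))).congr_deriv ?_
  unfold grad
  congr 1
  refine Finset.sum_congr rfl fun j _ => ?_
  have := K.crd_X j z t
  unfold X at this
  rw [this]
  have hp := (K.c.a_pos j t ht').ne'
  congr 1
  field_simp

lemma X_surj {t : ℝ} (ht : t ∈ Icc (0:ℝ) 1) (x : EuclideanSpace ℝ (Fin d)) : ∃ z, K.X z t = x := by
  refine ⟨K.x0 + ∑ j, (K.c.a j 0 / K.c.a j t * K.crd j x t) • K.e j, ?_⟩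
  unfold X
  have : ∀ j, K.c.a j t / K.c.a j 0 * inner ℝ (K.e j) (K.x0 + ∑ j, (K.c.a j 0 / K.c.a j t * K.crd j x t) • K.e j - K.x0)
      = inner ℝ (K.e j) (x - K.ctr t) := by
    intro j
    have hp := (K.c.a_pos j t (K.mem_Ioo ht)).ne'
    have hp0 := (K.c.a_pos j 0 (K.mem_Ioo zero_mem)).ne'
    rw [add_sub_cancel_left]
    simp [inner_sum, inner_smul_right, OrthonormalBasis.inner_eq_ite]
    rw [crd]
    field_simp
  simp only [this]
  rw [K.e.sum_repr' (x - K.ctr t)]; abel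

lemma X_image {t : ℝ} (ht : t ∈ Icc (0:ℝ) 1) : (fun z => K.X z t) '' (K.dom 0) = K.dom t := by
  ext x
  constructor
  · rintro ⟨z, hz, rfl⟩
    change K.N t (K.X z t) < 1
    rw [K.N_X z ht]; exact hz
  · intro hx
    obtain ⟨z, rfl⟩ := K.X_surj ht x
    refine ⟨z, ?_, rfl⟩
    change K.N 0 z < 1
    rw [← K.N_X z ht]; exact hx

lemma smooth_crd (j : Fin d) : ContDiff ℝ (⊤ : ℕ∞) (fun q : EuclideanSpace ℝ (Fin d) × ℝ => K.crd j q.1 q.2) := by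
  unfold crd ctr
  apply ContDiff.inner ℝ contDiff_const
  fun_prop

lemma smooth_comp {f : ℝ → ℝ} (hf : ContDiffOn ℝ (⊤ : ℕ∞) f (Ioo (-K.c.τ) (1 + K.c.τ))) :
    ContDiffOn ℝ (⊤ : ℕ∞) (fun q : EuclideanSpace ℝ (Fin d) × ℝ => f q.2) (univ ×ˢ Ioo (-K.c.τ) (1 + K.c.τ)) :=
  hf.comp (contDiff_snd.contDiffOn) fun _ hq => hq.2

lemma smooth_phi : ContDiffOn ℝ (⊤ : ℕ∞) (fun q : EuclideanSpace ℝ (Fin d) × ℝ => K.phi q.1 q.2)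
    (univ ×ˢ Ioo (-K.c.τ) (1 + K.c.τ)) := by
  unfold phi
  refine ContDiffOn.sub (ContDiffOn.add (ContDiff.contDiffOn ?_) (contDiffOn_const.mul (ContDiffOn.sum fun j _ => ?_)))
    (contDiffOn_const.mul (K.smooth_comp K.c.B_smooth))
  · unfold ctr
    exact (ContDiff.inner ℝ contDiff_const (by fun_prop)).add (by fun_prop)
  · exact ((K.smooth_comp (K.c.a'_smooth j)).div (K.smooth_comp (K.c.a_smooth j))
      fun q hq => (K.c.a_pos j q.2 hq.2).ne').mul ((K.smooth_crd j).contDiffOn.pow 2)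

lemma smooth_pr : ContDiffOn ℝ (⊤ : ℕ∞) (fun q : EuclideanSpace ℝ (Fin d) × ℝ => K.pr q.1 q.2)
    (univ ×ˢ Ioo (-K.c.τ) (1 + K.c.τ)) := by
  unfold pr
  refine (contDiffOn_const.mul (K.smooth_comp K.c.β_smooth)).mul (contDiffOn_const.sub (ContDiffOn.sum fun j _ => ?_))
  exact ((K.smooth_crd j).contDiffOn.div (contDiffOn_const.mul (K.smooth_comp (K.c.a_smooth j)))
      fun q hq => (mul_pos K.ρ_pos (K.c.a_pos j q.2 hq.2)).ne').pow 2

lemma norm_sq_eq (e : OrthonormalBasis (Fin d) ℝ (EuclideanSpace ℝ (Fin d))) (x : EuclideanSpace ℝ (Fin d)) :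
    ‖x‖^2 = ∑ j, (inner ℝ (e j) x)^2 := by
  have := e.sum_sq_norm_inner_right x
  rw [← this]
  simp

lemma norm_le_of_mem {t : ℝ} (ht : t ∈ Icc (0:ℝ) 1) {b : ℝ} (hb : 0 ≤ b) (hab : ∀ j, K.c.a j t ≤ b)
    {x : EuclideanSpace ℝ (Fin d)} (hx : K.N t x ≤ 1) : ‖x - K.ctr t‖ ≤ K.ρ * b := by
  have hρ := K.ρ_pos
  apply abs_le_of_sq_le_sq' _ (by positivity) |>.2
  rw [norm_sq_eq K.e]
  calc ∑ j, (inner ℝ (K.e j) (x - K.ctr t))^2 ≤ ∑ j, (K.ρ * b)^2 * (K.crd j x t / (K.ρ * K.c.a j t))^2 := by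
        refine Finset.sum_le_sum fun j _ => ?_
        have hp := (K.c.a_pos j t (K.mem_Ioo ht))
        have e : inner ℝ (K.e j) (x - K.ctr t) = (K.ρ * K.c.a j t) * (K.crd j x t / (K.ρ * K.c.a j t)) := by
          rw [crd]; field_simp
        rw [e, mul_pow]
        have := hab j
        gcongr
    _ = (K.ρ * b)^2 * K.N t x := by rw [N, Finset.mul_sum]
    _ ≤ (K.ρ * b)^2 := by nlinarith [sq_nonneg (K.ρ * b)]

lemma isBounded_dom {t : ℝ} (ht : t ∈ Icc (0:ℝ) 1) : Bornology.IsBounded (K.dom t) := by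
  have h0 : ∀ j, 0 ≤ K.c.a j t := fun j => (K.c.a_pos j t (K.mem_Ioo ht)).le
  apply (Metric.isBounded_closedBall (x := K.ctr t) (r := K.ρ * ∑ j, K.c.a j t)).subset
  intro x hx
  rw [mem_closedBall_iff_norm]
  exact K.norm_le_of_mem ht (Finset.sum_nonneg fun j _ => h0 j)
    (fun j => Finset.single_le_sum (f := fun j => K.c.a j t) (fun j _ => h0 j) (Finset.mem_univ j)) (le_of_lt hx)

noncomputable def droplet : EulerDroplet d where
  Ω := K.dom
  X := K.X
  φ := K.phi
  p := K.pr
  isOpen_Ω t _ := K.isOpen_dom t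
  isBounded_Ω t ht := K.isBounded_dom ht
  smooth := by
    refine ⟨univ ×ˢ Ioo (-K.c.τ) (1 + K.c.τ), isOpen_univ.prod isOpen_Ioo, ?_, K.smooth_phi, K.smooth_pr⟩
    have h1 : closure (⋃ t ∈ Icc (0:ℝ) 1, (K.dom t) ×ˢ ({t} : Set ℝ)) ⊆ univ ×ˢ Icc (0:ℝ) 1 := by
      apply closure_minimal _ (isClosed_univ.prod isClosed_Icc)
      intro q hq
      simp only [mem_iUnion] at hq
      obtain ⟨t, ht, h1, h2⟩ := hq
      exact ⟨mem_univ _, by rw [mem_singleton_iff.mp h2]; exact ht⟩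
    exact h1.trans (prod_mono le_rfl fun t ht => K.mem_Ioo ht)
  flow_init z _ := K.X_zero z
  flow_deriv z _ t ht := K.X_deriv z ht
  flow_image t ht := K.X_image ht
  harmonic t ht x _ := K.harm x ht
  bernoulli t ht x _ := K.bern x ht
  pressure_bc t ht x hx := by
    have := frontier_lt_subset_eq (K.continuous_N t) continuous_const hx
    have h : ∑ j, (K.crd j x t / (K.ρ * K.c.a j t))^2 = 1 := this
    unfold pr
    rw [h]; ring

end Cell

noncomputable def emptyDroplet (d : ℕ) : EulerDroplet d where
  Ω := fun _ => ∅
  X := fun z _ => z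
  φ := fun _ _ => 0
  p := fun _ _ => 0
  isOpen_Ω _ _ := isOpen_empty
  isBounded_Ω _ _ := Bornology.isBounded_empty
  smooth := ⟨univ, isOpen_univ, subset_univ _, contDiffOn_const, contDiffOn_const⟩
  flow_init _ h := h.elim
  flow_deriv _ h := h.elim
  flow_image _ _ := image_empty _
  harmonic _ _ _ h := h.elim
  bernoulli _ _ _ h := h.elim
  pressure_bc _ _ _ h := by simp at h

end droplet
end Spray
end PartP4a

section PartP4b
open Set MeasureTheory Filter Topology
open scoped ENNReal

namespace Spray
section goodcell
variable {d : ℕ}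

structure GoodCell (ψ : EuclideanSpace ℝ (Fin d) → ℝ) (κ σ : ℝ) (K : Cell d) : Prop where
  cap : ∀ t ∈ Icc (0:ℝ) 1, ∀ z ∈ K.dom t, ∀ x y, SubG ψ x y → z = (1 - t + t * κ) • x + t • y → x ∈ K.dom 0
  near : ∀ x ∈ K.dom 0, ∀ y, SubG ψ x y → ∀ z ∈ K.dom 1, dist y z < σ
  spd : ∀ x ∈ K.dom 0, ∀ y, SubG ψ x y → ∀ t ∈ Icc (0:ℝ) 1, ∀ z ∈ K.dom t, ‖K.grad z t‖ ≤ ‖x - y‖ + σ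

lemma l2_bound {ι : Type*} [Fintype ι] {h f g : ι → ℝ} {p q s G : ℝ} (hp : 0 ≤ p) (hq : 0 ≤ q) (hs : 0 ≤ s) (hG : 0 ≤ G)
    (hj : ∀ j, |h j| ≤ p * |f j| + q * |g j|) (hf : ∑ j, (f j)^2 ≤ s^2) (hg : ∑ j, (g j)^2 ≤ G^2) :
    ∑ j, (h j)^2 ≤ (p * s + q * G)^2 := by
  have h1 : ∑ j, |f j| * |g j| ≤ s * G := by
    apply abs_le_of_sq_le_sq' _ (by positivity) |>.2
    calc (∑ j, |f j| * |g j|)^2 ≤ (∑ j, |f j|^2) * ∑ j, |g j|^2 := Finset.sum_mul_sq_le_sq_mul_sq _ _ _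
      _ ≤ s^2 * G^2 := by
        simp only [sq_abs]
        exact mul_le_mul hf hg (Finset.sum_nonneg fun j _ => sq_nonneg _) (sq_nonneg _)
      _ = (s * G)^2 := by ring
  calc ∑ j, (h j)^2 ≤ ∑ j, (p * |f j| + q * |g j|)^2 := by
        refine Finset.sum_le_sum fun j _ => ?_
        rw [← sq_abs (h j)]
        exact pow_le_pow_left₀ (abs_nonneg _) (hj j) 2
    _ = p^2 * ∑ j, (f j)^2 + 2 * (p * q) * ∑ j, |f j| * |g j| + q^2 * ∑ j, (g j)^2 := by
        rw [Finset.mul_sum, Finset.mul_sum, Finset.mul_sum, ← Finset.sum_add_distrib, ← Finset.sum_add_distrib]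
        refine Finset.sum_congr rfl fun j _ => ?_
        rw [← sq_abs (f j), ← sq_abs (g j)]; ring
    _ ≤ p^2 * s^2 + 2 * (p * q) * (s * G) + q^2 * G^2 := by gcongr
    _ = (p * s + q * G)^2 := by ring

set_option maxHeartbeats 2000000 in
theorem good_cells {ψ : EuclideanSpace ℝ (Fin d) → ℝ} {x0 : EuclideanSpace ℝ (Fin d)} {κ σ : ℝ}
    (h : GoodPt ψ x0) (hκ : 0 < κ) (hκ1 : κ ≤ 1) (hσ : 0 < σ) (hκσ : κ * ‖x0‖ ≤ σ / 4) :
    ∃ (e : OrthonormalBasis (Fin d) ℝ (EuclideanSpace ℝ (Fin d))) (c : EllCurve d)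
      (v : EuclideanSpace ℝ (Fin d)) (m M r0 : ℝ), 0 < m ∧ 0 < M ∧ 0 < r0 ∧ (∀ j, m ≤ c.a j 0 ∧ c.a j 0 ≤ M) ∧
      ∀ (ρ : ℝ) (hρ : 0 < ρ), ρ < r0 → GoodCell ψ κ σ ⟨e, c, x0, v, ρ, hρ⟩ := by
  obtain ⟨y0, e, l, A, hs0, hl, hprod, hA, hexp⟩ := h
  obtain ⟨c, hc⟩ := ellCurve_exists l hl hprod (half_pos hκ)
  have m0 : (0:ℝ) ∈ Ioo (-c.τ) (1 + c.τ) := ⟨by linarith [c.τ_pos], by linarith [c.τ_pos]⟩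
  have hIcc : ∀ t ∈ Icc (0:ℝ) 1, t ∈ Ioo (-c.τ) (1 + c.τ) := fun t ht =>
    ⟨by linarith [c.τ_pos, ht.1], by linarith [c.τ_pos, ht.2]⟩
  have hb : ∀ j, 0 < c.a j 0 := fun j => c.a_pos j 0 m0
  set M : ℝ := 1 + ∑ j, c.a j 0 * (2 + l j) with hM
  have hterm : ∀ j, 0 < c.a j 0 * (2 + l j) := fun j => by have := hb j; have := hl j; positivity
  have hM1 : 1 ≤ M := by
    have : 0 ≤ ∑ j, c.a j 0 * (2 + l j) := Finset.sum_nonneg fun j _ => (hterm j).le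
    linarith
  have hMj : ∀ j, c.a j 0 * (2 + l j) ≤ M := fun j => by
    have : c.a j 0 * (2 + l j) ≤ ∑ j, c.a j 0 * (2 + l j) :=
      Finset.single_le_sum (f := fun j => c.a j 0 * (2 + l j)) (fun j _ => (hterm j).le) (Finset.mem_univ j)
    linarith
  have hM0 : 0 < M := by linarith
  have haM : ∀ t ∈ Icc (0:ℝ) 1, ∀ j, c.a j t ≤ M := by
    intro t ht j
    refine (hc t ht j).trans ((mul_le_mul_of_nonneg_left ?_ (hb j).le).trans (hMj j))
    have := hl j
    nlinarith [ht.1, ht.2]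
  set I : ℝ := 1 + ∑ j, 1 / c.a j 0 with hI
  have hIj : ∀ j, 1 / c.a j 0 ≤ I := fun j => by
    have : 1 / c.a j 0 ≤ ∑ j, 1 / c.a j 0 :=
      Finset.single_le_sum (f := fun j => 1 / c.a j 0) (fun j _ => by have := hb j; positivity) (Finset.mem_univ j)
    linarith
  have hI1 : 1 ≤ I := by
    have : 0 ≤ ∑ j, 1 / c.a j 0 := Finset.sum_nonneg fun j _ => by have := hb j; positivity
    linarith
  have hI0 : 0 < I := by linarith
  set Lm : ℝ := 2 + ∑ j, l j with hLm
  have hLmj : ∀ j, l j + 2 ≤ Lm := fun j => by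
    have : l j ≤ ∑ j, l j := Finset.single_le_sum (f := fun j => l j) (fun j _ => (hl j).le) (Finset.mem_univ j)
    linarith
  have hLm2 : 2 ≤ Lm := by
    have : 0 ≤ ∑ j, l j := Finset.sum_nonneg fun j _ => (hl j).le
    linarith
  have hLm0 : 0 < Lm := by linarith
  set C : ℝ := κ / (2 * Lm) with hC
  have hC0 : 0 < C := by positivity
  have hC1 : C < 1 := by rw [hC, div_lt_one (by positivity)]; linarith
  -- velocity bound
  have hW' : ∀ j, ∃ W : ℝ, ∀ t ∈ Icc (0:ℝ) 1, |c.a' j t| ≤ W := by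
    intro j
    obtain ⟨W, hW⟩ := isCompact_Icc.exists_bound_of_continuousOn
      (((c.a'_smooth j).continuousOn).mono fun t (ht : t ∈ Icc (0:ℝ) 1) => hIcc t ht)
    exact ⟨W, hW⟩
  choose W' hW' using hW'
  set W : ℝ := ∑ j, W' j with hW
  have hW'0 : ∀ j, 0 ≤ W' j := fun j => (abs_nonneg _).trans (hW' j 0 ⟨le_rfl, zero_le_one⟩)
  have hW0 : 0 ≤ W := Finset.sum_nonneg fun j _ => hW'0 j
  set η : ℝ := C * κ / (I * (M / κ)) with hη
  have hη0 : 0 < η := by positivity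
  obtain ⟨r1, hr1, hx1⟩ := hexp 1 one_pos
  obtain ⟨r2, hr2, hx2⟩ := hexp η hη0
  set G : ℝ := (‖A‖ + 2) * M + W + 1 with hG
  have hG0 : 0 < G := by positivity
  have hm : 0 < 1 / I := by positivity
  refine ⟨e, c, y0 + κ • x0 - x0, 1 / I, M, min (r1 / M) (min (r2 * κ / M) (σ / (2 * G))), hm, hM0, ?_, ?_, ?_⟩
  · positivity
  · intro j
    refine ⟨?_, haM 0 ⟨le_rfl, zero_le_one⟩ j⟩
    rw [div_le_iff₀ hI0, mul_comm, ← div_le_iff₀ (hb j)]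
    exact hIj j
  intro ρ hρ hρr
  rw [lt_min_iff, lt_min_iff] at hρr
  obtain ⟨hρ1, hρ2, hρ3⟩ := hρr
  rw [lt_div_iff₀ hM0] at hρ1 hρ2
  rw [lt_div_iff₀ (by positivity)] at hρ3
  set K : Cell d := ⟨e, c, x0, y0 + κ • x0 - x0, ρ, hρ⟩ with hK
  have hctr : ∀ t, K.ctr t = (1 - t + t * κ) • x0 + t • y0 := by
    intro t
    simp only [Cell.ctr, hK]
    module
  have hdom0 : ∀ x ∈ K.dom 0, ‖x - x0‖ ≤ ρ * M := by
    intro x hx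
    have := K.norm_le_of_mem ⟨le_rfl, zero_le_one⟩ hM0.le (fun j => haM 0 ⟨le_rfl, zero_le_one⟩ j) (le_of_lt hx)
    rwa [K.ctr_zero] at this
  have hdomt : ∀ t ∈ Icc (0:ℝ) 1, ∀ z ∈ K.dom t, ‖z - K.ctr t‖ ≤ ρ * M := fun t ht z hz =>
    K.norm_le_of_mem ht hM0.le (fun j => haM t ht j) (le_of_lt hz)
  have hyb : ∀ x ∈ K.dom 0, ∀ y, SubG ψ x y → ‖y - y0‖ ≤ (‖A‖ + 1) * (ρ * M) := by
    intro x hx y hy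
    have h1 := hdom0 x hx
    have h2 := hx1 x y hy (h1.trans hρ1.le)
    have h3 : ‖y - y0‖ ≤ ‖y - y0 - A (x - x0)‖ + ‖A (x - x0)‖ := by
      have := norm_add_le (y - y0 - A (x - x0)) (A (x - x0))
      rwa [sub_add_cancel] at this
    have h4 := A.le_opNorm (x - x0)
    have h5 : (‖A‖ + 1) * ‖x - x0‖ ≤ (‖A‖ + 1) * (ρ * M) := by gcongr
    linarith
  have hGρ : (‖A‖ + 2) * (ρ * M) + W * ρ < σ / 2 := by
    have : ρ * G = (‖A‖ + 2) * (ρ * M) + W * ρ + ρ := by rw [hG]; ring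
    linarith
  constructor
  · intro t ht z hz x y hxy hzx
    have hmκ : κ ≤ 1 - t + t * κ := by nlinarith [ht.1, ht.2]
    have hm0 : 0 < 1 - t + t * κ := by linarith
    have h1 : (1 - t + t * κ) * ‖x - x0‖ ≤ ρ * M := by
      have := prox_lip' hm0 ht.1 hxy hs0
      rw [← hzx, ← hctr] at this
      exact this.trans (hdomt t ht z hz)
    have h2 : ‖x - x0‖ ≤ ρ * (M / κ) := by
      rw [← mul_div_assoc, le_div_iff₀ hκ]
      nlinarith [norm_nonneg (x - x0)]
    have hr2' : ‖x - x0‖ ≤ r2 := by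
      refine h2.trans ?_
      rw [← mul_div_assoc, div_le_iff₀ hκ]
      exact hρ2.le
    have herr := hx2 x y hxy hr2'
    set err := y - y0 - A (x - x0) with herrdef
    have herr' : ‖err‖ ≤ η * (ρ * (M / κ)) := herr.trans (by gcongr)
    have hcrd : ∀ j, K.crd j z t = (1 - t + t * (l j + κ)) * inner ℝ (e j) (x - x0) + t * inner ℝ (e j) err := by
      intro j
      have e1 : z - K.ctr t = (1 - t + t * κ) • (x - x0) + t • (err + A (x - x0)) := by
        rw [hctr, hzx, herrdef]; module
      unfold Cell.crd
      rw [e1]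
      simp only [inner_add_right, inner_smul_right]
      rw [hA]
      ring
    change K.N 0 x < 1
    set s : ℝ := Real.sqrt (K.N t z) with hs
    have hN0 : 0 ≤ K.N t z := Finset.sum_nonneg fun j _ => sq_nonneg _
    have hs0 : 0 ≤ s := Real.sqrt_nonneg _
    have hs1 : s < 1 := by
      rw [hs, Real.sqrt_lt' one_pos, one_pow]; exact hz
    have hss : K.N t z = s^2 := (Real.sq_sqrt hN0).symm
    have htC : t * C < 1 := by nlinarith [ht.1, ht.2]
    have hj : ∀ j, |K.crd j x 0 / (ρ * c.a j 0)| ≤ (1 - t * C) * |K.crd j z t / (ρ * c.a j t)| +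
        (t * (I / (ρ * κ))) * |inner ℝ (e j) err| := by
      intro j
      have hbj := hb j
      have hat := c.a_pos j t (hIcc t ht)
      have hlj := hl j
      set D : ℝ := 1 - t + t * (l j + κ) with hD
      have hDκ : κ ≤ D := by
        have := mul_nonneg (sub_nonneg.mpr ht.2) (sub_nonneg.mpr hκ1)
        have := mul_nonneg ht.1 hlj.le
        rw [hD]; linarith
      have hD0 : 0 < D := by linarith
      have hDL : D ≤ Lm := by
        have := hLmj j
        have := mul_nonneg (sub_nonneg.mpr ht.2) hlj.le
        have := mul_nonneg ht.1 (sub_nonneg.mpr hκ1)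
        rw [hD]; linarith [ht.2]
      have e1 : K.crd j x 0 / (ρ * c.a j 0) = (c.a j t / (c.a j 0 * D)) * (K.crd j z t / (ρ * c.a j t))
          - t * (1 / (ρ * c.a j 0 * D)) * inner ℝ (e j) err := by
        rw [hcrd j]
        have : K.crd j x 0 = inner ℝ (e j) (x - x0) := by rw [Cell.crd, K.ctr_zero]
        rw [this]
        field_simp
        ring
      rw [e1]
      have e2 : c.a j t / (c.a j 0 * D) ≤ 1 - t * C := by
        rw [div_le_iff₀ (by positivity)]
        have h3 := hc t ht j
        have h4 : C * D ≤ κ / 2 := by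
          calc C * D ≤ C * Lm := by gcongr
            _ = κ / 2 := by rw [hC]; field_simp
        have h5 : 1 - t + t * (l j + κ / 2) ≤ (1 - t * C) * D := by
          have : t * (C * D) ≤ t * (κ / 2) := mul_le_mul_of_nonneg_left h4 ht.1
          rw [hD] at this ⊢; nlinarith
        calc c.a j t ≤ c.a j 0 * (1 - t + t * (l j + κ / 2)) := h3
          _ ≤ c.a j 0 * ((1 - t * C) * D) := by gcongr
          _ = _ := by ring
      have e3 : 1 / (ρ * c.a j 0 * D) ≤ I / (ρ * κ) := by
        have h6 := hIj j
        calc 1 / (ρ * c.a j 0 * D) = (1 / c.a j 0) * (1 / (ρ * D)) := by field_simp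
          _ ≤ I * (1 / (ρ * κ)) := by gcongr
          _ = _ := by ring
      refine (abs_sub _ _).trans (add_le_add ?_ ?_)
      · rw [abs_mul, abs_of_pos (by positivity)]
        exact mul_le_mul_of_nonneg_right e2 (abs_nonneg _)
      · rw [abs_mul, abs_of_nonneg (mul_nonneg ht.1 (by positivity))]
        exact mul_le_mul_of_nonneg_right (mul_le_mul_of_nonneg_left e3 ht.1) (abs_nonneg _)
    have hfin := l2_bound (h := fun j => K.crd j x 0 / (ρ * c.a j 0)) (f := fun j => K.crd j z t / (ρ * c.a j t))
      (g := fun j => inner ℝ (e j) err) (p := 1 - t * C) (q := t * (I / (ρ * κ))) (s := s) (G := η * (ρ * (M / κ)))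
      (by linarith) (mul_nonneg ht.1 (by positivity)) hs0 (by positivity) hj hss.le
      (by rw [← Cell.norm_sq_eq]; exact pow_le_pow_left₀ (norm_nonneg _) herr' 2)
    have hlast : (1 - t * C) * s + t * (I / (ρ * κ)) * (η * (ρ * (M / κ))) < 1 := by
      have : t * (I / (ρ * κ)) * (η * (ρ * (M / κ))) = t * C := by
        rw [hη]; field_simp
      rw [this]
      nlinarith
    have hge : 0 ≤ (1 - t * C) * s + t * (I / (ρ * κ)) * (η * (ρ * (M / κ))) := by
      have h1 : 0 ≤ 1 - t * C := by linarith
      have h2 := ht.1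
      positivity
    calc K.N 0 x ≤ _ := hfin
      _ < 1 := by nlinarith
  · intro x hx y hy z hz
    have h1 := hyb x hx y hy
    have h2 := hdomt 1 ⟨zero_le_one, le_rfl⟩ z hz
    have h3 : K.ctr 1 = κ • x0 + y0 := by rw [hctr]; module
    rw [h3] at h2
    rw [dist_eq_norm]
    have h4 : y - z = (y - y0) - (z - (κ • x0 + y0)) - κ • x0 := by abel
    have h5 : ‖y - z‖ ≤ ‖y - y0‖ + ‖z - (κ • x0 + y0)‖ + ‖κ • x0‖ := by
      rw [h4]
      exact (norm_sub_le _ _).trans (by gcongr; exact norm_sub_le _ _)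
    rw [norm_smul, Real.norm_of_nonneg hκ.le] at h5
    nlinarith
  · intro x hx y hy t ht z hz
    have h1 := hyb x hx y hy
    have h2 := hdom0 x hx
    have h3 : ‖K.grad z t‖ ≤ ‖K.v‖ + W * ρ := by
      unfold Cell.grad
      refine (norm_add_le _ _).trans (add_le_add le_rfl ?_)
      refine (norm_sum_le _ _).trans ?_
      rw [hW, Finset.sum_mul]
      refine Finset.sum_le_sum fun j _ => ?_
      have hat := c.a_pos j t (hIcc t ht)
      rw [norm_smul, OrthonormalBasis.norm_eq_one, mul_one, Real.norm_eq_abs]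
      change |c.a' j t / c.a j t * K.crd j z t| ≤ _
      have h4 : |K.crd j z t| ≤ ρ * c.a j t := by
        have h5 : (K.crd j z t / (ρ * c.a j t))^2 ≤ 1 := by
          refine le_trans ?_ (le_of_lt hz)
          exact Finset.single_le_sum (f := fun j => (K.crd j z t / (ρ * c.a j t))^2) (fun j _ => sq_nonneg _) (Finset.mem_univ j)
        rw [sq_le_one_iff_abs_le_one, abs_div, abs_of_pos (by positivity : 0 < ρ * c.a j t), div_le_one (by positivity)] at h5
        exact h5
      rw [abs_mul, abs_div, abs_of_pos hat]
      calc |c.a' j t| / c.a j t * |K.crd j z t| ≤ |c.a' j t| / c.a j t * (ρ * c.a j t) := by gcongr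
        _ = |c.a' j t| * ρ := by field_simp
        _ ≤ W' j * ρ := by have := hW' j t ht; gcongr
    have h4 : K.v = (y - x) - (y - y0) + (x - x0) + κ • x0 := by
      change y0 + κ • x0 - x0 = _
      abel
    have h5 : ‖K.v‖ ≤ ‖x - y‖ + ‖y - y0‖ + ‖x - x0‖ + ‖κ • x0‖ := by
      rw [h4, norm_sub_rev x y]
      refine (norm_add_le _ _).trans (add_le_add ((norm_add_le _ _).trans (add_le_add (norm_sub_le _ _) le_rfl)) le_rfl)
    rw [norm_smul, Real.norm_of_nonneg hκ.le] at h5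
    nlinarith

end goodcell
end Spray
end PartP4b

section PartP4c
open Set MeasureTheory Filter Topology
open scoped ENNReal

namespace Spray
section gooddrop
variable {d : ℕ}

structure GoodDroplet (ψ : EuclideanSpace ℝ (Fin d) → ℝ) (κ σ : ℝ) (D : EulerDroplet d) : Prop where
  cap : ∀ t ∈ Icc (0:ℝ) 1, ∀ z ∈ D.Ω t, ∀ x y, SubG ψ x y → z = (1 - t + t * κ) • x + t • y → x ∈ D.Ω 0
  near : ∀ x ∈ D.Ω 0, ∀ y, SubG ψ x y → ∀ z ∈ D.Ω 1, dist y z < σ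
  spd : ∀ x ∈ D.Ω 0, ∀ y, SubG ψ x y → ∀ t ∈ Icc (0:ℝ) 1, ∀ z ∈ D.Ω t,
    ‖gradient (fun y => D.φ y t) z‖ ≤ ‖x - y‖ + σ
  vol : ∀ t ∈ Icc (0:ℝ) 1, volume (D.Ω t) = volume (D.Ω 0)

lemma goodDroplet_empty (ψ : EuclideanSpace ℝ (Fin d) → ℝ) (κ σ : ℝ) : GoodDroplet ψ κ σ (emptyDroplet d) where
  cap _ _ _ h := h.elim
  near _ h := h.elim
  spd _ h := h.elim
  vol _ _ := rfl

lemma Cell.volume_dom (K : Cell d) {t : ℝ} (ht : t ∈ Icc (0:ℝ) 1) : volume (K.dom t) = volume (K.dom 0) := by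
  set r : Fin d → ℝ := fun j => K.c.a j t / K.c.a j 0 with hr
  set Lm := Matrix.toLin K.e.toBasis K.e.toBasis (Matrix.diagonal r) with hLm
  have hL : ∀ z, Lm z = ∑ j, (r j * inner ℝ (K.e j) z) • K.e j := by
    intro z
    rw [hLm, Matrix.toLin_apply]
    refine Finset.sum_congr rfl fun j _ => ?_
    rw [Matrix.mulVec_diagonal]
    simp [OrthonormalBasis.repr_apply_apply]
  have hdet : LinearMap.det Lm = 1 := by
    rw [hLm, LinearMap.det_toLin, Matrix.det_diagonal, hr, Finset.prod_div_distrib, K.c.prod_eq t (K.mem_Ioo ht)]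
    apply div_self
    exact (Finset.prod_pos fun j _ => K.c.a_pos j 0 (K.mem_Ioo Cell.zero_mem)).ne'
  have himg : K.dom t = (fun w => K.ctr t + w) '' (Lm '' ((fun w => -K.x0 + w) '' K.dom 0)) := by
    rw [← K.X_image ht, image_image, image_image]
    refine image_congr fun z _ => ?_
    rw [hL, Cell.X]
    simp only [hr]
    rw [neg_add_eq_sub]
  rw [himg]
  simp only [image_add_left]
  rw [measure_preimage_add, Measure.addHaar_image_linearMap, hdet]
  simp only [abs_one, ENNReal.ofReal_one, one_mul]
  rw [measure_preimage_add]

lemma GoodCell.goodDroplet {ψ : EuclideanSpace ℝ (Fin d) → ℝ} {κ σ : ℝ} {K : Cell d} (h : GoodCell ψ κ σ K) :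
    GoodDroplet ψ κ σ K.droplet where
  cap := h.cap
  near := h.near
  spd x hx y hy t ht z hz := by
    have := h.spd x hx y hy t ht z hz
    rw [← K.gradient_phi] at this
    exact this
  vol t ht := K.volume_dom ht

lemma Cell.convex_dom (K : Cell d) : Convex ℝ (K.dom 0) := by
  intro x hx y hy a b ha hb hab
  change K.N 0 _ < 1
  have hx' : K.N 0 x < 1 := hx
  have hy' : K.N 0 y < 1 := hy
  have h1 : K.N 0 (a • x + b • y) ≤ a * K.N 0 x + b * K.N 0 y := by
    unfold N
    rw [Finset.mul_sum, Finset.mul_sum, ← Finset.sum_add_distrib]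
    refine Finset.sum_le_sum fun j _ => ?_
    have e1 : K.crd j (a • x + b • y) 0 = a * K.crd j x 0 + b * K.crd j y 0 := by
      unfold crd
      have : a • x + b • y - K.ctr 0 = a • (x - K.ctr 0) + b • (y - K.ctr 0) := by
        have : K.ctr 0 = (a + b) • K.ctr 0 := by rw [hab, one_smul]
        nth_rw 1 [this]; module
      rw [this, inner_add_right, inner_smul_right, inner_smul_right]
    rw [e1, add_div, mul_div_assoc, mul_div_assoc]
    set u := K.crd j x 0 / (K.ρ * K.c.a j 0)
    set w := K.crd j y 0 / (K.ρ * K.c.a j 0)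
    have hb' : b = 1 - a := by linarith
    subst hb'
    nlinarith [mul_nonneg (mul_nonneg ha hb) (sq_nonneg (u - w))]
  rcases ha.eq_or_lt with h | h
  · subst h
    have : b = 1 := by linarith
    subst this
    linarith
  · nlinarith

lemma Cell.ball_subset (K : Cell d) {m : ℝ} (hm : 0 < m) (h : ∀ j, m ≤ K.c.a j 0) :
    Metric.ball K.x0 (K.ρ * m) ⊆ K.dom 0 := by
  intro x hx
  rw [mem_ball_iff_norm] at hx
  change K.N 0 x < 1
  have hρ := K.ρ_pos
  calc K.N 0 x ≤ ∑ j, (inner ℝ (K.e j) (x - K.x0))^2 / (K.ρ * m)^2 := by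
        unfold N
        refine Finset.sum_le_sum fun j _ => ?_
        rw [div_pow, crd, K.ctr_zero]
        have := h j
        gcongr
    _ = ‖x - K.x0‖^2 / (K.ρ * m)^2 := by rw [← Finset.sum_div, ← norm_sq_eq]
    _ < 1 := by
        rw [div_lt_one (by positivity)]
        exact pow_lt_pow_left₀ hx (norm_nonneg _) two_ne_zero

lemma Cell.closure_subset (K : Cell d) {M : ℝ} (hM : 0 ≤ M) (h : ∀ j, K.c.a j 0 ≤ M) :
    closure (K.dom 0) ⊆ Metric.closedBall K.x0 (K.ρ * M) := by
  apply closure_minimal _ Metric.isClosed_closedBall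
  intro x hx
  have := K.norm_le_of_mem zero_mem hM h (le_of_lt hx)
  rw [K.ctr_zero] at this
  rwa [mem_closedBall_iff_norm]

lemma vol_closedBall_le (x : EuclideanSpace ℝ (Fin d)) {ρ m M : ℝ} (hρ : 0 < ρ) (hm : 0 < m) (hM : 0 < M) :
    volume (Metric.closedBall x (3 * (ρ * M))) ≤ ENNReal.ofReal ((3 * M / m)^d) * volume (Metric.ball x (ρ * m)) := by
  have e1 : 3 * (ρ * M) = 3 * M / m * (ρ * m) := by field_simp
  rw [Measure.addHaar_closedBall _ _ (by positivity), Measure.addHaar_ball_of_pos volume x (mul_pos hρ hm)]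
  rw [e1, mul_pow, ENNReal.ofReal_mul (by positivity)]
  simp only [finrank_euclideanSpace, Fintype.card_fin]
  rw [mul_assoc]

end gooddrop
end Spray
end PartP4c

section PartP4d
open Set MeasureTheory Filter Topology
open scoped ENNReal

namespace Spray
section exhaust

lemma finite_sub {α ι : Type*} [MeasurableSpace α] {μ : Measure α} {U0 s : Set α} (hU : μ U0 ≠ ∞) {B : ι → Set α}
    {u : Set ι} (hu : u.Countable) (hd : u.PairwiseDisjoint B) (hm : ∀ a ∈ u, MeasurableSet (B a))
    (hsub : ∀ a ∈ u, B a ⊆ U0) (h0 : μ (s \ ⋃ a ∈ u, B a) = 0) {δ : ℝ≥0∞} (hδ : 0 < δ) :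
    ∃ w : Finset ι, ↑w ⊆ u ∧ μ (s \ ⋃ a ∈ w, B a) ≤ δ := by
  classical
  have : Countable u := hu.to_subtype
  have hsum : ∑' a : u, μ (B a) ≠ ∞ := by
    have : μ (⋃ a : u, B a) = ∑' a : u, μ (B a) :=
      measure_iUnion (fun a b hab => hd a.2 b.2 (fun h => hab (Subtype.ext h))) (fun a => hm a a.2)
    rw [← this]
    exact ((measure_mono (iUnion_subset fun a : u => hsub a.1 a.2)).trans_lt hU.lt_top).ne
  have ht := ENNReal.tendsto_tsum_compl_atTop_zero hsum
  obtain ⟨w, hw⟩ := (ht.eventually (ge_mem_nhds hδ)).exists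
  refine ⟨w.image Subtype.val, ?_, ?_⟩
  · intro a ha
    simp only [Finset.coe_image, mem_image] at ha
    obtain ⟨b, _, rfl⟩ := ha
    exact b.2
  · have hcov : s \ ⋃ a ∈ w.image Subtype.val, B a ⊆ (s \ ⋃ a ∈ u, B a) ∪ ⋃ a : {a : u // a ∉ w}, B a := by
      rintro x ⟨hx, hx'⟩
      by_cases h : x ∈ ⋃ a ∈ u, B a
      · right
        simp only [mem_iUnion] at h
        obtain ⟨a, ha, hxa⟩ := h
        refine mem_iUnion.mpr ⟨⟨⟨a, ha⟩, fun hw' => hx' ?_⟩, hxa⟩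
        simp only [mem_iUnion]
        exact ⟨a, Finset.mem_image.mpr ⟨⟨a, ha⟩, hw', rfl⟩, hxa⟩
      · exact Or.inl ⟨hx, h⟩
    calc _ ≤ μ ((s \ ⋃ a ∈ u, B a) ∪ ⋃ a : {a : u // a ∉ w}, B a) := measure_mono hcov
      _ ≤ μ (s \ ⋃ a ∈ u, B a) + μ (⋃ a : {a : u // a ∉ w}, B a) := measure_union_le _ _
      _ ≤ 0 + ∑' a : {a : u // a ∉ w}, μ (B a) := add_le_add h0.le (measure_iUnion_le _)
      _ ≤ δ := by rw [zero_add]; exact hw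

theorem vitali_exhaust {α ι : Type*} [MetricSpace α] [MeasurableSpace α] [OpensMeasurableSpace α]
    [SecondCountableTopology α] (μ : Measure α) [IsLocallyFiniteMeasure μ] {U0 : Set α} (hU0 : IsOpen U0)
    (hμ : μ U0 ≠ ∞) (S : ℕ → Set α) (hS : Monotone S) (t : ℕ → Set ι) (C : ℕ → NNReal) (r : ι → ℝ) (c : ι → α)
    (B : ι → Set α) (hB : ∀ n, ∀ a ∈ t n, B a ⊆ Metric.closedBall (c a) (r a))
    (μB : ∀ n, ∀ a ∈ t n, μ (Metric.closedBall (c a) (3 * r a)) ≤ C n * μ (B a))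
    (ht : ∀ n, ∀ a ∈ t n, (interior (B a)).Nonempty) (h't : ∀ n, ∀ a ∈ t n, IsClosed (B a))
    (hf : ∀ n, ∀ x ∈ S n, ∀ ε > (0 : ℝ), ∃ a ∈ t n, r a ≤ ε ∧ c a = x) :
    ∃ u : Set ι, u ⊆ ⋃ n, t n ∧ u.Countable ∧ u.PairwiseDisjoint B ∧ (∀ a ∈ u, B a ⊆ U0) ∧
      μ ((U0 ∩ ⋃ n, S n) \ ⋃ a ∈ u, B a) = 0 := by
  classical
  let P : Finset ι → Prop := fun v => (v : Set ι).PairwiseDisjoint B ∧ ∀ a ∈ v, B a ⊆ U0 ∧ a ∈ ⋃ n, t n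
  have step : ∀ n : ℕ, ∀ v : {v // P v}, ∃ v' : {v // P v}, v.1 ⊆ v'.1 ∧ μ ((U0 ∩ S n) \ ⋃ a ∈ v'.1, B a) ≤ (2:ℝ≥0∞)⁻¹^n := by
    rintro n ⟨v, hvd, hv⟩
    have hcl : IsClosed (⋃ a ∈ v, B a) := by
      apply isClosed_biUnion_finset
      intro a ha
      obtain ⟨k, hk⟩ := mem_iUnion.mp (hv a ha).2
      exact h't k a hk
    set U := U0 \ ⋃ a ∈ v, B a with hU
    have hUo : IsOpen U := hU0.sdiff hcl
    obtain ⟨u, hut, huc, hud, hu0⟩ := Vitali.exists_disjoint_covering_ae μ (U ∩ S n) {a ∈ t n | B a ⊆ U} (C n) r c B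
      (fun a ha => hB n a ha.1) (fun a ha => μB n a ha.1) (fun a ha => ht n a ha.1) (fun a ha => h't n a ha.1) (by
        rintro x ⟨hxU, hxS⟩ ε hε
        obtain ⟨ε', hε', hball⟩ := Metric.isOpen_iff.mp hUo x hxU
        obtain ⟨a, ha, hra, hca⟩ := hf n x hxS (min ε (ε' / 2)) (lt_min hε (half_pos hε'))
        refine ⟨a, ⟨ha, ?_⟩, hra.trans (min_le_left _ _), hca⟩
        refine (hB n a ha).trans (Subset.trans ?_ hball)
        rw [hca]
        exact Metric.closedBall_subset_ball ((hra.trans (min_le_right _ _)).trans_lt (half_lt_self hε')))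
    obtain ⟨w, hwu, hw⟩ := finite_sub hμ huc hud (fun a ha => (h't n a (hut ha).1).measurableSet)
      (fun a ha => (hut ha).2.trans sdiff_subset) hu0 (δ := (2:ℝ≥0∞)⁻¹^n) (by
        apply ENNReal.pow_pos; simp)
    have hdisj : ∀ a ∈ v, ∀ b ∈ w, Disjoint (B a) (B b) := by
      intro a ha b hb
      have h1 := (hut (hwu hb)).2
      refine (disjoint_of_subset_left h1 ?_).symm
      apply disjoint_sdiff_left.mono_right
      exact subset_biUnion_of_mem (u := fun a => B a) (Finset.mem_coe.mpr ha)
    refine ⟨⟨v ∪ w, ?_, ?_⟩, Finset.subset_union_left, ?_⟩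
    · rw [Finset.coe_union, pairwiseDisjoint_union]
      exact ⟨hvd, hud.subset hwu, fun a ha b hb _ => hdisj a ha b hb⟩
    · intro a ha
      rcases Finset.mem_union.mp ha with h | h
      · exact hv a h
      · exact ⟨(hut (hwu h)).2.trans sdiff_subset, mem_iUnion.mpr ⟨n, (hut (hwu h)).1⟩⟩
    · refine (measure_mono ?_).trans hw
      rintro x ⟨⟨hx0, hxS⟩, hx⟩
      simp only [mem_iUnion, Finset.mem_union, not_exists] at hx
      refine ⟨⟨⟨hx0, ?_⟩, hxS⟩, ?_⟩
      · simp only [mem_iUnion, not_exists]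
        exact fun a ha => hx a (Or.inl ha)
      · simp only [mem_iUnion, not_exists]
        exact fun a ha => hx a (Or.inr ha)
  choose F hF1 hF2 using step
  let v : ℕ → {v // P v} := fun n => Nat.rec ⟨∅, by simp [P]⟩ (fun n w => F n w) n
  have hv : ∀ n, v (n + 1) = F n (v n) := fun n => rfl
  have hmono : Monotone fun n => (v n).1 := monotone_nat_of_le_succ fun n => by
    rw [hv]; exact hF1 n (v n)
  refine ⟨⋃ n, ((v n).1 : Set ι), ?_, ?_, ?_, ?_, ?_⟩
  · refine iUnion_subset fun n a ha => ((v n).2.2 a ha).2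
  · exact countable_iUnion fun n => (v n).1.countable_toSet
  · intro a ha b hb hab
    obtain ⟨n, hn⟩ := mem_iUnion.mp ha
    obtain ⟨m, hm⟩ := mem_iUnion.mp hb
    exact (v (max n m)).2.1 (hmono (le_max_left n m) hn) (hmono (le_max_right n m) hm) hab
  · intro a ha
    obtain ⟨n, hn⟩ := mem_iUnion.mp ha
    exact ((v n).2.2 a hn).1
  · rw [inter_iUnion, iUnion_sdiff]
    apply measure_iUnion_null
    intro k
    have hle : ∀ n, k ≤ n → μ ((U0 ∩ S k) \ ⋃ a ∈ ⋃ n, ((v n).1 : Set ι), B a) ≤ (2:ℝ≥0∞)⁻¹^n := by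
      intro n hn
      refine (measure_mono ?_).trans (hF2 n (v n))
      rintro x ⟨⟨hx0, hxS⟩, hx⟩
      refine ⟨⟨hx0, hS hn hxS⟩, fun hx' => hx ?_⟩
      simp only [mem_iUnion] at hx' ⊢
      obtain ⟨a, ha, hxa⟩ := hx'
      exact ⟨a, ⟨n + 1, ha⟩, hxa⟩
    have hlim : Tendsto (fun n : ℕ => (2:ℝ≥0∞)⁻¹^n) atTop (𝓝 0) :=
      ENNReal.tendsto_pow_atTop_nhds_zero_of_lt_one (by
        rw [ENNReal.inv_lt_one]; exact ENNReal.one_lt_two)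
    exact le_antisymm (ge_of_tendsto hlim ((eventually_ge_atTop k).mono hle)) zero_le

end exhaust

section family
variable {d : ℕ}

theorem droplets_exist {ψ : EuclideanSpace ℝ (Fin d) → ℝ} {Ω₀ : Set (EuclideanSpace ℝ (Fin d))} (ho : IsOpen Ω₀)
    (hfin : volume Ω₀ ≠ ∞) (hg : ∀ᵐ x, x ∈ Ω₀ → GoodPt ψ x) {κ σ R : ℝ} (hκ : 0 < κ) (hκ1 : κ ≤ 1) (hσ : 0 < σ)
    (hκσ : κ * R ≤ σ / 4) (hR : ∀ x ∈ Ω₀, ‖x‖ ≤ R) :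
    ∃ D : ℕ → EulerDroplet d, (∀ n, GoodDroplet ψ κ σ (D n)) ∧
      (Pairwise fun m n => Disjoint ((D m).Ω 0) ((D n).Ω 0)) ∧ (⋃ n, (D n).Ω 0) ⊆ Ω₀ ∧
      volume (Ω₀ \ ⋃ n, (D n).Ω 0) = 0 := by
  classical
  let good : Set (EuclideanSpace ℝ (Fin d)) := {x | x ∈ Ω₀ ∧ GoodPt ψ x}
  have hex : ∀ x : good, _ := fun x => good_cells x.2.2 hκ hκ1 hσ
    ((mul_le_mul_of_nonneg_left (hR x x.2.1) hκ.le).trans hκσ)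
  choose e c v m M r0 hm hM hr0 hmM hgood using hex
  let ι := {q : good × ℝ // 0 < q.2 ∧ q.2 < r0 q.1}
  let K : ι → Cell d := fun q => ⟨e q.1.1, c q.1.1, q.1.1.1, v q.1.1, q.1.2, q.2.1⟩
  have hK : ∀ q, GoodCell ψ κ σ (K q) := fun q => hgood q.1.1 q.1.2 q.2.1 q.2.2
  let cst : good → ℝ := fun x => (3 * M x / m x)^d
  let S : ℕ → Set (EuclideanSpace ℝ (Fin d)) := fun n => {x | ∃ h : x ∈ good, cst ⟨x, h⟩ ≤ n}
  let t : ℕ → Set ι := fun n => {q | cst q.1.1 ≤ n}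
  obtain ⟨u, -, huc, hud, huU, hu0⟩ := vitali_exhaust (volume : Measure (EuclideanSpace ℝ (Fin d))) ho hfin S
    (by
      intro k n hkn x hx
      obtain ⟨h, hx⟩ := hx
      exact ⟨h, hx.trans (Nat.cast_le.mpr hkn)⟩)
    t (fun n => (n : NNReal)) (fun q => q.1.2 * M q.1.1) (fun q => q.1.1.1) (fun q => closure ((K q).dom 0))
    (fun n q _ => (K q).closure_subset (hM q.1.1).le fun j => (hmM q.1.1 j).2)
    (by
      intro n q hq
      refine (vol_closedBall_le _ q.2.1 (hm q.1.1) (hM q.1.1)).trans ?_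
      refine mul_le_mul' ?_ (measure_mono (((K q).ball_subset (hm q.1.1) fun j => (hmM q.1.1 j).1).trans subset_closure))
      have hq' : (3 * M q.1.1 / m q.1.1)^d ≤ (n:ℝ) := hq
      calc ENNReal.ofReal ((3 * M q.1.1 / m q.1.1)^d) ≤ ENNReal.ofReal n := ENNReal.ofReal_le_ofReal hq'
        _ = _ := by simp)
    (by
      intro n q _
      refine ⟨q.1.1.1, ?_⟩
      apply (interior_mono (((K q).ball_subset (hm q.1.1) fun j => (hmM q.1.1 j).1).trans subset_closure))
      rw [Metric.isOpen_ball.interior_eq]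
      exact Metric.mem_ball_self (mul_pos q.2.1 (hm q.1.1)))
    (fun n q _ => isClosed_closure)
    (by
      rintro n x ⟨h, hx⟩ ε hε
      set ρ := min (r0 ⟨x, h⟩ / 2) (ε / M ⟨x, h⟩)
      have hM' := hM ⟨x, h⟩
      have hr0' := hr0 ⟨x, h⟩
      refine ⟨⟨(⟨x, h⟩, ρ), lt_min (half_pos hr0') (div_pos hε hM'), (min_le_left _ _).trans_lt (half_lt_self hr0')⟩, hx, ?_, rfl⟩
      change ρ * M ⟨x, h⟩ ≤ ε
      rw [← le_div_iff₀ hM']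
      exact min_le_right _ _)
  have : Countable u := huc.to_subtype
  have : Encodable u := Encodable.ofCountable u
  let D : ℕ → EulerDroplet d := fun n => (Encodable.decode₂ u n).elim (emptyDroplet d) (fun a => (K a.1).droplet)
  have hDsome : ∀ n a, Encodable.decode₂ u n = some a → D n = (K a.1).droplet := by
    intro n a h; simp [D, h]
  have hDnone : ∀ n, Encodable.decode₂ u n = none → D n = emptyDroplet d := by
    intro n h; simp [D, h]
  have hDU : (⋃ n, (D n).Ω 0) = ⋃ a : u, (K a.1).dom 0 := by
    ext x
    simp only [mem_iUnion]
    constructor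
    · rintro ⟨n, hn⟩
      rcases h : Encodable.decode₂ u n with _ | a
      · rw [hDnone n h] at hn; exact hn.elim
      · rw [hDsome n a h] at hn; exact ⟨a, hn⟩
    · rintro ⟨a, ha⟩
      refine ⟨Encodable.encode a, ?_⟩
      rw [hDsome _ a (Encodable.encodek₂ a)]; exact ha
  refine ⟨D, ?_, ?_, ?_, ?_⟩
  · intro n
    rcases h : Encodable.decode₂ u n with _ | a
    · rw [hDnone n h]; exact goodDroplet_empty _ _ _
    · rw [hDsome n a h]; exact (hK a.1).goodDroplet
  · intro k n hkn
    rcases h : Encodable.decode₂ u n with _ | a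
    · rw [hDnone n h]; exact disjoint_empty _
    rcases h' : Encodable.decode₂ u k with _ | b
    · rw [hDnone k h']; exact empty_disjoint _
    rw [hDsome n a h, hDsome k b h']
    have hab : b ≠ a := by
      rintro rfl
      rw [Encodable.decode₂_eq_some] at h h'
      exact hkn (h'.symm.trans h)
    exact (hud b.2 a.2 (fun hh => hab (Subtype.ext hh))).mono subset_closure subset_closure
  · rw [hDU]
    exact iUnion_subset fun a => subset_closure.trans (huU a a.2)
  · rw [hDU]
    have hbad : volume {x | ¬ (x ∈ Ω₀ → GoodPt ψ x)} = 0 := hg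
    have hfr : volume (⋃ a : u, frontier ((K a.1).dom 0)) = 0 :=
      measure_iUnion_null fun a => (K a.1).convex_dom.addHaar_frontier volume
    refine measure_mono_null ?_ (measure_union_null (measure_union_null hbad hfr) hu0)
    rintro x ⟨hx0, hx⟩
    by_cases hgx : GoodPt ψ x
    · by_cases hc : x ∈ ⋃ a ∈ u, closure ((K a).dom 0)
      · left; right
        simp only [mem_iUnion] at hc
        obtain ⟨a, ha, hxa⟩ := hc
        refine mem_iUnion.mpr ⟨⟨a, ha⟩, ?_⟩
        rw [((K a).isOpen_dom 0).frontier_eq]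
        exact ⟨hxa, fun hxx => hx (mem_iUnion.mpr ⟨⟨a, ha⟩, hxx⟩)⟩
      · right
        refine ⟨⟨hx0, ?_⟩, hc⟩
        obtain ⟨n, hn⟩ := exists_nat_ge (cst ⟨x, hx0, hgx⟩)
        exact mem_iUnion.mpr ⟨n, ⟨hx0, hgx⟩, hn⟩
    · left; left
      exact fun h => hgx (h hx0)

end family
end Spray
end PartP4d

section PartP4e
open Set MeasureTheory Filter Topology
open scoped ENNReal

namespace Spray
section assembly
variable {d : ℕ}

lemma coupling_exists {E : Type*} [MeasurableSpace E] (α β : Measure E) [IsFiniteMeasure α] [IsFiniteMeasure β]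
    (h : α univ = β univ) : ∃ π : Measure (E × E), π.map Prod.fst = α ∧ π.map Prod.snd = β := by
  by_cases h0 : α univ = 0
  · refine ⟨0, ?_, ?_⟩
    · rw [Measure.map_zero, Measure.measure_univ_eq_zero.mp h0]
    · rw [h] at h0
      rw [Measure.map_zero, Measure.measure_univ_eq_zero.mp h0]
  · have hf : α univ ≠ ∞ := measure_ne_top _ _
    refine ⟨(α univ)⁻¹ • α.prod β, ?_, ?_⟩
    · rw [Measure.map_smul, Measure.map_fst_prod, smul_smul, ← h, ENNReal.inv_mul_cancel h0 hf, one_smul]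
    · rw [Measure.map_smul, Measure.map_snd_prod, smul_smul, ENNReal.inv_mul_cancel h0 hf, one_smul]

lemma action_le {ψ : EuclideanSpace ℝ (Fin d) → ℝ} {κ σ R : ℝ} {D : EulerDroplet d} (hD : GoodDroplet ψ κ σ D)
    (hσ : 0 < σ)
    {T : EuclideanSpace ℝ (Fin d) → EuclideanSpace ℝ (Fin d)}
    (hT : ∀ᵐ x ∂(volume.restrict (D.Ω 0)), SubG ψ x (T x) ∧ ‖x - T x‖ ≤ 2 * R) :
    (∫⁻ t in Icc (0:ℝ) 1, ∫⁻ x in D.Ω t, ENNReal.ofReal (‖gradient (fun y => D.φ y t) x‖ ^ 2)) ≤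
      ∫⁻ x in D.Ω 0, (ENNReal.ofReal (‖x - T x‖^2) + ENNReal.ofReal (σ * (4 * R + σ))) := by
  have z0 : (0:ℝ) ∈ Icc (0:ℝ) 1 := ⟨le_rfl, zero_le_one⟩
  set A := (∫⁻ t in Icc (0:ℝ) 1, ∫⁻ x in D.Ω t, ENNReal.ofReal (‖gradient (fun y => D.φ y t) x‖ ^ 2)) with hA
  have hbound : ∀ C : ℝ≥0∞, (∀ t ∈ Icc (0:ℝ) 1, ∀ z ∈ D.Ω t, ENNReal.ofReal (‖gradient (fun y => D.φ y t) z‖ ^ 2) ≤ C) →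
      A ≤ C * volume (D.Ω 0) := by
    intro C hC
    calc A ≤ ∫⁻ t in Icc (0:ℝ) 1, C * volume (D.Ω 0) := by
          refine setLIntegral_mono' measurableSet_Icc fun t ht => ?_
          calc _ ≤ ∫⁻ x in D.Ω t, C := setLIntegral_mono' (D.isOpen_Ω t ht).measurableSet fun x hx => hC t ht x hx
            _ = C * volume (D.Ω 0) := by rw [setLIntegral_const, hD.vol t ht]
      _ = C * volume (D.Ω 0) := by rw [setLIntegral_const]; simp
  by_cases hV : volume (D.Ω 0) = 0
  · have hA0 : A = 0 := by
      rw [hA]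
      apply le_antisymm _ zero_le
      calc _ ≤ ∫⁻ t in Icc (0:ℝ) 1, (0:ℝ≥0∞) := by
            refine setLIntegral_mono' measurableSet_Icc fun t ht => ?_
            rw [setLIntegral_measure_zero _ _ (by rw [hD.vol t ht, hV])]
        _ = 0 := by simp
    rw [hA0]; exact zero_le
  have hVf : volume (D.Ω 0) ≠ ∞ := (D.isBounded_Ω 0 z0).measure_lt_top.ne
  have hpt : ∀ᵐ x ∂(volume.restrict (D.Ω 0)), A ≤
      (ENNReal.ofReal (‖x - T x‖^2) + ENNReal.ofReal (σ * (4 * R + σ))) * volume (D.Ω 0) := by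
    filter_upwards [hT, ae_restrict_mem (D.isOpen_Ω 0 z0).measurableSet] with x hx hx0
    apply hbound
    intro t ht z hz
    have h1 := hD.spd x hx0 (T x) hx.1 t ht z hz
    have h2 := hx.2
    have h3 := norm_nonneg (x - T x)
    rw [← ENNReal.ofReal_add (by positivity) (by nlinarith)]
    apply ENNReal.ofReal_le_ofReal
    nlinarith [norm_nonneg (gradient (fun y => D.φ y t) z)]
  have hintg : A * volume (D.Ω 0) ≤ (∫⁻ x in D.Ω 0, (ENNReal.ofReal (‖x - T x‖^2) + ENNReal.ofReal (σ * (4 * R + σ)))) * volume (D.Ω 0) := by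
    calc A * volume (D.Ω 0) = ∫⁻ x in D.Ω 0, A := by rw [setLIntegral_const]
      _ ≤ ∫⁻ x in D.Ω 0, (ENNReal.ofReal (‖x - T x‖^2) + ENNReal.ofReal (σ * (4 * R + σ))) * volume (D.Ω 0) := lintegral_mono_ae hpt
      _ = _ := lintegral_mul_const' _ _ hVf
  exact (ENNReal.mul_le_mul_iff_left hV hVf).mp hintg

theorem main
    (d : ℕ) (Ω₀ Ω₁ : Set (EuclideanSpace ℝ (Fin d)))
    (h₀open : IsOpen Ω₀) (h₁open : IsOpen Ω₁)
    (h₀bdd : Bornology.IsBounded Ω₀) (h₁bdd : Bornology.IsBounded Ω₁)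
    (hvol : volume Ω₀ = volume Ω₁)
    (ε : ℝ) (hε : 0 < ε) :
    ∃ D : ℕ → EulerDroplet d,
      (Pairwise fun m n => Disjoint (D m).Q (D n).Q) ∧
      (Pairwise fun m n => Disjoint ((D m).Ω 0) ((D n).Ω 0)) ∧
      (⋃ n, (D n).Ω 0) ⊆ Ω₀ ∧
      volume (Ω₀ \ ⋃ n, (D n).Ω 0) = 0 ∧
      volume (⋃ n, (D n).Ω 1) = volume Ω₁ ∧
      (∃ π : Measure (EuclideanSpace ℝ (Fin d) × EuclideanSpace ℝ (Fin d)),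
        π.map Prod.fst = volume.restrict Ω₁ ∧
        π.map Prod.snd = volume.restrict (⋃ n, (D n).Ω 1) ∧
        ∀ᵐ q ∂π, dist q.1 q.2 < ε) ∧
      (∑' n, ∫⁻ t in Icc (0:ℝ) 1, ∫⁻ x in (D n).Ω t,
          ENNReal.ofReal (‖gradient (fun y => (D n).φ y t) x‖ ^ 2)) ≤
        W2sq (volume.restrict Ω₀) (volume.restrict Ω₁) + ENNReal.ofReal ε := by
  have z0 : (0:ℝ) ∈ Icc (0:ℝ) 1 := ⟨le_rfl, zero_le_one⟩
  have z1 : (1:ℝ) ∈ Icc (0:ℝ) 1 := ⟨zero_le_one, le_rfl⟩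
  obtain ⟨R, hR0, hR⟩ := (h₀bdd.union h₁bdd).exists_pos_norm_le
  have hb0 : ∀ x ∈ Ω₀, ‖x‖ ≤ R := fun x hx => hR x (Or.inl hx)
  have hb1 : ∀ x ∈ Ω₁, ‖x‖ ≤ R := fun x hx => hR x (Or.inr hx)
  have hf0 : volume Ω₀ ≠ ∞ := h₀bdd.measure_lt_top.ne
  have hf1 : volume Ω₁ ≠ ∞ := h₁bdd.measure_lt_top.ne
  have i0 : IsFiniteMeasure (volume.restrict Ω₀) := isFiniteMeasure_restrict.mpr hf0
  have i1 : IsFiniteMeasure (volume.restrict Ω₁) := isFiniteMeasure_restrict.mpr hf1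
  have hsupp : ∀ S : Set (EuclideanSpace ℝ (Fin d)), (∀ x ∈ S, ‖x‖ ≤ R) →
      (volume.restrict S) (Metric.closedBall 0 R)ᶜ = 0 := by
    intro S hS
    rw [Measure.restrict_apply Metric.isClosed_closedBall.measurableSet.compl]
    have : (Metric.closedBall (0 : EuclideanSpace ℝ (Fin d)) R)ᶜ ∩ S = ∅ := by
      ext x
      simp only [mem_inter_iff, mem_compl_iff, mem_closedBall_zero_iff, mem_empty_iff_false, iff_false]
      exact fun h => h.1 (hS x h.2)
    rw [this, measure_empty]
  obtain ⟨ψ, T, hψ, hS, hTm, hTS, hmap, hopt⟩ := brenier (volume.restrict Ω₀) (volume.restrict Ω₁) hR0.le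
    (hsupp Ω₀ hb0) (hsupp Ω₁ hb1) (by simp [hvol]) Measure.restrict_le_self.absolutelyContinuous
  have hTS' : ∀ᵐ x, SubG ψ x (T x) := hTS.mono fun x hx => hx.1
  have hgood := ae_goodPt hψ.continuous hS h₀open hTm hTS' hmap
  -- parameters
  set V : ℝ := (volume Ω₀).toReal with hV
  have hV0 : 0 ≤ V := ENNReal.toReal_nonneg
  set σ : ℝ := min (min (ε / 2) 1) (ε / ((4 * R + 1) * (V + 1))) with hσ
  have hσ0 : 0 < σ := by positivity
  have hσε : σ ≤ ε / 2 := (min_le_left _ _).trans (min_le_left _ _)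
  have hσ1 : σ ≤ 1 := (min_le_left _ _).trans (min_le_right _ _)
  have hσ2 : σ * ((4 * R + 1) * (V + 1)) ≤ ε := by
    rw [← le_div_iff₀ (by positivity)]; exact min_le_right _ _
  set κ : ℝ := min 1 (σ / (4 * R)) with hκ
  have hκ0 : 0 < κ := by positivity
  have hκσ : κ * R ≤ σ / 4 := by
    have : κ ≤ σ / (4 * R) := min_le_right _ _
    rw [le_div_iff₀ (by positivity)] at this
    linarith
  obtain ⟨D, hD, hdisj, hsub, hnull⟩ := droplets_exist h₀open hf0 hgood hκ0 (min_le_left _ _) hσ0 hκσ hb0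
  have hEm : ∀ n, MeasurableSet ((D n).Ω 0) := fun n => ((D n).isOpen_Ω 0 z0).measurableSet
  have hFm : ∀ n, MeasurableSet ((D n).Ω 1) := fun n => ((D n).isOpen_Ω 1 z1).measurableSet
  have hslice : ∀ t ∈ Icc (0:ℝ) 1, Pairwise fun m n => Disjoint ((D m).Ω t) ((D n).Ω t) := by
    intro t ht m n hmn
    rw [Set.disjoint_left]
    intro z hzm hzn
    obtain ⟨x, y, hxy, hz⟩ := prox_exists hψ.continuous hS (c := 1 - t + t * κ) (by
      rcases ht.1.eq_or_lt with h | h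
      · rw [← h]; norm_num
      · have := mul_pos h hκ0; linarith [ht.2]) ht.1 z
    exact Set.disjoint_left.mp (hdisj hmn) ((hD m).cap t ht z hzm x y hxy hz) ((hD n).cap t ht z hzn x y hxy hz)
  have hEae : (⋃ n, (D n).Ω 0) =ᵐ[volume] Ω₀ := by
    apply (ae_eq_set).mpr
    exact ⟨by rw [sdiff_eq_empty.mpr hsub, measure_empty], hnull⟩
  have hvol1 : volume (⋃ n, (D n).Ω 1) = volume Ω₁ := by
    rw [measure_iUnion (hslice 1 z1) hFm, ← hvol, ← measure_congr hEae, measure_iUnion hdisj hEm]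
    exact tsum_congr fun n => (hD n).vol 1 z1
  have hTae : ∀ᵐ x ∂(volume.restrict Ω₀), SubG ψ x (T x) ∧ ‖x - T x‖ ≤ 2 * R := by
    have h1 : ∀ᵐ y ∂((volume.restrict Ω₀).map T), y ∈ Ω₁ := by
      rw [hmap]; exact ae_restrict_mem h₁open.measurableSet
    have h2 := ae_of_ae_map hTm.aemeasurable h1
    filter_upwards [ae_restrict_of_ae hTS', h2, ae_restrict_mem h₀open.measurableSet] with x hx1 hx2 hx3
    refine ⟨hx1, (norm_sub_le _ _).trans ?_⟩
    linarith [hb0 x hx3, hb1 _ hx2]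
  have hTaen : ∀ n, ∀ᵐ x ∂(volume.restrict ((D n).Ω 0)), SubG ψ x (T x) ∧ ‖x - T x‖ ≤ 2 * R := fun n =>
    ae_restrict_of_ae_restrict_of_subset ((subset_iUnion (fun n => (D n).Ω 0) n).trans hsub) hTae
  refine ⟨D, ?_, hdisj, hsub, hnull, hvol1, ?_, ?_⟩
  · intro m n hmn
    rw [Set.disjoint_left]
    rintro ⟨z, t⟩ hm hn
    simp only [EulerDroplet.Q, mem_iUnion, mem_prod, mem_singleton_iff] at hm hn
    obtain ⟨s, hs, hzm, rfl⟩ := hm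
    obtain ⟨s', hs', hzn, rfl⟩ := hn
    exact Set.disjoint_left.mp (hslice _ hs hmn) hzm hzn
  · have hc : ∀ n, ∃ π : Measure (EuclideanSpace ℝ (Fin d) × EuclideanSpace ℝ (Fin d)),
        π.map Prod.fst = (volume.restrict ((D n).Ω 0)).map T ∧ π.map Prod.snd = volume.restrict ((D n).Ω 1) := by
      intro n
      have j0 : IsFiniteMeasure (volume.restrict ((D n).Ω 0)) :=
        isFiniteMeasure_restrict.mpr ((D n).isBounded_Ω 0 z0).measure_lt_top.ne
      have j1 : IsFiniteMeasure (volume.restrict ((D n).Ω 1)) :=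
        isFiniteMeasure_restrict.mpr ((D n).isBounded_Ω 1 z1).measure_lt_top.ne
      apply coupling_exists
      rw [Measure.map_apply hTm MeasurableSet.univ]
      simp [(hD n).vol 1 z1]
    choose π hπ1 hπ2 using hc
    refine ⟨Measure.sum π, ?_, ?_, ?_⟩
    · rw [Measure.map_sum measurable_fst.aemeasurable]
      simp only [hπ1]
      rw [← Measure.map_sum hTm.aemeasurable, ← Measure.restrict_iUnion hdisj hEm, Measure.restrict_congr_set hEae, hmap]
    · rw [Measure.map_sum measurable_snd.aemeasurable]
      simp only [hπ2]
      rw [← Measure.restrict_iUnion (hslice 1 z1) hFm]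
    · rw [Measure.ae_sum_iff]
      intro n
      have hcl : IsClosed {y : EuclideanSpace ℝ (Fin d) | ∀ z ∈ (D n).Ω 1, dist y z ≤ σ} := by
        simp only [setOf_forall]
        exact isClosed_biInter fun z _ => isClosed_le (by fun_prop) continuous_const
      have h1 : ∀ᵐ y ∂((π n).map Prod.fst), ∀ z ∈ (D n).Ω 1, dist y z ≤ σ := by
        rw [hπ1, ae_map_iff hTm.aemeasurable hcl.measurableSet]
        filter_upwards [hTaen n, ae_restrict_mem (hEm n)] with x hx hx0 z hz
        exact ((hD n).near x hx0 (T x) hx.1 z hz).le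
      have h2 : ∀ᵐ z ∂((π n).map Prod.snd), z ∈ (D n).Ω 1 := by
        rw [hπ2]; exact ae_restrict_mem (hFm n)
      filter_upwards [ae_of_ae_map measurable_fst.aemeasurable h1, ae_of_ae_map measurable_snd.aemeasurable h2] with q hq1 hq2
      have := hq1 _ hq2
      linarith
  · calc _ ≤ ∑' n, ∫⁻ x in (D n).Ω 0, (ENNReal.ofReal (‖x - T x‖^2) + ENNReal.ofReal (σ * (4 * R + σ))) :=
          ENNReal.tsum_le_tsum fun n => action_le (hD n) hσ0 (hTaen n)
      _ = ∫⁻ x in Ω₀, (ENNReal.ofReal (‖x - T x‖^2) + ENNReal.ofReal (σ * (4 * R + σ))) := by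
          rw [← lintegral_iUnion hEm hdisj, Measure.restrict_congr_set hEae]
      _ = (∫⁻ x in Ω₀, ENNReal.ofReal (‖x - T x‖^2)) + ENNReal.ofReal (σ * (4 * R + σ)) * volume Ω₀ := by
          rw [lintegral_add_right _ measurable_const, setLIntegral_const]
      _ ≤ W2sq (volume.restrict Ω₀) (volume.restrict Ω₁) + ENNReal.ofReal ε := by
          refine add_le_add ?_ ?_
          · refine le_sInf ?_
            rintro C ⟨π, h1, h2, rfl⟩
            exact hopt π h1 h2
          · rw [← ENNReal.ofReal_toReal hf0, ← ENNReal.ofReal_mul (by positivity)]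
            apply ENNReal.ofReal_le_ofReal
            change σ * (4 * R + σ) * V ≤ ε
            refine le_trans ?_ hσ2
            rw [mul_assoc]
            apply mul_le_mul_of_nonneg_left _ hσ0.le
            exact mul_le_mul (by linarith) (by linarith) hV0 (by positivity)

end assembly
end Spray
end PartP4e

/-- **Theorem 1.1.** For any bounded open sets `Ω₀, Ω₁ ⊆ ℝ^d` of equal
positive volume and any `ε > 0`, there is an Euler spray — a countable family of smooth
Euler droplet solutions with pairwise disjoint space-time domains — transporting `Ω₀`
(up to a null set) to a target `Ω₁^ε = ⋃ₙ Ωⁿ₁` with `d_∞(1_{Ω₁}, 1_{Ω₁^ε}) < ε`, whose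
total action is at most `d_W(1_{Ω₀} dx, 1_{Ω₁} dx)² + ε`. -/
theorem euler_spray_approximate_connection
    (d : ℕ) (Ω₀ Ω₁ : Set (EuclideanSpace ℝ (Fin d)))
    (h₀open : IsOpen Ω₀) (h₁open : IsOpen Ω₁)
    (h₀bdd : Bornology.IsBounded Ω₀) (h₁bdd : Bornology.IsBounded Ω₁)
    (hvol : volume Ω₀ = volume Ω₁) (hpos : 0 < volume Ω₀)
    (ε : ℝ) (hε : 0 < ε) :
    ∃ D : ℕ → EulerDroplet d,
      -- an Euler spray: the space-time domains are pairwise disjoint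
      (Pairwise fun m n => Disjoint (D m).Q (D n).Q) ∧
      -- (i) the initial droplets decompose Ω₀ up to a null set
      (Pairwise fun m n => Disjoint ((D m).Ω 0) ((D n).Ω 0)) ∧
      (⋃ n, (D n).Ω 0) ⊆ Ω₀ ∧
      volume (Ω₀ \ ⋃ n, (D n).Ω 0) = 0 ∧
      -- (ii) the target Ω₁^ε = ⋃ₙ Ωⁿ₁ has the right volume and is ε-close to Ω₁ in d_∞
      volume (⋃ n, (D n).Ω 1) = volume Ω₁ ∧
      (∃ π : Measure (EuclideanSpace ℝ (Fin d) × EuclideanSpace ℝ (Fin d)),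
        π.map Prod.fst = volume.restrict Ω₁ ∧
        π.map Prod.snd = volume.restrict (⋃ n, (D n).Ω 1) ∧
        ∀ᵐ q ∂π, dist q.1 q.2 < ε) ∧
      -- (iii) total action bound
      (∑' n, ∫⁻ t in Icc (0:ℝ) 1, ∫⁻ x in (D n).Ω t,
          ENNReal.ofReal (‖gradient (fun y => (D n).φ y t) x‖ ^ 2)) ≤
        W2sq (volume.restrict Ω₀) (volume.restrict Ω₁) + ENNReal.ofReal ε := by
  exact Spray.main d Ω₀ Ω₁ h₀open h₁open h₀bdd h₁bdd hvol ε hε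
end

section
/- Let U ⊆ ℝ^d be open and convex, let ψ : U → ℝ be C³ and convex, and let ε ∈ (0,1). Let (B(x_i, r_i))_{i∈I} be a countable family of pairwise disjoint open balls contained in U. Suppose that for each i there is a constant λ̲_i ∈ (0,1] such that ⟨Hess ψ(x) u, u⟩ ≥ λ̲_i |u|² for all x ∈ B(x_i, r_i) and all u ∈ ℝ^d, and such that (sup_{x ∈ B(x_i,r_i)} ‖D³ψ(x)‖) · r_i < (ε/4)·λ̲_i², where ‖D³ψ(x)‖ = sup_{|u|=|v|=|w|=1} |D³ψ(x)[u,v,w]|. Define S on ⋃_i B(x_i, r_i) by S(x) = (1+ε)∇ψ(x_i) + Hess ψ(x_i)(x − x_i) for x ∈ B(x_i, r_i), and S_t = (1−t)·id + t·S for t ∈ [0,1]. Then for every t ∈ [0,1], S_t is injective on ⋃_i B(x_i, r_i), and for all i ≠ j, dist(S_t(B(x_i,r_i)), S_t(B(x_j,r_j))) ≥ (ε t/2)(λ̲_i² r_i + λ̲_j² r_j). -/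
open Set Metric
open scoped RealInnerProductSpace

section aux

set_option linter.unusedSectionVars false

variable {E : Type*} [NormedAddCommGroup E] [InnerProductSpace ℝ E] [CompleteSpace E]

noncomputable def dualIso (E : Type*) [NormedAddCommGroup E] [InnerProductSpace ℝ E]
    [CompleteSpace E] : (E →L[ℝ] ℝ) ≃ₗᵢ[ℝ] E where
  toFun := (InnerProductSpace.toDual ℝ E).symm
  invFun := InnerProductSpace.toDual ℝ E
  map_add' := by simp
  map_smul' := by intro m x; simp
  left_inv := by intro x; simp
  right_inv := by intro x; simp
  norm_map' := by intro x; exact (InnerProductSpace.toDual ℝ E).symm.norm_map x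

lemma gradient_eq_dualIso (f : E → ℝ) : gradient f = dualIso E ∘ fderiv ℝ f := rfl

lemma norm_third (f : E → ℝ) (x : E) :
    ‖fderiv ℝ (fderiv ℝ (gradient f)) x‖ = ‖iteratedFDeriv ℝ 3 f x‖ := by
  rw [← norm_iteratedFDeriv_one, norm_iteratedFDeriv_fderiv, gradient_eq_dualIso,
    LinearIsometryEquiv.norm_iteratedFDeriv_comp_left, norm_iteratedFDeriv_fderiv]

lemma contDiffOn_gradient {U : Set E} (hU : IsOpen U) {f : E → ℝ} (hf : ContDiffOn ℝ 3 f U) :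
    ContDiffOn ℝ 2 (gradient f) U := by
  rw [gradient_eq_dualIso]
  exact (dualIso E).contDiff.comp_contDiffOn (hf.fderiv_of_isOpen hU (by norm_num))

/-- monotonicity of the gradient -/
lemma gradient_mono {U : Set E} (hU : IsOpen U) {f : E → ℝ}
    (hf : ContDiffOn ℝ 3 f U) (hc : ConvexOn ℝ U f) {p q : E} (hp : p ∈ U) (hq : q ∈ U) :
    0 ≤ ⟪gradient f p - gradient f q, p - q⟫ := by
  have hd : ∀ x ∈ U, HasFDerivAt f (fderiv ℝ f x) x := fun x hx =>
    ((hf.contDiffAt (hU.mem_nhds hx)).differentiableAt (by norm_num)).hasFDerivAt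
  have hg : ∀ x v, ⟪gradient f x, v⟫ = fderiv ℝ f x v := by
    intro x v; simp [gradient]
  let φ : ℝ → ℝ := f ∘ (AffineMap.lineMap q p : ℝ →ᵃ[ℝ] E)
  have hφ : ConvexOn ℝ ((AffineMap.lineMap q p : ℝ →ᵃ[ℝ] E) ⁻¹' U) φ := hc.comp_affineMap _
  have h0 : (0:ℝ) ∈ (AffineMap.lineMap q p : ℝ →ᵃ[ℝ] E) ⁻¹' U := by simpa using hq
  have h1 : (1:ℝ) ∈ (AffineMap.lineMap q p : ℝ →ᵃ[ℝ] E) ⁻¹' U := by simpa using hp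
  have D0 : HasDerivAt φ (fderiv ℝ f q (p - q)) 0 := by
    apply HasFDerivAt.comp_hasDerivAt (x := (0:ℝ))
    · simpa using hd q hq
    · exact AffineMap.hasDerivAt_lineMap
  have D1 : HasDerivAt φ (fderiv ℝ f p (p - q)) 1 := by
    apply HasFDerivAt.comp_hasDerivAt (x := (1:ℝ))
    · simpa using hd p hp
    · exact AffineMap.hasDerivAt_lineMap
  have a := hφ.le_slope_of_hasDerivAt h0 h1 one_pos D0
  have b := hφ.slope_le_of_hasDerivAt h0 h1 one_pos D1
  rw [inner_sub_left, hg, hg]; linarith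

/-- strong monotonicity in a ball -/
lemma gradient_strong {B : Set E} (hB : Convex ℝ B) {T : E → E} {l : ℝ}
    (hT : ∀ x ∈ B, DifferentiableAt ℝ T x)
    (hl : ∀ y ∈ B, ∀ u : E, l * ‖u‖ ^ 2 ≤ ⟪fderiv ℝ T y u, u⟫) {p w : E}
    (hp : p ∈ B) (hw : w ∈ B) : l * ‖w - p‖ ^ 2 ≤ ⟪T w - T p, w - p⟫ := by
  let φ : ℝ → ℝ := fun s => ⟪T (AffineMap.lineMap p w s), w - p⟫
  have hm : ∀ s ∈ Icc (0:ℝ) 1, AffineMap.lineMap p w s ∈ B := fun s hs =>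
    hB.lineMap_mem hp hw hs
  have D : ∀ s ∈ Icc (0:ℝ) 1,
      HasDerivAt φ ⟪fderiv ℝ T (AffineMap.lineMap p w s) (w - p), w - p⟫ s := by
    intro s hs
    have h : HasDerivAt (fun s : ℝ => T (AffineMap.lineMap p w s))
      (fderiv ℝ T (AffineMap.lineMap p w s) (w - p)) s := 
      (hT _ (hm s hs)).hasFDerivAt.comp_hasDerivAt s AffineMap.hasDerivAt_lineMap
    simpa using h.inner ℝ (hasDerivAt_const s (w - p))
  obtain ⟨s, hs, h⟩ := exists_hasDerivAt_eq_slope φ _ one_pos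
    (fun s hs => (D s hs).continuousAt.continuousWithinAt) (fun s hs => D s (Ioo_subset_Icc_self hs))
  have := hl _ (hm s (Ioo_subset_Icc_self hs)) (w - p)
  rw [h] at this
  simpa [φ, ← inner_sub_left] using this

/-- linearization error -/
lemma lin_err {x : E} {r M : ℝ} {T : E → E} (hr : 0 < r)
    (hT : ContDiffOn ℝ 2 T (ball x r))
    (hM : ∀ y ∈ ball x r, ‖fderiv ℝ (fderiv ℝ T) y‖ * r ≤ M) {w : E} (hw : w ∈ ball x r) :
    ‖T w - T x - fderiv ℝ T x (w - x)‖ ≤ M * ‖w - x‖ := by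
  have hx : x ∈ ball x r := mem_ball_self hr
  have hd : ∀ y ∈ ball x r, DifferentiableAt ℝ T y := fun y hy =>
    (hT.contDiffAt (isOpen_ball.mem_nhds hy)).differentiableAt (by norm_num)
  have hT1 : ContDiffOn ℝ 1 (fderiv ℝ T) (ball x r) :=
    hT.fderiv_of_isOpen isOpen_ball (by norm_num)
  have hd1 : ∀ y ∈ ball x r, DifferentiableAt ℝ (fderiv ℝ T) y := fun y hy =>
    (hT1.contDiffAt (isOpen_ball.mem_nhds hy)).differentiableAt (by norm_num)
  have hb : ∀ y ∈ ball x r, ‖fderiv ℝ T y - fderiv ℝ T x‖ ≤ M := by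
    intro y hy
    have h := (convex_ball x r).norm_image_sub_le_of_norm_fderiv_le (C := M / r) hd1
      (fun z hz => by rw [le_div_iff₀ hr]; exact hM z hz) hx hy
    have h2 : ‖y - x‖ ≤ r := by rw [mem_ball_iff_norm] at hy; exact hy.le
    have h3 : 0 ≤ M := le_trans (by positivity) (hM x hx)
    calc _ ≤ M / r * ‖y - x‖ := h
      _ ≤ M / r * r := by gcongr
      _ = M := by field_simp
  exact (convex_ball x r).norm_image_sub_le_of_norm_fderiv_le' hd hb hx hw

lemma ball_part {c y e : E} {r l ε : ℝ} {T : E → E} (hr : 0 < r) (hε : 0 < ε)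
    (hT : ContDiffOn ℝ 2 T (ball c r))
    (hl : ∀ y ∈ ball c r, ∀ u : E, l * ‖u‖ ^ 2 ≤ ⟪fderiv ℝ T y u, u⟫)
    (hM : ∀ y ∈ ball c r, ‖fderiv ℝ (fderiv ℝ T) y‖ * r ≤ ε / 4 * l ^ 2)
    (hy : y ∈ ball c r) (he : ‖e‖ = 1) :
    c + (1 + ε)⁻¹ • (y - c) - (r * ε / (1 + ε)) • e ∈ ball c r ∧
    ε * l * r - ε / 4 * l ^ 2 * r +
      (1 + ε) * ⟪T (c + (1 + ε)⁻¹ • (y - c) - (r * ε / (1 + ε)) • e), e⟫ ≤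
      ⟪(1 + ε) • T c + fderiv ℝ T c (y - c), e⟫ := by
  have hk : 0 < 1 + ε := by linarith
  set w := c + (1 + ε)⁻¹ • (y - c) with hw
  set ρ := r * ε / (1 + ε) with hρ
  have hρ0 : 0 < ρ := by positivity
  have hyc : ‖y - c‖ < r := by rwa [mem_ball_iff_norm] at hy
  have hwc : ‖w - c‖ < r / (1 + ε) := by
    have : w - c = (1 + ε)⁻¹ • (y - c) := by simp [hw]
    rw [this, norm_smul, norm_inv, Real.norm_of_nonneg hk.le, div_eq_inv_mul]
    gcongr
  have hsum : r / (1 + ε) + ρ = r := by rw [hρ]; field_simp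
  have hwB : w ∈ ball c r := by rw [mem_ball_iff_norm]; linarith
  have hpB : w - ρ • e ∈ ball c r := by
    rw [mem_ball_iff_norm]
    calc ‖w - ρ • e - c‖ = ‖(w - c) - ρ • e‖ := by congr 1; abel
      _ ≤ ‖w - c‖ + ‖ρ • e‖ := norm_sub_le _ _
      _ = ‖w - c‖ + ρ := by rw [norm_smul, he, Real.norm_of_nonneg hρ0.le, mul_one]
      _ < r := by linarith
  refine ⟨hpB, ?_⟩
  have hd : ∀ y ∈ ball c r, DifferentiableAt ℝ T y := fun y hy =>
    (hT.contDiffAt (isOpen_ball.mem_nhds hy)).differentiableAt (by norm_num)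
  have h1 := gradient_strong (convex_ball c r) hd hl hpB hwB
  have h1' : l * ρ ≤ ⟪T w - T (w - ρ • e), e⟫ := by
    have : w - (w - ρ • e) = ρ • e := by abel
    rw [this, norm_smul, he, Real.norm_of_nonneg hρ0.le, mul_one, inner_smul_right] at h1
    have : ρ * (l * ρ) ≤ ρ * ⟪T w - T (w - ρ • e), e⟫ := by nlinarith
    exact le_of_mul_le_mul_left this hρ0
  have h2 := lin_err hr hT hM hwB
  have h3 : ⟪T w - T c - fderiv ℝ T c (w - c), e⟫ ≤ ε / 4 * l ^ 2 * (r / (1 + ε)) := by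
    calc _ ≤ ‖T w - T c - fderiv ℝ T c (w - c)‖ * ‖e‖ := real_inner_le_norm _ _
      _ ≤ ε / 4 * l ^ 2 * ‖w - c‖ := by rw [he, mul_one]; exact h2
      _ ≤ _ := by gcongr
  have hyw : fderiv ℝ T c (y - c) = (1 + ε) • fderiv ℝ T c (w - c) := by
    have : y - c = (1 + ε) • (w - c) := by
      simp [hw, smul_smul, mul_inv_cancel₀ hk.ne']
    rw [this, map_smul]
  rw [hyw, ← smul_add, real_inner_smul_left]
  rw [inner_sub_left] at h1'
  rw [inner_sub_left, inner_sub_left] at h3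
  rw [inner_add_left]
  have e1 : ε * l * r = (1 + ε) * (l * ρ) := by rw [hρ]; field_simp
  have e2 : ε / 4 * l ^ 2 * r = (1 + ε) * (ε / 4 * l ^ 2 * (r / (1 + ε))) := by field_simp
  rw [e1, e2, ← mul_sub, ← mul_add]
  apply mul_le_mul_of_nonneg_left _ hk.le
  linarith

lemma id_part {D a : E} {s : ℝ} (hs0 : 0 ≤ s) (hs : s ≤ 1) (ha : ‖a‖ ≤ ‖D‖) :
    0 ≤ ⟪D + a, D + s • a⟫ := by
  have h := neg_le_of_abs_le (abs_real_inner_le_norm D a)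
  rw [inner_add_left, inner_add_right, inner_add_right, real_inner_smul_right,
    real_inner_smul_right, real_inner_self_eq_norm_sq, real_inner_self_eq_norm_sq,
    real_inner_comm D a]
  have h1 : 0 ≤ (‖D‖ - ‖a‖) * (‖D‖ - s * ‖a‖) := by
    apply mul_nonneg (by linarith)
    nlinarith [norm_nonneg a]
  nlinarith

end aux

/-- Injectivity of the displacement interpolants of the piecewise-affine
ellipsoidal transport spray: on a disjoint family of balls `B(xᵢ,rᵢ) ⊆ U`, with uniform
ellipticity `⟪Hess ψ(x)u,u⟫ ≥ λ̲ᵢ‖u‖²` and the smallness condition `‖D³ψ‖·rᵢ < (ε/4)λ̲ᵢ²`,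
the maps `S_t = (1−t)id + tS`, where `S(x) = (1+ε)∇ψ(xᵢ) + Hess ψ(xᵢ)(x−xᵢ)` on
`B(xᵢ,rᵢ)`, are injective on `⋃ᵢ B(xᵢ,rᵢ)`, with quantitative separation of the images of
distinct balls. -/
theorem spray_interpolants_injective
    (d : ℕ) (U : Set (EuclideanSpace ℝ (Fin d))) (hUopen : IsOpen U) (hUconv : Convex ℝ U)
    (ψ : EuclideanSpace ℝ (Fin d) → ℝ)
    (hψ : ContDiffOn ℝ 3 ψ U) (hψconv : ConvexOn ℝ U ψ)
    (ε : ℝ) (hε : ε ∈ Ioo (0:ℝ) 1)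
    (ι : Type*) [Countable ι]
    (c : ι → EuclideanSpace ℝ (Fin d)) (rad : ι → ℝ) (hrad : ∀ i, 0 < rad i)
    (hball : ∀ i, ball (c i) (rad i) ⊆ U)
    (hdisj : Pairwise fun i j => Disjoint (ball (c i) (rad i)) (ball (c j) (rad j)))
    (lam : ι → ℝ) (hlam : ∀ i, lam i ∈ Ioc (0:ℝ) 1)
    (hhess : ∀ i, ∀ y ∈ ball (c i) (rad i), ∀ u : EuclideanSpace ℝ (Fin d),
      lam i * ‖u‖ ^ 2 ≤ ⟪fderiv ℝ (gradient ψ) y u, u⟫)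
    (hD3 : ∀ i, ∀ y ∈ ball (c i) (rad i),
      ‖iteratedFDeriv ℝ 3 ψ y‖ * rad i < (ε / 4) * (lam i) ^ 2)
    (S : EuclideanSpace ℝ (Fin d) → EuclideanSpace ℝ (Fin d))
    (hS : ∀ i, ∀ y ∈ ball (c i) (rad i),
      S y = (1 + ε) • gradient ψ (c i) + fderiv ℝ (gradient ψ) (c i) (y - c i)) :
    ∀ t ∈ Icc (0:ℝ) 1,
      Set.InjOn (fun y => (1 - t) • y + t • S y) (⋃ i, ball (c i) (rad i)) ∧
      ∀ i j, i ≠ j → ∀ y ∈ ball (c i) (rad i), ∀ y' ∈ ball (c j) (rad j),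
        (ε * t / 2) * ((lam i) ^ 2 * rad i + (lam j) ^ 2 * rad j) ≤
          dist ((1 - t) • y + t • S y) ((1 - t) • y' + t • S y') := by
  obtain ⟨hε0, hε1⟩ := hε
  rintro t ⟨ht0, ht1⟩
  have hk : 0 < 1 + ε := by linarith
  have hG := contDiffOn_gradient hUopen hψ
  have sep : ∀ i j, i ≠ j → ∀ y ∈ ball (c i) (rad i), ∀ y' ∈ ball (c j) (rad j),
        (ε * t / 2) * ((lam i) ^ 2 * rad i + (lam j) ^ 2 * rad j) ≤
          dist ((1 - t) • y + t • S y) ((1 - t) • y' + t • S y') := by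
    intro i j hij y hy y' hy'
    have hD := (disjoint_ball_ball_iff (hrad i) (hrad j)).1 (hdisj hij)
    rw [dist_eq_norm] at hD
    have hri := hrad i
    have hrj := hrad j
    have hyc : ‖y - c i‖ < rad i := by rwa [mem_ball_iff_norm] at hy
    have hyc' : ‖y' - c j‖ < rad j := by rwa [mem_ball_iff_norm] at hy'
    set a := (y - c i) - (y' - c j) with ha
    have han : ‖a‖ < rad i + rad j := (norm_sub_le _ _).trans_lt (by linarith)
    set s := (1 + ε)⁻¹ with hs
    have hs0 : 0 < s := by positivity
    have hs1 : s ≤ 1 := inv_le_one_of_one_le₀ (by linarith)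
    set v := (c i - c j) + s • a with hv
    have hvw : v = (c i + s • (y - c i)) - (c j + s • (y' - c j)) := by
      rw [hv, ha, smul_sub]; abel
    have hid : 0 ≤ ⟪y - y', v⟫ := by
      have := id_part hs0.le hs1 (han.le.trans hD)
      convert this using 2
      rw [ha]; abel
    -- the lower bound on the norm of `v`
    have hvn : rad i * ε / (1 + ε) + rad j * ε / (1 + ε) ≤ ‖v‖ := by
      have h1 : ‖c i - c j‖ - ‖s • a‖ ≤ ‖v‖ := by
        have := norm_sub_norm_le (c i - c j) (-(s • a))
        rwa [norm_neg, sub_neg_eq_add] at this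
      rw [norm_smul, Real.norm_of_nonneg hs0.le] at h1
      have h2 : s * ‖a‖ ≤ s * (rad i + rad j) := by gcongr
      have h3 : rad i * ε / (1 + ε) + rad j * ε / (1 + ε) =
          (rad i + rad j) - s * (rad i + rad j) := by
        rw [hs]; field_simp; ring
      linarith
    have hv0 : 0 < ‖v‖ := lt_of_lt_of_le (by positivity) hvn
    set e := ‖v‖⁻¹ • v with he
    have hen : ‖e‖ = 1 := by
      rw [he, norm_smul, norm_inv, norm_norm, inv_mul_cancel₀ hv0.ne']
    have hve : v = ‖v‖ • e := by
      rw [he, smul_smul, mul_inv_cancel₀ hv0.ne', one_smul]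
    obtain ⟨hp, hpi⟩ := ball_part (e := e) hri hε0 (hG.mono (hball i)) (hhess i)
      (fun z hz => by rw [norm_third]; exact (hD3 i z hz).le) hy hen
    obtain ⟨hq, hqi⟩ := ball_part (e := -e) hrj hε0 (hG.mono (hball j)) (hhess j)
      (fun z hz => by rw [norm_third]; exact (hD3 j z hz).le) hy' (by rwa [norm_neg])
    rw [← hS i y hy] at hpi
    rw [← hS j y' hy'] at hqi
    set p := c i + (1 + ε)⁻¹ • (y - c i) - (rad i * ε / (1 + ε)) • e with hpdef
    set q := c j + (1 + ε)⁻¹ • (y' - c j) - (rad j * ε / (1 + ε)) • (-e) with hqdef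
    have hpq : p - q = (‖v‖ - (rad i * ε / (1 + ε) + rad j * ε / (1 + ε))) • e := by
      rw [sub_smul, ← hve, hvw, hpdef, hqdef, add_smul, smul_neg]; abel
    have hm : 0 ≤ ⟪gradient ψ p - gradient ψ q, e⟫ := by
      rcases hvn.eq_or_lt with h | h
      · rw [h, sub_self, zero_smul, sub_eq_zero] at hpq
        rw [hpq]; simp
      · have := gradient_mono hUopen hψ hψconv (hball i hp) (hball j hq)
        rw [hpq, real_inner_smul_right] at this
        exact nonneg_of_mul_nonneg_right this (by linarith)
    have hid' : 0 ≤ ⟪y - y', e⟫ := by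
      rw [he, real_inner_smul_right]; positivity
    rw [inner_neg_right, inner_neg_right] at hqi
    rw [inner_sub_left] at hm
    have hS1 : ε / 2 * ((lam i) ^ 2 * rad i + (lam j) ^ 2 * rad j) ≤ ⟪S y - S y', e⟫ := by
      have b : ∀ l r : ℝ, 0 < l → l ≤ 1 → 0 < r →
          ε / 2 * (l ^ 2 * r) ≤ ε * l * r - ε / 4 * l ^ 2 * r := by
        intro l r hl hl1 hr
        have h1 : l ^ 2 ≤ l := by nlinarith
        have h2 : 0 < ε * r := by positivity
        nlinarith [mul_le_mul_of_nonneg_left h1 h2.le, mul_pos h2 (pow_pos hl 2)]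
      have b1 := b _ _ (hlam i).1 (hlam i).2 hri
      have b2 := b _ _ (hlam j).1 (hlam j).2 hrj
      have := mul_nonneg hk.le hm
      rw [inner_sub_left]
      linarith
    have hfin : ⟪((1 - t) • y + t • S y) - ((1 - t) • y' + t • S y'), e⟫ =
        (1 - t) * ⟪y - y', e⟫ + t * ⟪S y - S y', e⟫ := by
      simp only [inner_sub_left, inner_add_left, real_inner_smul_left]; ring
    rw [dist_eq_norm]
    have hle := real_inner_le_norm (((1 - t) • y + t • S y) - ((1 - t) • y' + t • S y')) e
    rw [hen, mul_one, hfin] at hle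
    have h1 := mul_nonneg (sub_nonneg.2 ht1) hid'
    have h2 := mul_le_mul_of_nonneg_left hS1 ht0
    linarith
  refine ⟨?_, sep⟩
  intro y hy y' hy' heq
  obtain ⟨i, hi⟩ := mem_iUnion.1 hy
  obtain ⟨j, hj⟩ := mem_iUnion.1 hy'
  simp only at heq
  by_cases hij : i = j
  · subst hij
    rw [hS i y hi, hS i y' hj] at heq
    have hu := hhess i (c i) (mem_ball_self (hrad i)) (y - y')
    have h0 : (1 - t) • (y - y') + t • fderiv ℝ (gradient ψ) (c i) (y - y') = 0 := by
      have : fderiv ℝ (gradient ψ) (c i) (y - y') =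
          fderiv ℝ (gradient ψ) (c i) (y - c i) - fderiv ℝ (gradient ψ) (c i) (y' - c i) := by
        rw [← map_sub]; congr 1; abel
      rw [this, ← sub_eq_zero.2 heq]
      simp only [smul_add, smul_sub]; abel
    have h1 : (1 - t) * ‖y - y'‖ ^ 2 +
        t * ⟪fderiv ℝ (gradient ψ) (c i) (y - y'), y - y'⟫ = 0 := by
      rw [← real_inner_self_eq_norm_sq, ← real_inner_smul_left, ← real_inner_smul_left,
        ← inner_add_left, h0, inner_zero_left]
    have h2 := mul_le_mul_of_nonneg_left hu ht0
    have h3 : 0 < (1 - t) + t * lam i := by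
      have := (hlam i).1
      rcases ht0.eq_or_lt with h | h
      · rw [← h]; norm_num
      · have := mul_pos h this
        linarith
    have h4 : ((1 - t) + t * lam i) * ‖y - y'‖ ^ 2 ≤ 0 := by linarith
    have h5 : ‖y - y'‖ ^ 2 ≤ 0 := by
      by_contra h
      exact absurd h4 (not_le.2 (mul_pos h3 (not_le.1 h)))
    have h6 : ‖y - y'‖ = 0 := by
      have := sq_nonneg ‖y - y'‖
      exact pow_eq_zero_iff (two_ne_zero) |>.1 (le_antisymm h5 this)
    exact sub_eq_zero.1 (norm_eq_zero.1 h6)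
  · rcases ht0.eq_or_lt with h | h
    · subst h
      simpa using heq
    · exfalso
      have hd := sep i j hij y hi y' hj
      rw [heq, dist_self] at hd
      have h1 := (hlam i).1
      have h2 := (hlam j).1
      have h3 := hrad i
      have h4 := hrad j
      have : 0 < (ε * t / 2) * ((lam i) ^ 2 * rad i + (lam j) ^ 2 * rad j) := by positivity
      linarith
end
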